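/- arXiv:2306.11455 — 6 statements merged into one kernel-verified Lean document; each statement's English description precedes it below -/
import Mathlib

section
/- For all functions V̂, V : X → ℝ, ‖T V̂ − T V‖_μ ≤ γ · ‖V̂ − V‖_μ, where T is the Bellman operator and ‖·‖_μ is the μ-weighted Euclidean norm. -/
/-!
The reward cancels in `T V̂ - T V`, leaving `γ P W` with `W = V̂ - V`, so it suffices that `P` is
nonexpansive for the `μ`-weighted norm. Jensen's inequality in each row gives
`(P W)² ≤ P (W²)` pointwise, and integrating against `μ` turns the right-hand side into
`∑ x, μ x * W x ^ 2` by stationarity.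
-/

open scoped BigOperators

/-- Nonexpansiveness of a stochastic matrix in the norm weighted by a stationary `μ`. -/
theorem sum_mul_sq_le_of_stationary {X : Type*} [Fintype X]
    (P : X → X → ℝ) (hP0 : ∀ x x', 0 ≤ P x x') (hP1 : ∀ x, ∑ x', P x x' = 1)
    (μ : X → ℝ) (hμ0 : ∀ x, 0 ≤ μ x) (hstat : ∀ y, ∑ x, μ x * P x y = μ y) (W : X → ℝ) :
    ∑ x, μ x * (∑ x', P x x' * W x') ^ 2 ≤ ∑ x, μ x * W x ^ 2 := by
  calc ∑ x, μ x * (∑ x', P x x' * W x') ^ 2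
      ≤ ∑ x, μ x * ∑ x', P x x' * W x' ^ 2 := by
        refine Finset.sum_le_sum fun x _ => mul_le_mul_of_nonneg_left ?_ (hμ0 x)
        exact Real.pow_arith_mean_le_arith_mean_pow_of_even Finset.univ (P x) W
          (fun x' _ => hP0 x x') (hP1 x) even_two
    _ = ∑ y, (∑ x, μ x * P x y) * W y ^ 2 := by
        simp only [Finset.mul_sum, Finset.sum_mul, mul_assoc]
        exact Finset.sum_comm
    _ = ∑ x, μ x * W x ^ 2 := by simp only [hstat]

/-- **Bellman operator contraction in the μ-weighted norm** (Lemma 4 in Tsitsiklis–Van Roy).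
For a finite state space `X`, a row-stochastic matrix `P` with stationary distribution `μ`,
a discount factor `γ ∈ [0,1)` and a reward function `r`, the Bellman operator
`(T V)(x) = r x + γ ∑ x', P x x' * V x'` satisfies `‖T V̂ − T V‖_μ ≤ γ ‖V̂ − V‖_μ`,
where `‖V‖_μ = √(∑ x, μ x * (V x)²)`. -/
theorem bellman_contraction
    {X : Type*} [Fintype X]
    (P : X → X → ℝ) (hP0 : ∀ x x', 0 ≤ P x x') (hP1 : ∀ x, ∑ x', P x x' = 1)
    (μ : X → ℝ) (hμ0 : ∀ x, 0 ≤ μ x) (hμ1 : ∑ x, μ x = 1)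
    (hstat : ∀ y, ∑ x, μ x * P x y = μ y)
    (γ : ℝ) (hγ0 : 0 ≤ γ) (hγ1 : γ < 1)
    (r : X → ℝ) (Vhat V : X → ℝ) :
    Real.sqrt (∑ x, μ x *
        ((r x + γ * ∑ x', P x x' * Vhat x') - (r x + γ * ∑ x', P x x' * V x')) ^ 2)
      ≤ γ * Real.sqrt (∑ x, μ x * (Vhat x - V x) ^ 2) := by
  have hdiff : ∀ x, (r x + γ * ∑ x', P x x' * Vhat x') - (r x + γ * ∑ x', P x x' * V x')
      = γ * ∑ x', P x x' * (Vhat x' - V x') := fun x => by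
    simp only [mul_sub, Finset.sum_sub_distrib]
    ring
  have hsum : ∑ x, μ x * (γ * ∑ x', P x x' * (Vhat x' - V x')) ^ 2
      = γ ^ 2 * ∑ x, μ x * (∑ x', P x x' * (Vhat x' - V x')) ^ 2 := by
    rw [Finset.mul_sum]
    exact Finset.sum_congr rfl fun x _ => by ring
  simp only [hdiff]
  rw [hsum, Real.sqrt_mul (sq_nonneg γ), Real.sqrt_sq hγ0]
  exact mul_le_mul_of_nonneg_left (Real.sqrt_le_sqrt
    (sum_mul_sq_le_of_stationary P hP0 hP1 μ hμ0 hstat fun x => Vhat x - V x)) hγ0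
end

section
/- For every Θ ∈ ℝ^d, Σ_{x,x' ∈ X} μ(x) P(x,x') · (r(x) + γ⟨Θ, Φ(x')⟩ − ⟨Θ, Φ(x)⟩) · ⟨Φ(x), Θ − Θ*⟩ ≤ −(1−γ) · Σ_{x ∈ X} μ(x) (⟨Θ, Φ(x)⟩ − 𝒱(x))². That is, the expected TD semi-gradient at Θ, paired with Θ − Θ*, is at most −(1−γ)‖f_Θ − 𝒱‖_μ². -/
open scoped BigOperators InnerProductSpace

/-!
Write `e = f_Θ - V`. By realizability `⟪Φ x, Θ - Θstar⟫ = e x`, and subtracting the Bellman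
equation from the TD error leaves `γ * e x' - e x` in conditional expectation given `x`. Hence the
left-hand side is `γ E[e x * e x'] - E[(e x)²]`, where `x ∼ μ` and `x' ∼ P x`. Young's inequality
bounds `e x * e x'` by `((e x)² + (e x')²) / 2`, and stationarity makes both squares have the same
expectation `‖e‖²_μ`, which gives `-(1 - γ) ‖e‖²_μ`.
-/

/-- **Negative drift of the expected TD semi-gradient.** For a finite-state Markov reward
process with row-stochastic transition matrix `P`, stationary distribution `μ`, discount
`γ ∈ [0,1)`, mean reward `r : X → [−1,1]`, value function `𝒱` (the fixed point of the Bellman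
operator), features `Φ` with `‖Φ x‖ ≤ 1` and a realizable value function `𝒱 = ⟨Θ*, Φ(·)⟩`,
the expected TD semi-gradient at `Θ`, paired with `Θ − Θ*`, satisfies
`E[g(Θ)ᵀ(Θ − Θ*)] ≤ −(1−γ) ‖f_Θ − 𝒱‖²_μ`. -/
theorem expected_td_semigradient_negative_drift
    {X : Type*} [Fintype X] {d : ℕ}
    (P : X → X → ℝ) (hP0 : ∀ x x', 0 ≤ P x x') (hP1 : ∀ x, ∑ x', P x x' = 1)
    (μ : X → ℝ) (hμ0 : ∀ x, 0 ≤ μ x) (hμ1 : ∑ x, μ x = 1)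
    (hstat : ∀ y, ∑ x, μ x * P x y = μ y)
    (γ : ℝ) (hγ0 : 0 ≤ γ) (hγ1 : γ < 1)
    (r : X → ℝ) (hr : ∀ x, |r x| ≤ 1)
    (V : X → ℝ) (hV : ∀ x, V x = r x + γ * ∑ x', P x x' * V x')
    (Φ : X → EuclideanSpace ℝ (Fin d)) (hΦ : ∀ x, ‖Φ x‖ ≤ 1)
    (Θstar : EuclideanSpace ℝ (Fin d)) (hreal : ∀ x, V x = ⟪Θstar, Φ x⟫_ℝ)
    (Θ : EuclideanSpace ℝ (Fin d)) :
    ∑ x, ∑ x', μ x * P x x' *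
        ((r x + γ * ⟪Θ, Φ x'⟫_ℝ - ⟪Θ, Φ x⟫_ℝ) * ⟪Φ x, Θ - Θstar⟫_ℝ)
      ≤ -((1 - γ) * ∑ x, μ x * (⟪Θ, Φ x⟫_ℝ - V x) ^ 2) := by
  obtain ⟨e, he⟩ : ∃ e : X → ℝ, ∀ x, ⟪Θ, Φ x⟫_ℝ = e x + V x :=
    ⟨fun x => ⟪Θ, Φ x⟫_ℝ - V x, fun x => by ring⟩
  have hpair : ∀ x, ⟪Φ x, Θ - Θstar⟫_ℝ = e x := by
    intro x
    rw [inner_sub_right, real_inner_comm, real_inner_comm Θstar, he, ← hreal]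
    ring
  simp only [hpair, he, add_sub_cancel_right]
  -- The Bellman equation removes the reward, but only after averaging over `x'`.
  have hbellman : ∀ x, ∑ x', μ x * P x x' * ((r x + γ * (e x' + V x') - (e x + V x)) * e x)
      = ∑ x', μ x * P x x' * ((γ * e x' - e x) * e x) := by
    intro x
    have hzero : ∑ x', P x x' * (r x + γ * V x' - V x) = 0 := by
      have hsplit : ∑ x', P x x' * (r x + γ * V x' - V x)
          = (∑ x', P x x') * (r x - V x) + γ * ∑ x', P x x' * V x' := by
        rw [Finset.sum_mul, Finset.mul_sum, ← Finset.sum_add_distrib]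
        exact Finset.sum_congr rfl fun x' _ => by ring
      rw [hsplit, hP1]
      linarith [hV x]
    have hdiff : ∑ x', μ x * P x x' * ((r x + γ * (e x' + V x') - (e x + V x)) * e x)
        = ∑ x', μ x * P x x' * ((γ * e x' - e x) * e x)
          + μ x * e x * ∑ x', P x x' * (r x + γ * V x' - V x) := by
      rw [Finset.mul_sum, ← Finset.sum_add_distrib]
      exact Finset.sum_congr rfl fun x' _ => by ring
    rw [hdiff, hzero, mul_zero, add_zero]
  have hcur : ∑ x, ∑ x', μ x * P x x' * e x ^ 2 = ∑ x, μ x * e x ^ 2 := by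
    refine Finset.sum_congr rfl fun x _ => ?_
    rw [← Finset.sum_mul, ← Finset.mul_sum, hP1, mul_one]
  have hnext : ∑ x, ∑ x', μ x * P x x' * e x' ^ 2 = ∑ x, μ x * e x ^ 2 := by
    rw [Finset.sum_comm]
    refine Finset.sum_congr rfl fun x' _ => ?_
    rw [← Finset.sum_mul, hstat]
  calc ∑ x, ∑ x', μ x * P x x' * ((r x + γ * (e x' + V x') - (e x + V x)) * e x)
      = ∑ x, ∑ x', μ x * P x x' * ((γ * e x' - e x) * e x) :=
        Finset.sum_congr rfl fun x _ => hbellman x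
    _ ≤ ∑ x, ∑ x', (γ / 2 * (μ x * P x x' * e x' ^ 2)
          + (γ / 2 - 1) * (μ x * P x x' * e x ^ 2)) := by
        refine Finset.sum_le_sum fun x _ => Finset.sum_le_sum fun x' _ => ?_
        have hsq : 0 ≤ μ x * P x x' * (γ * (e x' - e x) ^ 2) :=
          mul_nonneg (mul_nonneg (hμ0 x) (hP0 x x')) (mul_nonneg hγ0 (sq_nonneg _))
        linarith
    _ = -((1 - γ) * ∑ x, μ x * e x ^ 2) := by
        simp only [Finset.sum_add_distrib, ← Finset.mul_sum]
        rw [hcur, hnext]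
        ring
end

section
/- Fix Θ ∈ ℝ^d with ‖Θ‖₂ ≤ ρ, a step size η > 0 and a clipping radius b > 0. On a probability space let X be distributed according to μ, let the conditional law of X' given X be P(X, ·), and let R be an integrable real random variable with E[R | X, X'] = r(X) and E[|R|^{1+p} | X, X'] ≤ u₀ almost surely, for some p ∈ (0,1] and u₀ ∈ (0,∞). Set u = min{(u₀^{1/(1+p)} + 2ρ)^{1+p}, u₀ + 2^{2p+3} ρ^{1+p}}, g = (R + γ⟨Θ, Φ(X')⟩ − ⟨Θ, Φ(X)⟩)·Φ(X), and Θ⁺ = Π_ρ(Θ + η · g · 1{‖g‖₂ ≤ b}), where Π_ρ(x) = x if ‖x‖₂ ≤ ρ and Π_ρ(x) = ρ x/‖x‖₂ otherwise. Then E[‖Θ⁺ − Θ*‖₂²] ≤ ‖Θ − Θ*‖₂² − 2η(1−γ) Σ_{x ∈ X} μ(x)(⟨Θ, Φ(x)⟩ − 𝒱(x))² + 4ηρ u b^{−p} + η² u b^{1−p}. -/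
/-!
Write `δ = R + c` with `c = γ⟨Θ, Φ X'⟩ - ⟨Θ, Φ X⟩`, so that `g = δ • Φ X`, and
`m = ⟨Θ - Θ*, Φ X⟩ = f_Θ(X) - V(X)`. Since the projection does not increase the distance to `Θ*`,
the squared distance after the update is at most
`‖Θ - Θ*‖² + 2η δ m - 2η δ m 1{‖g‖ > b} + η² ‖g‖² 1{‖g‖ ≤ b}`.

* The expectation of `δ m` is `⟨m, (γP - I) m⟩_μ ≤ -(1 - γ) ‖m‖²_μ`, by the Bellman equation and
  stationarity (`drift_sum_le`).
* The two clipping errors are at most `2ρ u b^(-p)` and `u b^(1-p)` in expectation. When `u` is the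
  Minkowski expression, this is Markov's inequality and `E|δ|^(1+p) ≤ u` (`minkowski_pt`).

When `u = u₀ + 2^(2p+3) ρ^(1+p)`, the moment `E|δ|^(1+p)` may exceed `u`, because the first-order
term of `|R + c|^(1+p)` around `R` is not controlled by the mean of `R`. The clipping errors are
nevertheless bounded by `u`, through a duality argument: `R` has conditional mean `r` with
`|r| ≤ 2ρ`, so a multiple `l (R - r)`, with `l` a function of `(X, X')`, can be added at no cost.
With `l = (1 + p) c b^(p-1)` (or `l = 0`) the truncated quantities are *pointwise* at most
`|R|^(1+p) + l (R - r) + 2 (4ρ)^(1+p)` (`quad_pt`, `lin_pt`). The reason is that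
`|δ - c|^(1+p) ≥ |δ|^(1+p) - (1+p) c sgn(δ) |δ|^p`, and the multiplier turns the first-order term
into `-(1+p) c sgn(δ) (|δ|^p - |δ| b^(p-1))`, which vanishes at the critical level `|δ| = b`.
`clip_pt` gathers both cases for features of arbitrary norm at most one.
-/

open MeasureTheory
open scoped BigOperators InnerProductSpace

/-- Euclidean projection onto the closed ball `B₂(0,ρ)`:
`Π_ρ(x) = x` if `‖x‖ ≤ ρ` and `Π_ρ(x) = (ρ/‖x‖) • x` otherwise. -/
noncomputable def projBall {d : ℕ} (ρ : ℝ) (x : EuclideanSpace ℝ (Fin d)) :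
    EuclideanSpace ℝ (Fin d) :=
  if ‖x‖ ≤ ρ then x else (ρ / ‖x‖) • x

/-- The TD semi-gradient `g = (R + γ⟨Θ, Φ x'⟩ − ⟨Θ, Φ x⟩) • Φ x` at the transition
`(x, R, x')` with parameter `Θ`. -/
noncomputable def tdGrad {𝕏 : Type*} {d : ℕ} (γ : ℝ) (Φ : 𝕏 → EuclideanSpace ℝ (Fin d))
    (x : 𝕏) (R : ℝ) (x' : 𝕏) (Θ : EuclideanSpace ℝ (Fin d)) : EuclideanSpace ℝ (Fin d) :=
  (R + γ * ⟪Θ, Φ x'⟫_ℝ - ⟪Θ, Φ x⟫_ℝ) • Φ x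


/-! ### Scalar inequalities -/

section Scalar

lemma rpow_one_add_eq {t p : ℝ} (ht : 0 ≤ t) (hp : 0 < p) : t ^ (1 + p) = t * t ^ p := by
  rw [Real.rpow_add' ht (by linarith), Real.rpow_one]

lemma mul_rpow_le_rpow_mul {t b p : ℝ} (ht : 0 ≤ t) (htb : t ≤ b) (hp1 : p ≤ 1) :
    t * b ^ p ≤ t ^ p * b := by
  have hb : 0 ≤ b := ht.trans htb
  have h1 : t = t ^ p * t ^ (1 - p) := by
    rw [← Real.rpow_add' ht (by norm_num)]; norm_num
  have h2 : b = b ^ p * b ^ (1 - p) := by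
    rw [← Real.rpow_add' hb (by norm_num)]; norm_num
  have h3 : t ^ (1 - p) ≤ b ^ (1 - p) := Real.rpow_le_rpow ht htb (by linarith)
  calc t * b ^ p = (t ^ p * b ^ p) * t ^ (1 - p) := by
        nth_rewrite 1 [h1]; ring
    _ ≤ (t ^ p * b ^ p) * b ^ (1 - p) := by gcongr
    _ = t ^ p * b := by nth_rewrite 3 [h2]; ring

/-- The tangent-line bound for the convex function `x ↦ |x| ^ (1 + p)` at `t`. -/
lemma tangent_le {t c p : ℝ} (ht : 0 ≤ t) (hp : 0 < p) :
    t ^ p * (t - (1 + p) * c) ≤ |t - c| ^ (1 + p) := by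
  have hT : 0 ≤ t ^ p := Real.rpow_nonneg ht p
  rcases lt_or_ge t c with h | h
  · have : t ^ p * (t - (1 + p) * c) ≤ 0 :=
      mul_nonpos_of_nonneg_of_nonpos hT (by nlinarith)
    exact this.trans (Real.rpow_nonneg (abs_nonneg _) _)
  · rcases ht.eq_or_lt with h0 | h0
    · subst h0
      rw [Real.zero_rpow hp.ne', zero_mul]
      exact Real.rpow_nonneg (abs_nonneg _) _
    · have hx : -1 ≤ -c / t := by rw [le_div_iff₀ h0]; linarith
      have hB := one_add_mul_self_le_rpow_one_add hx (p := 1 + p) (by linarith)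
      have e : t - c = t * (1 + -c / t) := by field_simp; ring
      rw [abs_of_nonneg (by linarith), e, Real.mul_rpow ht (by linarith),
        rpow_one_add_eq ht hp]
      have := mul_le_mul_of_nonneg_left hB (mul_nonneg ht hT)
      refine le_trans (le_of_eq ?_) this
      field_simp
      ring

lemma rpow_mul_sub_le_or {t κ M p : ℝ} (ht : 0 ≤ t) (hp : 0 < p) (hM : κ ≤ M) :
    t ^ p * (κ - t) ≤ M ^ (1 + p) ∨ κ ≤ t := by
  rcases le_or_gt κ t with h | h
  · exact Or.inr h
  · left
    have hκ : 0 ≤ κ := ht.trans h.le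
    rw [rpow_one_add_eq (hκ.trans hM) hp, mul_comm]
    have : t ^ p ≤ M ^ p := Real.rpow_le_rpow ht (h.le.trans hM) hp.le
    exact mul_le_mul (by linarith) this (Real.rpow_nonneg ht p) (hκ.trans hM)

/-- The multiplier term at the conditional mean costs at most `(4ρ) ^ (1 + p)`. -/
lemma multiplier_mean_le {p ρ b c a : ℝ} (hp0 : 0 < p) (hp1 : p ≤ 1) (hρ : 0 < ρ)
    (hb : 4 * ρ ≤ b) (hc : |c| ≤ 2 * ρ) (ha : |a| ≤ 4 * ρ) :
    (1 + p) * c * (b ^ p / b) * a ≤ (4 * ρ) ^ (1 + p) := by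
  have hb0 : 0 < b := by linarith
  have hD : 0 ≤ b ^ p / b := by positivity
  have h1 : (4 * ρ) * (b ^ p / b) ≤ (4 * ρ) ^ p := by
    rw [← mul_div_assoc, div_le_iff₀ hb0]
    exact mul_rpow_le_rpow_mul (by linarith) hb hp1
  rw [rpow_one_add_eq (by linarith) hp0]
  have h2 : |(1 + p) * c| ≤ 4 * ρ := by
    rw [abs_mul, abs_of_pos (by linarith : 0 < 1 + p)]
    nlinarith [abs_nonneg c]
  have h3 : |(1 + p) * c * a| ≤ 4 * ρ * (4 * ρ) := by
    rw [abs_mul]; exact mul_le_mul h2 ha (abs_nonneg _) (by linarith)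
  calc (1 + p) * c * (b ^ p / b) * a = ((1 + p) * c * a) * (b ^ p / b) := by ring
    _ ≤ (4 * ρ * (4 * ρ)) * (b ^ p / b) :=
        mul_le_mul_of_nonneg_right ((le_abs_self _).trans h3) hD
    _ = 4 * ρ * ((4 * ρ) * (b ^ p / b)) := by ring
    _ ≤ 4 * ρ * (4 * ρ) ^ p := by gcongr

/-- Comparison of `t ^ p` with `t b ^ (p - 1)` and `b ^ p`; here `b ^ (p - 1)` is written
`b ^ p / b`. -/
lemma scale_facts {p t b : ℝ} (hp0 : 0 < p) (hp1 : p ≤ 1) (ht : 0 ≤ t) (hb : 0 < b) :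
    (t ≤ b → t * (b ^ p / b) ≤ t ^ p) ∧
    (b < t → t ^ p ≤ t * (b ^ p / b) ∧ (b ^ p / b) * b ≤ t ^ p) := by
  refine ⟨fun h => ?_, fun h => ⟨?_, ?_⟩⟩
  · rw [← mul_div_assoc, div_le_iff₀ hb]
    exact mul_rpow_le_rpow_mul ht h hp1
  · rw [← mul_div_assoc, le_div_iff₀ hb]
    have := mul_rpow_le_rpow_mul hb.le h.le hp1
    linarith
  · rw [div_mul_cancel₀ _ hb.ne']
    exact Real.rpow_le_rpow hb.le h.le hp0.le

/-- The truncated square for `|δ| = t`, where `c` carries the sign of `δ`, so that the single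
multiplier `(1 + p) c b ^ (p - 1)` serves both signs of `δ`. -/
lemma quad_aux {p ρ b t c : ℝ} (hp0 : 0 < p) (hp1 : p ≤ 1) (hρ : 0 < ρ)
    (hb : 4 * ρ ≤ b) (ht : 0 ≤ t) (hc : |c| ≤ 2 * ρ) :
    (if t ≤ b then t ^ 2 else 0) * (b ^ p / b)
      ≤ |t - c| ^ (1 + p) + (1 + p) * c * (b ^ p / b) * t + (4 * ρ) ^ (1 + p) := by
  have hb0 : 0 < b := by linarith
  have htan := tangent_le (c := c) ht hp0
  have hT : 0 ≤ t ^ p := Real.rpow_nonneg ht p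
  have hE : 0 ≤ (4 * ρ) ^ (1 + p) := by positivity
  have hκ : |(1 + p) * c| ≤ 4 * ρ := by
    rw [abs_mul, abs_of_pos (by linarith : 0 < 1 + p)]
    nlinarith [abs_nonneg c]
  have hcr := rpow_mul_sub_le_or ht hp0 ((le_abs_self _).trans hκ)
  have hlow := (abs_le.mp hκ).1
  obtain ⟨h1, h2⟩ := scale_facts hp0 hp1 ht hb0
  have hD : 0 ≤ b ^ p / b := by positivity
  generalize (1 + p) * c = κ at *
  generalize b ^ p / b = D at *
  generalize t ^ p = T at *
  generalize (4 * ρ) ^ (1 + p) = E at *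
  split_ifs with h
  · have h1 := h1 h
    suffices (T - t * D) * (κ - t) ≤ E by nlinarith
    rcases le_or_gt κ t with hk | hk
    · nlinarith [mul_nonneg (sub_nonneg.2 h1) (sub_nonneg.2 hk)]
    · rcases hcr with hcr | hcr
      · nlinarith [mul_nonneg (mul_nonneg ht hD) (sub_nonneg.2 hk.le)]
      · linarith
  · push Not at h
    obtain ⟨h2, h3⟩ := h2 h
    suffices 0 ≤ T * t + κ * (t * D - T) by nlinarith
    nlinarith [mul_nonneg (by linarith : 0 ≤ κ + b) (sub_nonneg.2 h2),
      mul_nonneg ht (sub_nonneg.2 h3), mul_nonneg hb0.le hT]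

/-- The clipped part of a positive `δ = t`; the sign of `c` is needed for `t` above `b`. -/
lemma lin_aux_pos {p ρ b t c : ℝ} (hp0 : 0 < p) (hp1 : p ≤ 1) (hρ : 0 < ρ)
    (hb : 4 * ρ ≤ b) (ht : 0 ≤ t) (hc0 : 0 ≤ c) (hc : |c| ≤ 2 * ρ) :
    (if t ≤ b then 0 else t) * b ^ p
      ≤ |t - c| ^ (1 + p) + (1 + p) * c * (b ^ p / b) * t + (4 * ρ) ^ (1 + p) := by
  have hb0 : 0 < b := by linarith
  have htan := tangent_le (c := c) ht hp0
  have hT : 0 ≤ t ^ p := Real.rpow_nonneg ht p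
  have hE : 0 ≤ (4 * ρ) ^ (1 + p) := by positivity
  have hκ : |(1 + p) * c| ≤ 4 * ρ := by
    rw [abs_mul, abs_of_pos (by linarith : 0 < 1 + p)]
    nlinarith [abs_nonneg c]
  have hcr := rpow_mul_sub_le_or ht hp0 ((le_abs_self _).trans hκ)
  have hk0 : 0 ≤ (1 + p) * c := mul_nonneg (by linarith) hc0
  obtain ⟨h1, h2⟩ := scale_facts hp0 hp1 ht hb0
  have hD : 0 ≤ b ^ p / b := by positivity
  have hB : b ^ p = b ^ p / b * b := (div_mul_cancel₀ _ hb0.ne').symm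
  rw [hB, mul_div_cancel_right₀ _ hb0.ne']
  generalize (1 + p) * c = κ at *
  generalize b ^ p / b = D at *
  generalize t ^ p = T at *
  generalize (4 * ρ) ^ (1 + p) = E at *
  split_ifs with h
  · rcases hcr with hcr | hcr
    · nlinarith [mul_nonneg (mul_nonneg hk0 hD) ht]
    · nlinarith [mul_nonneg (mul_nonneg hk0 hD) ht, mul_nonneg hT (sub_nonneg.2 hcr)]
  · push Not at h
    obtain ⟨h2, h3⟩ := h2 h
    nlinarith [mul_nonneg hk0 (sub_nonneg.2 h2), mul_nonneg ht (sub_nonneg.2 h3)]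

/-- The clipped part of `δ = -t`, where `c` is the shift with the sign of `δ` absorbed. -/
lemma lin_aux_neg {p ρ b t c : ℝ} (hp0 : 0 < p) (hp1 : p ≤ 1) (hρ : 0 < ρ)
    (hb : 4 * ρ ≤ b) (ht : 0 ≤ t) (hc : |c| ≤ 2 * ρ) :
    -(if t ≤ b then 0 else t) * b ^ p
      ≤ |t - c| ^ (1 + p) + (1 + p) * c * (b ^ p / b) * t + (4 * ρ) ^ (1 + p) := by
  have h := quad_aux hp0 hp1 hρ hb ht hc
  have hb0 : 0 < b := by linarith
  refine le_trans ?_ h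
  have : 0 ≤ (if t ≤ b then t ^ 2 else 0) * (b ^ p / b) := by
    split_ifs <;> positivity
  have h' : 0 ≤ (if t ≤ b then 0 else t) * b ^ p := by
    split_ifs <;> positivity
  linarith

/-- The additive constant of the statement is twice `(4ρ) ^ (1 + p)`: one half pays for the
multiplier at the mean, the other for the values of `R + c` of order `ρ`. -/
lemma const_eq {p ρ : ℝ} (hρ : 0 < ρ) :
    (2 : ℝ) ^ (2 * p + 3) * ρ ^ (1 + p) = 2 * (4 * ρ) ^ (1 + p) := by
  rw [Real.mul_rpow (by norm_num) hρ.le, Real.rpow_add (by norm_num) (2 * p),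
    Real.rpow_mul (by norm_num), Real.rpow_add (by norm_num : (0 : ℝ) < 4) 1 p]
  norm_num
  ring

/-- Pointwise control of the truncated square by the raw moment of `R`, up to a multiple of the
centred variable `R - r`. -/
lemma quad_pt {p ρ b c r : ℝ} (hp0 : 0 < p) (hp1 : p ≤ 1) (hρ : 0 < ρ)
    (hb : 0 < b) (hc : |c| ≤ 2 * ρ) (hr : |r| ≤ 2 * ρ) :
    ∃ l : ℝ, ∀ R : ℝ, (if |R + c| ≤ b then (R + c) ^ 2 else 0) * (b ^ p / b)
      ≤ |R| ^ (1 + p) + l * (R - r) + 2 * (4 * ρ) ^ (1 + p) := by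
  rcases le_or_gt (4 * ρ) b with hb4 | hb4
  · refine ⟨(1 + p) * c * (b ^ p / b), fun R => ?_⟩
    have ha : |-(r + c)| ≤ 4 * ρ := by
      rw [abs_neg]; exact (abs_add_le _ _).trans (by linarith)
    have hm := multiplier_mean_le hp0 hp1 hρ hb4 hc (a := r + c) (by rwa [abs_neg] at ha)
    rcases le_total 0 (R + c) with h | h
    · have := quad_aux hp0 hp1 hρ hb4 h hc
      rw [abs_of_nonneg h]
      rw [add_sub_cancel_right] at this
      linarith
    · have := quad_aux hp0 hp1 hρ hb4 (t := -(R + c)) (c := -c) (by linarith) (by rwa [abs_neg])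
      rw [abs_of_nonpos h]
      rw [show -(R + c) - -c = -R by ring, abs_neg, neg_sq] at this
      linarith
  · refine ⟨0, fun R => ?_⟩
    have h1 : (if |R + c| ≤ b then (R + c) ^ 2 else 0) * (b ^ p / b) ≤ b ^ (1 + p) := by
      rw [rpow_one_add_eq hb.le hp0]
      split_ifs with h
      · have h2 : (R + c) ^ 2 ≤ b ^ 2 := by
          rw [← sq_abs]; gcongr
        calc (R + c) ^ 2 * (b ^ p / b) ≤ b ^ 2 * (b ^ p / b) := by gcongr
          _ = b * b ^ p := by field_simp
      · rw [zero_mul]; positivity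
    have h2 : b ^ (1 + p) ≤ (4 * ρ) ^ (1 + p) := Real.rpow_le_rpow hb.le hb4.le (by linarith)
    have h3 : 0 ≤ |R| ^ (1 + p) := by positivity
    have h4 : 0 ≤ (4 * ρ) ^ (1 + p) := by positivity
    linarith

/-- Pointwise control of the clipped part of `R + c`, with its sign, by the raw moment of `R`, up
to a multiple of the centred variable `R - r`. -/
lemma lin_pt {p ρ b c r : ℝ} (hp0 : 0 < p) (hp1 : p ≤ 1) (hρ : 0 < ρ)
    (hb : 0 < b) (hc : |c| ≤ 2 * ρ) (hr : |r| ≤ 2 * ρ) :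
    ∃ l : ℝ, ∀ R : ℝ, (if |R + c| ≤ b then 0 else R + c) * b ^ p
      ≤ |R| ^ (1 + p) + l * (R - r) + 2 * (4 * ρ) ^ (1 + p) := by
  have hE : 0 ≤ (4 * ρ) ^ (1 + p) := by positivity
  rcases le_or_gt (4 * ρ) b with hb4 | hb4
  · rcases le_or_gt 0 c with hc0 | hc0
    · refine ⟨(1 + p) * c * (b ^ p / b), fun R => ?_⟩
      have ha : |r + c| ≤ 4 * ρ := (abs_add_le _ _).trans (by linarith)
      have hm := multiplier_mean_le hp0 hp1 hρ hb4 hc ha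
      rcases le_total 0 (R + c) with h | h
      · have := lin_aux_pos hp0 hp1 hρ hb4 h hc0 hc
        rw [abs_of_nonneg h]
        rw [add_sub_cancel_right] at this
        linarith
      · have := lin_aux_neg hp0 hp1 hρ hb4 (t := -(R + c)) (c := -c) (by linarith)
          (by rwa [abs_neg])
        rw [abs_of_nonpos h]
        rw [show -(R + c) - -c = -R by ring, abs_neg] at this
        have e : -(if -(R + c) ≤ b then 0 else -(R + c)) = if -(R + c) ≤ b then 0 else R + c := by
          split_ifs <;> ring
        rw [e] at this
        linarith
    · -- For `c < 0` a large positive value of `R + c` forces `|R| > R + c`: no multiplier needed.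
      refine ⟨0, fun R => ?_⟩
      have hR : 0 ≤ |R| ^ (1 + p) := by positivity
      have hB : 0 ≤ b ^ p := by positivity
      split_ifs with h
      · linarith
      · push Not at h
        rcases le_total 0 (R + c) with h0 | h0
        · rw [abs_of_nonneg h0] at h
          have hR1 : R + c ≤ |R| := by linarith [le_abs_self R]
          have : (R + c) * b ^ p ≤ |R| ^ (1 + p) := by
            rw [rpow_one_add_eq (abs_nonneg _) hp0]
            have := Real.rpow_le_rpow hb.le (h.le.trans hR1) hp0.le
            exact mul_le_mul hR1 this hB (abs_nonneg _)
          linarith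
        · have := mul_nonpos_of_nonpos_of_nonneg h0 hB
          linarith
  · refine ⟨0, fun R => ?_⟩
    have hB : 0 ≤ b ^ p := by positivity
    have hB4 : b ^ p ≤ (4 * ρ) ^ p := Real.rpow_le_rpow hb.le hb4.le hp0.le
    have h1 : (if |R + c| ≤ b then 0 else R + c) ≤ |R| + 2 * ρ := by
      split_ifs
      · positivity
      · linarith [le_abs_self R, le_abs_self c]
    have h2 := mul_le_mul_of_nonneg_right h1 hB
    have hq : (4 * ρ) ^ (1 + p) = 4 * ρ * (4 * ρ) ^ p := rpow_one_add_eq (by linarith) hp0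
    have h3 : |R| * b ^ p ≤ |R| ^ (1 + p) + (4 * ρ) ^ (1 + p) := by
      rcases le_total |R| (4 * ρ) with h | h
      · have : |R| * b ^ p ≤ 4 * ρ * (4 * ρ) ^ p := mul_le_mul h hB4 hB (by linarith)
        have hR : 0 ≤ |R| ^ (1 + p) := by positivity
        linarith
      · rw [rpow_one_add_eq (abs_nonneg R) hp0]
        have := Real.rpow_le_rpow hb.le (hb4.le.trans h) hp0.le
        have := mul_le_mul_of_nonneg_left this (abs_nonneg R)
        linarith
    have h4 : 2 * ρ * b ^ p ≤ (4 * ρ) ^ (1 + p) := by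
      rw [hq]; exact mul_le_mul (by linarith) hB4 hB (by linarith)
    linarith

lemma lin_pt_neg {p ρ b c r : ℝ} (hp0 : 0 < p) (hp1 : p ≤ 1) (hρ : 0 < ρ)
    (hb : 0 < b) (hc : |c| ≤ 2 * ρ) (hr : |r| ≤ 2 * ρ) :
    ∃ l : ℝ, ∀ R : ℝ, (if |R + c| ≤ b then 0 else -(R + c)) * b ^ p
      ≤ |R| ^ (1 + p) + l * (R - r) + 2 * (4 * ρ) ^ (1 + p) := by
  obtain ⟨l, hl⟩ := lin_pt (c := -c) (r := -r) hp0 hp1 hρ hb (by rwa [abs_neg]) (by rwa [abs_neg])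
  refine ⟨-l, fun R => ?_⟩
  have := hl (-R)
  rw [show -R + -c = -(R + c) by ring, abs_neg, abs_neg] at this
  linarith

/-- Jensen in Minkowski form: after integration the right side becomes `(A + B) ^ (1 + p)` when the
moment of `R` equals `A ^ (1 + p)`. -/
lemma minkowski_pt {p A B R c : ℝ} (hp0 : 0 < p) (hA : 0 < A) (hB : 0 < B) (hc : |c| ≤ B) :
    |R + c| ^ (1 + p) ≤
      (A / (A + B) * ((A + B) ^ (1 + p) / A ^ (1 + p))) * |R| ^ (1 + p)
        + B / (A + B) * (A + B) ^ (1 + p) := by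
  have hS : 0 < A + B := by linarith
  have hconv := (convexOn_rpow (p := 1 + p) (by linarith)).2
    (show |R| * ((A + B) / A) ∈ Set.Ici 0 from Set.mem_Ici.2 (by positivity))
    (show A + B ∈ Set.Ici 0 from Set.mem_Ici.2 hS.le)
    (show 0 ≤ A / (A + B) by positivity) (show 0 ≤ B / (A + B) by positivity) (by field_simp)
  simp only [smul_eq_mul] at hconv
  have e : A / (A + B) * (|R| * ((A + B) / A)) + B / (A + B) * (A + B) = |R| + B := by
    field_simp
  rw [e, Real.mul_rpow (abs_nonneg R) (by positivity), Real.div_rpow hS.le hA.le] at hconv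
  have h1 : |R + c| ^ (1 + p) ≤ (|R| + B) ^ (1 + p) :=
    Real.rpow_le_rpow (abs_nonneg _) ((abs_add_le _ _).trans (by linarith)) (by linarith)
  refine h1.trans (hconv.trans (le_of_eq ?_))
  ring

/-- The single pointwise estimate behind both error terms. The numbers `α`, `β` encode the value
of `u`; the multipliers `l₁`, `l₂` of the centred reward `R - r` do not depend on `R`, so that
their contribution vanishes in expectation. Here `c` stands for the bootstrap part of the temporal
difference, `φ` for the norm of the feature and `m` for the pairing of the feature with
`Θ - Θ*`. -/
lemma clip_pt {p ρ b u₀ u : ℝ} (hp0 : 0 < p) (hp1 : p ≤ 1) (hρ : 0 < ρ) (hb : 0 < b)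
    (hu₀ : 0 < u₀)
    (hu : u = min ((u₀ ^ (1 / (1 + p)) + 2 * ρ) ^ (1 + p))
        (u₀ + 2 ^ (2 * p + 3) * ρ ^ (1 + p))) :
    ∃ α β : ℝ, 0 ≤ α ∧ α * u₀ + β = u ∧
      ∀ c r φ m : ℝ, |c| ≤ 2 * ρ → |r| ≤ 2 * ρ → 0 ≤ φ → φ ≤ 1 → |m| ≤ 2 * ρ * φ →
        ∃ l₁ l₂ : ℝ, ∀ R : ℝ,
          (if |R + c| * φ ≤ b then 0 else -((R + c) * m))
              ≤ 2 * ρ * b ^ (-p) * (α * |R| ^ (1 + p) + β + l₁ * (R - r)) ∧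
          (if |R + c| * φ ≤ b then (|R + c| * φ) ^ 2 else 0)
              ≤ b ^ (1 - p) * (α * |R| ^ (1 + p) + β + l₂ * (R - r)) := by
  have hbp : b ^ (-p) * b ^ p = 1 := by rw [← Real.rpow_add hb]; norm_num
  have hbp' : 0 < b ^ (-p) := by positivity
  have hb1 : b ^ (1 - p) = b * b ^ (-p) := by
    rw [sub_eq_add_neg, Real.rpow_add hb, Real.rpow_one]
  rcases min_choice ((u₀ ^ (1 / (1 + p)) + 2 * ρ) ^ (1 + p))
        (u₀ + 2 ^ (2 * p + 3) * ρ ^ (1 + p)) with hmin | hmin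
  · -- Moment bound by Minkowski, with no multiplier.
    rw [hmin] at hu
    have hA : 0 < u₀ ^ (1 / (1 + p)) := by positivity
    have hAq : (u₀ ^ (1 / (1 + p))) ^ (1 + p) = u₀ := by
      rw [← Real.rpow_mul hu₀.le, one_div_mul_cancel (by linarith), Real.rpow_one]
    generalize u₀ ^ (1 / (1 + p)) = A at *
    have hS : 0 < A + 2 * ρ := by linarith
    refine ⟨A / (A + 2 * ρ) * ((A + 2 * ρ) ^ (1 + p) / A ^ (1 + p)),
      2 * ρ / (A + 2 * ρ) * (A + 2 * ρ) ^ (1 + p), by positivity, ?_, ?_⟩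
    · rw [hAq, hu]
      field_simp
    intro c r φ m hc hr hφ0 hφ1 hm
    refine ⟨0, 0, fun R => ?_⟩
    have hM := minkowski_pt (R := R) hp0 hA (by linarith : 0 < 2 * ρ) hc
    rw [zero_mul, add_zero]
    set t := |R + c| * φ with ht
    have ht0 : 0 ≤ t := by positivity
    have htq : t ^ (1 + p) ≤ |R + c| ^ (1 + p) :=
      Real.rpow_le_rpow ht0 (mul_le_of_le_one_right (abs_nonneg _) hφ1) (by linarith)
    have hM' := htq.trans hM
    have htq0 : 0 ≤ t ^ (1 + p) := by positivity
    constructor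
    · refine le_trans ?_ (mul_le_mul_of_nonneg_left hM' (by positivity))
      split_ifs with h
      · positivity
      · push Not at h
        have h1 : -((R + c) * m) ≤ 2 * ρ * t := by
          refine (neg_le_abs _).trans ?_
          rw [abs_mul, ht]
          nlinarith [mul_le_mul_of_nonneg_left hm (abs_nonneg (R + c))]
        have h2 : b ^ p ≤ t ^ p := Real.rpow_le_rpow hb.le h.le hp0.le
        have h3 : t ≤ b ^ (-p) * t ^ (1 + p) := by
          rw [rpow_one_add_eq ht0 hp0]
          calc t = b ^ (-p) * (t * b ^ p) := by rw [mul_left_comm, hbp, mul_one]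
            _ ≤ _ := by gcongr
        calc _ ≤ 2 * ρ * t := h1
          _ ≤ 2 * ρ * (b ^ (-p) * t ^ (1 + p)) := by gcongr
          _ = _ := by ring
    · refine le_trans ?_ (mul_le_mul_of_nonneg_left hM' (by positivity))
      split_ifs with h
      · have h1 := mul_rpow_le_rpow_mul ht0 h hp1
        rw [rpow_one_add_eq ht0 hp0, hb1]
        calc t ^ 2 = b ^ (-p) * t * (t * b ^ p) := by linear_combination (-t ^ 2) * hbp
          _ ≤ b ^ (-p) * t * (t ^ p * b) := by gcongr
          _ = _ := by ring
      · positivity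
  · -- Moment bound with constant one in front of `u₀`, using the mean of `R`.
    rw [hmin, const_eq hρ] at hu
    refine ⟨1, 2 * (4 * ρ) ^ (1 + p), zero_le_one, by rw [hu, one_mul], ?_⟩
    intro c r φ m hc hr hφ0 hφ1 hm
    have hC : 0 ≤ 2 * (4 * ρ) ^ (1 + p) := by positivity
    rcases hφ0.eq_or_lt with h0 | hφ
    · subst h0
      have hm0 : m = 0 := by
        rw [mul_zero] at hm
        exact abs_eq_zero.mp (le_antisymm hm (abs_nonneg _))
      refine ⟨0, 0, fun R => ?_⟩
      subst hm0
      simp only [mul_zero, neg_zero, ite_self, zero_mul, add_zero, one_mul, hb.le,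
        ne_eq, OfNat.ofNat_ne_zero, not_false_eq_true, zero_pow]
      constructor <;> positivity
    -- Rescaling the clipping radius to `b / φ` reduces to features of norm one.
    have hb' : 0 < b / φ := by positivity
    have hiff : ∀ R : ℝ, |R + c| * φ ≤ b ↔ |R + c| ≤ b / φ := fun R => (le_div_iff₀ hφ).symm
    have hbφ : (b / φ) ^ p = b ^ p / φ ^ p := Real.div_rpow hb.le hφ.le p
    have hφp : 0 < φ ^ p := by positivity
    have hφp1 : φ ^ p ≤ 1 := Real.rpow_le_one hφ.le hφ1 hp0.le
    have hlin : ∃ l : ℝ, ∀ R : ℝ, (if |R + c| ≤ b / φ then 0 else -((R + c) * m)) * (b / φ) ^ p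
        ≤ |m| * (|R| ^ (1 + p) + l * (R - r) + 2 * (4 * ρ) ^ (1 + p)) := by
      rcases le_total 0 m with hm0 | hm0
      · obtain ⟨l, hl⟩ := lin_pt_neg hp0 hp1 hρ hb' hc hr
        refine ⟨l, fun R => ?_⟩
        rw [abs_of_nonneg hm0]
        refine le_trans (le_of_eq ?_) (mul_le_mul_of_nonneg_left (hl R) hm0)
        split_ifs <;> ring
      · obtain ⟨l, hl⟩ := lin_pt hp0 hp1 hρ hb' hc hr
        refine ⟨l, fun R => ?_⟩
        rw [abs_of_nonpos hm0]
        refine le_trans (le_of_eq ?_) (mul_le_mul_of_nonneg_left (hl R) (neg_nonneg.2 hm0))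
        split_ifs <;> ring
    obtain ⟨l₁, hl₁⟩ := hlin
    obtain ⟨l₂, hl₂⟩ := quad_pt hp0 hp1 hρ hb' hc hr
    refine ⟨|m| * φ ^ p / (2 * ρ) * l₁, φ * φ ^ p * l₂, fun R => ⟨?_, ?_⟩⟩
    · have h := hl₁ R
      simp only [hiff]
      set F := (if |R + c| ≤ b / φ then 0 else -((R + c) * m))
      set Q := |R| ^ (1 + p)
      set C := 2 * (4 * ρ) ^ (1 + p)
      have hQ : 0 ≤ Q := by positivity
      have hw : |m| * φ ^ p ≤ 2 * ρ := by
        calc |m| * φ ^ p ≤ (2 * ρ * φ) * 1 := mul_le_mul hm hφp1 hφp.le (by positivity)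
          _ ≤ 2 * ρ := by nlinarith
      calc F = b ^ (-p) * φ ^ p * (F * (b / φ) ^ p) := by
            rw [hbφ]; field_simp; linear_combination (-F) * hbp
        _ ≤ b ^ (-p) * φ ^ p * (|m| * (Q + l₁ * (R - r) + C)) := by gcongr
        _ = b ^ (-p) * ((|m| * φ ^ p) * (Q + C) + |m| * φ ^ p * l₁ * (R - r)) := by ring
        _ ≤ b ^ (-p) * ((2 * ρ) * (Q + C) + |m| * φ ^ p * l₁ * (R - r)) := by gcongr
        _ = _ := by field_simp
    · have h := hl₂ R
      simp only [hiff]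
      have e : (if |R + c| ≤ b / φ then (|R + c| * φ) ^ 2 else 0)
          = φ ^ 2 * (if |R + c| ≤ b / φ then (R + c) ^ 2 else 0) := by
        split_ifs
        · rw [mul_pow, sq_abs]; ring
        · ring
      rw [e]
      set F := (if |R + c| ≤ b / φ then (R + c) ^ 2 else 0)
      set Q := |R| ^ (1 + p)
      set C := 2 * (4 * ρ) ^ (1 + p)
      have hQ : 0 ≤ Q := by positivity
      have hw : φ * φ ^ p ≤ 1 := mul_le_one₀ hφ1 hφp.le hφp1
      calc φ ^ 2 * F = b ^ (1 - p) * (φ * φ ^ p) * (F * ((b / φ) ^ p / (b / φ))) := by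
            rw [hbφ, hb1]; field_simp; linear_combination (-F) * hbp
        _ ≤ b ^ (1 - p) * (φ * φ ^ p) * (Q + l₂ * (R - r) + C) := by gcongr
        _ = b ^ (1 - p) * ((φ * φ ^ p) * (Q + C) + φ * φ ^ p * l₂ * (R - r)) := by ring
        _ ≤ b ^ (1 - p) * (1 * (Q + C) + φ * φ ^ p * l₂ * (R - r)) := by gcongr
        _ = _ := by ring

end Scalar

/-! ### Projection, conditional expectation and stationarity -/

lemma projBall_dist_le {d : ℕ} {ρ : ℝ} (hρ : 0 < ρ) (y z : EuclideanSpace ℝ (Fin d))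
    (hz : ‖z‖ ≤ ρ) : ‖projBall ρ y - z‖ ^ 2 ≤ ‖y - z‖ ^ 2 := by
  unfold projBall
  split_ifs with h
  · exact le_rfl
  · push Not at h
    have hy : 0 < ‖y‖ := hρ.trans h
    have hk : ρ / ‖y‖ * ‖y‖ = ρ := div_mul_cancel₀ _ hy.ne'
    have hk1 : ρ / ‖y‖ ≤ 1 := (div_le_one hy).2 h.le
    have hk0 : 0 < ρ / ‖y‖ := by positivity
    have hin : ⟪y, z⟫_ℝ ≤ ‖y‖ * ρ :=
      (real_inner_le_norm y z).trans (by gcongr)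
    rw [norm_sub_sq_real, norm_sub_sq_real, norm_smul, real_inner_smul_left, Real.norm_eq_abs,
      abs_of_pos hk0]
    generalize ρ / ‖y‖ = k at *
    rw [← hk] at hin
    nlinarith [mul_nonneg (sub_nonneg.2 hk1) (sub_nonneg.2 hin),
      mul_nonneg (mul_nonneg (sub_nonneg.2 hk1) (sub_nonneg.2 hk1)) (sq_nonneg ‖y‖)]

section Expectation

variable {Ω : Type*} [mΩ : MeasurableSpace Ω] {ℙ : Measure Ω}
  {S : Type*} [Finite S] [mS : MeasurableSpace S] [DiscreteMeasurableSpace S]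

lemma integrable_finite_mul {Y : Ω → S} (hY : Measurable Y) (h : S → ℝ) {Z : Ω → ℝ}
    (hZ : Integrable Z ℙ) : Integrable (fun ω => h (Y ω) * Z ω) ℙ := by
  obtain ⟨M, hM⟩ := (Set.finite_range fun s => ‖h s‖).bddAbove
  exact hZ.bdd_mul (c := M) ((Measurable.of_discrete (f := h)).comp hY).aestronglyMeasurable
    (Filter.Eventually.of_forall fun ω => hM ⟨Y ω, rfl⟩)

lemma integrable_finite [IsProbabilityMeasure ℙ] {Y : Ω → S} (hY : Measurable Y) (h : S → ℝ) :
    Integrable (fun ω => h (Y ω)) ℙ := by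
  simpa using integrable_finite_mul (ℙ := ℙ) hY h (integrable_const (1 : ℝ))

/-- A weight depending on `Y` sees only the conditional expectation given `Y`. -/
lemma integral_mul_of_condExp [IsProbabilityMeasure ℙ] {Y : Ω → S} (hY : Measurable Y)
    (h : S → ℝ) {Z W : Ω → ℝ}
    (hZ : Integrable Z ℙ) (hW : ℙ[Z|MeasurableSpace.comap Y mS] =ᵐ[ℙ] W) :
    ∫ ω, h (Y ω) * Z ω ∂ℙ = ∫ ω, h (Y ω) * W ω ∂ℙ := by
  have hm : MeasurableSpace.comap Y mS ≤ mΩ := hY.comap_le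
  have hsm : StronglyMeasurable[MeasurableSpace.comap Y mS] (fun ω => h (Y ω)) :=
    ((Measurable.of_discrete (f := h)).comp (comap_measurable Y)).stronglyMeasurable
  have hce := condExp_mul_of_stronglyMeasurable_left (μ := ℙ) hsm
    (integrable_finite_mul hY h hZ) hZ
  calc ∫ ω, h (Y ω) * Z ω ∂ℙ
      = ∫ ω, (ℙ[(fun ω => h (Y ω)) * Z|MeasurableSpace.comap Y mS]) ω ∂ℙ :=
        (integral_condExp hm).symm
    _ = ∫ ω, h (Y ω) * W ω ∂ℙ := by
        refine integral_congr_ae ?_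
        filter_upwards [hce, hW] with ω h1 h2
        rw [h1, Pi.mul_apply, h2]

end Expectation

/-- Coercivity of `I - γ P` in `L²(μ)` for a stationary distribution `μ`. -/
lemma drift_sum_le {𝕏 : Type*} [Fintype 𝕏]
    (P : 𝕏 → 𝕏 → ℝ) (hP0 : ∀ x x', 0 ≤ P x x') (hP1 : ∀ x, ∑ x', P x x' = 1)
    (μ : 𝕏 → ℝ) (hμ0 : ∀ x, 0 ≤ μ x) (hstat : ∀ y, ∑ x, μ x * P x y = μ y)
    (γ : ℝ) (hγ0 : 0 ≤ γ) (m : 𝕏 → ℝ) :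
    ∑ x, μ x * (m x * (γ * ∑ x', P x x' * m x' - m x)) ≤ -(1 - γ) * ∑ x, μ x * m x ^ 2 := by
  have h1 : ∑ x, μ x * (m x * ∑ x', P x x' * m x') ≤ ∑ x, μ x * m x ^ 2 := by
    have hL : ∑ x, μ x * (m x * ∑ x', P x x' * m x')
        = ∑ x, ∑ x', μ x * P x x' * (m x * m x') := by
      refine Finset.sum_congr rfl fun x _ => ?_
      rw [Finset.mul_sum, Finset.mul_sum]
      exact Finset.sum_congr rfl fun x' _ => by ring
    have hA : ∑ x, ∑ x', μ x * P x x' * m x ^ 2 = ∑ x, μ x * m x ^ 2 := by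
      refine Finset.sum_congr rfl fun x _ => ?_
      rw [← Finset.sum_mul, ← Finset.mul_sum, hP1, mul_one]
    have hB : ∑ x, ∑ x', μ x * P x x' * m x' ^ 2 = ∑ x, μ x * m x ^ 2 := by
      rw [Finset.sum_comm]
      refine Finset.sum_congr rfl fun x _ => ?_
      rw [← Finset.sum_mul, hstat]
    have hC : ∑ x, ∑ x', μ x * P x x' * (m x * m x')
        ≤ ∑ x, ∑ x', (μ x * P x x' * m x ^ 2 / 2 + μ x * P x x' * m x' ^ 2 / 2) := by
      refine Finset.sum_le_sum fun x _ => Finset.sum_le_sum fun x' _ => ?_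
      nlinarith [mul_nonneg (mul_nonneg (hμ0 x) (hP0 x x')) (sq_nonneg (m x - m x'))]
    simp only [Finset.sum_add_distrib, ← Finset.sum_div, hA, hB] at hC
    rw [hL]
    linarith
  have h2 : ∑ x, μ x * (m x * (γ * ∑ x', P x x' * m x' - m x))
      = γ * ∑ x, μ x * (m x * ∑ x', P x x' * m x') - ∑ x, μ x * m x ^ 2 := by
    rw [Finset.mul_sum, ← Finset.sum_sub_distrib]
    exact Finset.sum_congr rfl fun x _ => by ring
  rw [h2]
  nlinarith

/-! ### The drift inequality -/

/-- **One-step Lyapunov drift of Robust TD learning (iid sample).** For a fixed `Θ` in the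
ball of radius `ρ`, step size `η > 0` and clipping radius `b > 0`, and a single iid sample
`X ∼ μ`, `X' ∼ P(X,·)`, `E[R | X, X'] = r(X)`, `E[|R|^(1+p) | X, X'] ≤ u₀`, the clipped
projected TD update `Θ⁺ = Π_ρ(Θ + η • g • 1{‖g‖ ≤ b})` satisfies
`E‖Θ⁺ − Θ*‖² ≤ ‖Θ − Θ*‖² − 2η(1−γ)‖f_Θ − 𝒱‖²_μ + 4ηρ u b^{−p} + η² u b^{1−p}`. -/
theorem robust_td_one_step_drift
    {Ω : Type*} [mΩ : MeasurableSpace Ω] (ℙ : Measure Ω) [IsProbabilityMeasure ℙ]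
    {𝕏 : Type*} [Fintype 𝕏] [m𝕏 : MeasurableSpace 𝕏] [DiscreteMeasurableSpace 𝕏]
    {d : ℕ}
    (P : 𝕏 → 𝕏 → ℝ) (hP0 : ∀ x x', 0 ≤ P x x') (hP1 : ∀ x, ∑ x', P x x' = 1)
    (μdist : 𝕏 → ℝ) (hμ0 : ∀ x, 0 ≤ μdist x) (hμ1 : ∑ x, μdist x = 1)
    (hstat : ∀ y, ∑ x, μdist x * P x y = μdist y)
    (γ : ℝ) (hγ0 : 0 ≤ γ) (hγ1 : γ < 1)
    (r : 𝕏 → ℝ) (hr : ∀ x, |r x| ≤ 1)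
    (V : 𝕏 → ℝ) (hV : ∀ x, V x = r x + γ * ∑ x', P x x' * V x')
    (Φ : 𝕏 → EuclideanSpace ℝ (Fin d)) (hΦ : ∀ x, ‖Φ x‖ ≤ 1)
    (ρ : ℝ) (hρ : 0 < ρ)
    (Θstar : EuclideanSpace ℝ (Fin d)) (hΘstar : ‖Θstar‖ ≤ ρ)
    (hreal : ∀ x, V x = ⟪Θstar, Φ x⟫_ℝ)
    (p u₀ u η b : ℝ) (hp0 : 0 < p) (hp1 : p ≤ 1) (hu₀ : 0 < u₀)
    (hu : u = min ((u₀ ^ (1 / (1 + p)) + 2 * ρ) ^ (1 + p))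
        (u₀ + 2 ^ (2 * p + 3) * ρ ^ (1 + p)))
    (hη : 0 < η) (hb : 0 < b)
    (Θ : EuclideanSpace ℝ (Fin d)) (hΘ : ‖Θ‖ ≤ ρ)
    (X X' : Ω → 𝕏) (R : Ω → ℝ)
    (hXm : Measurable X) (hX'm : Measurable X') (hRm : Measurable R)
    (hXlaw : ∀ f : 𝕏 → ℝ, ∫ ω, f (X ω) ∂ℙ = ∑ x, μdist x * f x)
    (hX'law : ∀ f : 𝕏 → ℝ,
      ℙ[fun ω => f (X' ω)|MeasurableSpace.comap X m𝕏]
        =ᵐ[ℙ] fun ω => ∑ x', P (X ω) x' * f x')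
    (hRint : Integrable R ℙ)
    (hRmomint : Integrable (fun ω => |R ω| ^ (1 + p)) ℙ)
    (hRmean : ℙ[R|MeasurableSpace.comap (fun ω => (X ω, X' ω)) inferInstance]
        =ᵐ[ℙ] fun ω => r (X ω))
    (hRmom : ∀ᵐ ω ∂ℙ,
      (ℙ[fun ω' => |R ω'| ^ (1 + p)|MeasurableSpace.comap
          (fun ω => (X ω, X' ω)) inferInstance]) ω ≤ u₀) :
    ∫ ω, ‖projBall ρ (Θ + η • (if ‖tdGrad γ Φ (X ω) (R ω) (X' ω) Θ‖ ≤ b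
          then tdGrad γ Φ (X ω) (R ω) (X' ω) Θ else 0)) - Θstar‖ ^ 2 ∂ℙ
      ≤ ‖Θ - Θstar‖ ^ 2
        - 2 * η * (1 - γ) * ∑ x, μdist x * (⟪Θ, Φ x⟫_ℝ - V x) ^ 2
        + 4 * η * ρ * u * b ^ (-p)
        + η ^ 2 * u * b ^ (1 - p) := by
  have hVb : ∀ x, |V x| ≤ ρ := fun x => by
    rw [hreal]
    refine (abs_real_inner_le_norm _ _).trans ?_
    nlinarith [norm_nonneg Θstar, norm_nonneg (Φ x), hΦ x]
  have hfb : ∀ x, |⟪Θ, Φ x⟫_ℝ| ≤ ρ := fun x => by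
    refine (abs_real_inner_le_norm _ _).trans ?_
    nlinarith [norm_nonneg Θ, norm_nonneg (Φ x), hΦ x]
  -- The Bellman equation bounds the mean reward by `2ρ`, the scale on which `R` is centred.
  have hrb : ∀ x, |r x| ≤ 2 * ρ := fun x => by
    have h1 : |∑ x', P x x' * V x'| ≤ ρ := by
      calc |∑ x', P x x' * V x'| ≤ ∑ x', |P x x' * V x'| := Finset.abs_sum_le_sum_abs _ _
        _ ≤ ∑ x', P x x' * ρ := Finset.sum_le_sum fun x' _ => by
            rw [abs_mul, abs_of_nonneg (hP0 x x')]
            exact mul_le_mul_of_nonneg_left (hVb x') (hP0 x x')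
        _ = ρ := by rw [← Finset.sum_mul, hP1, one_mul]
    have h2 : |γ * ∑ x', P x x' * V x'| ≤ ρ := by
      rw [abs_mul, abs_of_nonneg hγ0]
      nlinarith [abs_nonneg (∑ x', P x x' * V x')]
    rw [show r x = V x - γ * ∑ x', P x x' * V x' by linarith [hV x]]
    exact (abs_sub _ _).trans (by linarith [hVb x])
  set m : 𝕏 → ℝ := fun x => ⟪Θ - Θstar, Φ x⟫_ℝ with hm_def
  have hmV : ∀ x, ⟪Θ, Φ x⟫_ℝ - V x = m x := fun x => by
    rw [hreal, hm_def]; exact (inner_sub_left _ _ _).symm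
  have hmb : ∀ x, |m x| ≤ 2 * ρ * ‖Φ x‖ := fun x => by
    refine (abs_real_inner_le_norm _ _).trans ?_
    gcongr
    exact (norm_sub_le _ _).trans (by linarith)
  set c : 𝕏 → 𝕏 → ℝ := fun x x' => γ * ⟪Θ, Φ x'⟫_ℝ - ⟪Θ, Φ x⟫_ℝ with hc_def
  have hcb : ∀ x x', |c x x'| ≤ 2 * ρ := fun x x' => by
    refine (abs_sub _ _).trans ?_
    rw [abs_mul, abs_of_nonneg hγ0]
    nlinarith [hfb x, hfb x', abs_nonneg ⟪Θ, Φ x'⟫_ℝ]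
  obtain ⟨α, β, hα, hαβ, hclip⟩ := clip_pt hp0 hp1 hρ hb hu₀ hu
  choose l₁ l₂ hl using fun x x' => hclip (c x x') (r x) ‖Φ x‖ (m x) (hcb x x') (hrb x)
    (norm_nonneg _) (hΦ x) (hmb x)
  have hpair : Measurable fun ω => (X ω, X' ω) := hXm.prodMk hX'm
  -- The three expectations entering the bound.
  have hZint : Integrable (fun ω => R ω - r (X ω)) ℙ := hRint.sub (integrable_finite hXm r)
  have hcint : ∀ l : 𝕏 → 𝕏 → ℝ, Integrable (fun ω => l (X ω) (X' ω) * (R ω - r (X ω))) ℙ :=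
    fun l => integrable_finite_mul hpair (fun s => l s.1 s.2) hZint
  have hcentre : ∀ l : 𝕏 → 𝕏 → ℝ, ∫ ω, l (X ω) (X' ω) * (R ω - r (X ω)) ∂ℙ = 0 := fun l => by
    have h1 := integral_mul_of_condExp hpair (fun s => l s.1 s.2) hRint hRmean
    have i1 := integrable_finite_mul hpair (fun s => l s.1 s.2) hRint
    have i2 := integrable_finite (ℙ := ℙ) hpair (fun s => l s.1 s.2 * r s.1)
    simp only [mul_sub]
    rw [integral_sub i1 i2]
    exact sub_eq_zero.2 h1
  have hmom : ∫ ω, |R ω| ^ (1 + p) ∂ℙ ≤ u₀ := by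
    rw [← integral_condExp hpair.comap_le]
    calc _ ≤ ∫ _, u₀ ∂ℙ := integral_mono_ae integrable_condExp (integrable_const _) hRmom
      _ = u₀ := by simp
  have hnext : ∀ ω, m (X ω) * (R ω + c (X ω) (X' ω))
      = m (X ω) * (R ω - r (X ω)) + γ * (m (X ω) * ⟪Θ, Φ (X' ω)⟫_ℝ)
        + m (X ω) * (r (X ω) - ⟪Θ, Φ (X ω)⟫_ℝ) := fun ω => by rw [hc_def]; ring
  have iA := hcint fun x _ => m x
  have iB : Integrable (fun ω => γ * (m (X ω) * ⟪Θ, Φ (X' ω)⟫_ℝ)) ℙ :=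
    (integrable_finite_mul hXm m
      (integrable_finite hX'm fun x => ⟪Θ, Φ x⟫_ℝ)).const_mul γ
  have iC : Integrable (fun ω => m (X ω) * (r (X ω) - ⟪Θ, Φ (X ω)⟫_ℝ)) ℙ :=
    integrable_finite hXm fun x => m x * (r x - ⟪Θ, Φ x⟫_ℝ)
  have igrad : Integrable (fun ω => m (X ω) * (R ω + c (X ω) (X' ω))) ℙ := by
    simp only [hnext]; exact (iA.fun_add iB).add iC
  have hgrad : ∫ ω, m (X ω) * (R ω + c (X ω) (X' ω)) ∂ℙ
      ≤ -(1 - γ) * ∑ x, μdist x * m x ^ 2 := by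
    simp only [hnext]
    rw [integral_add (iA.fun_add iB) iC, integral_add iA iB, hcentre fun x _ => m x, integral_const_mul,
      integral_mul_of_condExp hXm m (integrable_finite hX'm fun x => ⟪Θ, Φ x⟫_ℝ)
        (hX'law fun x => ⟪Θ, Φ x⟫_ℝ),
      hXlaw fun x => m x * ∑ x', P x x' * ⟪Θ, Φ x'⟫_ℝ,
      hXlaw fun x => m x * (r x - ⟪Θ, Φ x⟫_ℝ)]
    refine le_trans (le_of_eq ?_) (drift_sum_le P hP0 hP1 μdist hμ0 hstat γ hγ0 m)
    rw [zero_add, Finset.mul_sum, ← Finset.sum_add_distrib]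
    refine Finset.sum_congr rfl fun x _ => ?_
    have hs : ∑ x', P x x' * m x' = ∑ x', P x x' * ⟪Θ, Φ x'⟫_ℝ - ∑ x', P x x' * V x' := by
      rw [← Finset.sum_sub_distrib]
      exact Finset.sum_congr rfl fun x' _ => by rw [← hmV]; ring
    rw [hs]
    linear_combination (μdist x * m x) * (-hmV x - hV x)
  -- An integrable pointwise upper bound for the squared distance after the update.
  have hpt : ∀ ω, ‖projBall ρ (Θ + η • (if ‖tdGrad γ Φ (X ω) (R ω) (X' ω) Θ‖ ≤ b
          then tdGrad γ Φ (X ω) (R ω) (X' ω) Θ else 0)) - Θstar‖ ^ 2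
      ≤ ‖Θ - Θstar‖ ^ 2 + 2 * η * (m (X ω) * (R ω + c (X ω) (X' ω)))
        + 2 * η * (2 * ρ * b ^ (-p) * (α * |R ω| ^ (1 + p) + β
            + l₁ (X ω) (X' ω) * (R ω - r (X ω))))
        + η ^ 2 * (b ^ (1 - p) * (α * |R ω| ^ (1 + p) + β
            + l₂ (X ω) (X' ω) * (R ω - r (X ω)))) := fun ω => by
    refine (projBall_dist_le hρ _ _ hΘstar).trans ?_
    obtain ⟨h1, h2⟩ := hl (X ω) (X' ω) (R ω)
    have hg : tdGrad γ Φ (X ω) (R ω) (X' ω) Θ = (R ω + c (X ω) (X' ω)) • Φ (X ω) := by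
      simp only [tdGrad, hc_def, add_sub_assoc]
    have hgn : ‖tdGrad γ Φ (X ω) (R ω) (X' ω) Θ‖ = |R ω + c (X ω) (X' ω)| * ‖Φ (X ω)‖ := by
      rw [hg, norm_smul, Real.norm_eq_abs]
    have hgi : ⟪Θ - Θstar, tdGrad γ Φ (X ω) (R ω) (X' ω) Θ⟫_ℝ
        = (R ω + c (X ω) (X' ω)) * m (X ω) := by
      rw [hg, real_inner_smul_right]
    rw [← hgn] at h1 h2
    have h1' := mul_le_mul_of_nonneg_left h1 (by positivity : 0 ≤ 2 * η)
    have h2' := mul_le_mul_of_nonneg_left h2 (by positivity : 0 ≤ η ^ 2)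
    rw [show ∀ v : EuclideanSpace ℝ (Fin d), Θ + v - Θstar = (Θ - Θstar) + v from
      fun v => by abel, norm_add_sq_real, real_inner_smul_right, norm_smul, mul_pow,
      Real.norm_eq_abs, sq_abs]
    split_ifs at h1' h2' ⊢ with h
    · rw [hgi]; linarith
    · rw [inner_zero_right, norm_zero]; linarith
  have iM : ∀ l : 𝕏 → 𝕏 → ℝ, Integrable (fun ω => α * |R ω| ^ (1 + p) + β
      + l (X ω) (X' ω) * (R ω - r (X ω))) ℙ := fun l =>
    ((hRmomint.const_mul α).fun_add (integrable_const β)).add (hcint l)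
  have hM : ∀ l : 𝕏 → 𝕏 → ℝ, ∫ ω, (α * |R ω| ^ (1 + p) + β
      + l (X ω) (X' ω) * (R ω - r (X ω))) ∂ℙ ≤ u := fun l => by
    rw [integral_add ((hRmomint.const_mul α).fun_add (integrable_const β)) (hcint l),
      integral_add (hRmomint.const_mul α) (integrable_const β), integral_const_mul, hcentre l]
    simp only [integral_const, probReal_univ, one_smul, add_zero]
    rw [← hαβ]
    gcongr
  have i0 : Integrable (fun _ : Ω => ‖Θ - Θstar‖ ^ 2) ℙ := integrable_const _
  have i1 := igrad.const_mul (2 * η)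
  have i2 := ((iM l₁).const_mul (2 * ρ * b ^ (-p))).const_mul (2 * η)
  have i3 := ((iM l₂).const_mul (b ^ (1 - p))).const_mul (η ^ 2)
  refine (integral_mono_of_nonneg (Filter.Eventually.of_forall fun ω => sq_nonneg _)
    (((i0.fun_add i1).fun_add i2).fun_add i3) (Filter.Eventually.of_forall hpt)).trans ?_
  rw [integral_add ((i0.fun_add i1).fun_add i2) i3, integral_add (i0.fun_add i1) i2, integral_add i0 i1]
  simp only [integral_const_mul, integral_const, probReal_univ, one_smul]
  have e1 := mul_le_mul_of_nonneg_left hgrad (by positivity : 0 ≤ 2 * η)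
  have e2 := mul_le_mul_of_nonneg_left (hM l₁) (by positivity : 0 ≤ 2 * η * (2 * ρ * b ^ (-p)))
  have e3 := mul_le_mul_of_nonneg_left (hM l₂) (by positivity : 0 ≤ η ^ 2 * b ^ (1 - p))
  simp only [hmV]
  linarith
end

section
/- (Theorem 2: expected error of Robust TD learning under Markovian sampling.) Suppose additionally that the chain is uniformly ergodic: there exist constants m > 0 and ζ ∈ (0,1) such that max_{x ∈ X} ‖P^t(x,·) − μ‖_TV ≤ m ζ^t for all integers t ≥ 1, where ‖·‖_TV is total variation distance and P^t is the t-step transition matrix. Let T > 1 be an integer, define the mixing time τ = min{t ≥ 1 : m ζ^t ≤ √2 ρ (u T)^{−1/(1+p)}}, and run Robust TD learning under Markovian sampling with clipping radii b_t = (u t)^{1/(1+p)} and constant step size η_t = η = √2 ρ (u T)^{−1/(1+p)}. Then E[ Σ_{x ∈ X} μ(x) (𝒱(x) − ⟨Θ̄(T), Φ(x)⟩)² ] ≤ 7 ρ u^{1/(1+p)} / ((1−γ) T^{p/(1+p)}) + 2√2 ρ (1+2ρ)(4ρ + τ(1+6ρ)) / ((1−γ) T^{1/(1+p)}), where the expectation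 is over the random iterates Θ(1), …, Θ(T). -/
/-!
Write `w_θ(x) = ⟨θ - Θ*, Φ x⟩`. By realizability the mean TD step at state `x`, paired with
`θ - Θ*`, is the quadratic form `(γ P w_θ - w_θ)(x) · w_θ(x)` (`tdDrift`,
`integral_inner_tdGrad`). Averaged over the stationary law it is at most `-(1-γ) ‖w_θ‖²_{L²(μ)}`,
since `P` does not expand `L²(μ)` (`mean_tdDrift_le`).

The Lyapunov function is `E‖Θ(t) - Θ*‖²`. As the projection does not increase the distance to `Θ*`,
one step changes it by at most `2η E⟨ĝ_t, Θ(t) - Θ*⟩ + η² E‖ĝ_t‖²`, with `ĝ_t` the clipped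
gradient. Three errors separate this from the stationary drift.

* Clipping. Minkowski's inequality gives `E‖g_t‖^{1+p} ≤ (9/8) u`; the factor `9/8` pays for the
  second expression in the minimum defining `u` (`moment_le_mul_u`). The bias of clipping is then at
  most `(9/4) ρ u b_t^{-p}` and the second moment of `ĝ_t` at most `(9/8) u b_t^{1-p}`. Summed over
  `t ≤ T` the variance terms contribute `(9/4) ρ²`, and the initial distance `4ρ²`.
* Markovian noise. For `t > τ`, the drift at `(X_t, Θ(t))` is compared with the drift at
  `(X_t, Θ(t-τ))`. Given the history at time `t-τ`, the law of `X_t` is within `η` of `μ` in total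
  variation, which costs `16ρ²η` (`frozen_drift_le_of_mixing`). For `t ≤ τ` the comparison is with
  the deterministic `Θ(1)`, where stationarity of the chain makes the comparison exact
  (`frozen_drift_eq_of_const`).
* Movement of the iterates. The drift is `8ρ`-Lipschitz in the parameter and the iterates move by at
  most `η E‖ĝ_t‖ ≤ (9/8) η u^{1/(1+p)}` per step in mean, so replacing `Θ(t)` by the earlier
  iterate costs at most `18 ρ τ η u^{1/(1+p)}` (`drift_gap_le`).

Telescoping, the bound `∑_{t ≤ T} t^{-p/(1+p)} ≤ (1+p) T^{1/(1+p)}`, and Jensen's inequality for the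
averaged iterate give the claim. The constants fit because `25/(8√2) + 9/2 ≤ 7`,
`u^{1/(1+p)} ≥ 2ρ` and `9ρ ≤ (1+2ρ)(1+6ρ)` (`final_arith`).
-/

open MeasureTheory
open scoped BigOperators InnerProductSpace

/-- The σ-algebra generated by the states `X_1, …, X_s` and the rewards `R_1, …, R_{s'}`. -/
def historySigma {Ω 𝕏 : Type*} [mΩ : MeasurableSpace Ω] (m𝕏 : MeasurableSpace 𝕏)
    (X : ℕ → Ω → 𝕏) (R : ℕ → Ω → ℝ) (s s' : ℕ) : MeasurableSpace Ω :=
  (⨆ j ∈ Finset.Icc 1 s, MeasurableSpace.comap (X j) m𝕏) ⊔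
    (⨆ j ∈ Finset.Icc 1 s', MeasurableSpace.comap (R j) (borel ℝ))

/-! ### Projection onto the ball -/

lemma norm_projBall_le {d : ℕ} {ρ : ℝ} (hρ : 0 < ρ) (x : EuclideanSpace ℝ (Fin d)) :
    ‖projBall ρ x‖ ≤ ρ := by
  unfold projBall
  split_ifs with h
  · exact h
  · have hx : 0 < ‖x‖ := hρ.trans (not_le.mp h)
    rw [norm_smul, Real.norm_of_nonneg (by positivity), div_mul_cancel₀ _ hx.ne']

/-- Projecting onto the ball does not increase the distance to a point of the ball. -/
lemma norm_projBall_sub_le {d : ℕ} {ρ : ℝ} (hρ : 0 < ρ) (x y : EuclideanSpace ℝ (Fin d))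
    (hy : ‖y‖ ≤ ρ) : ‖projBall ρ x - y‖ ≤ ‖x - y‖ := by
  unfold projBall
  split_ifs with h
  · exact le_rfl
  · have hlt : ρ < ‖x‖ := not_le.mp h
    have hx : 0 < ‖x‖ := hρ.trans hlt
    set c := ρ / ‖x‖ with hc
    have hcx : c * ‖x‖ = ρ := div_mul_cancel₀ _ hx.ne'
    have hc1 : c ≤ 1 := by rw [hc, div_le_one hx]; exact hlt.le
    have hc0 : 0 ≤ c := by positivity
    have hxy : ⟪x, y⟫_ℝ ≤ ‖x‖ * ρ :=
      (real_inner_le_norm x y).trans (by gcongr)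
    apply le_of_sq_le_sq _ (norm_nonneg _)
    rw [norm_sub_sq_real, norm_sub_sq_real, norm_smul, Real.norm_of_nonneg hc0, hcx,
      real_inner_smul_left]
    have h1 : (1 - c) * ⟪x, y⟫_ℝ ≤ (1 - c) * (‖x‖ * ρ) :=
      mul_le_mul_of_nonneg_left hxy (by linarith)
    have h2 : (1 - c) * (‖x‖ * ρ) = (‖x‖ - ρ) * ρ := by
      linear_combination (-ρ) * hcx
    nlinarith [sq_nonneg (‖x‖ - ρ)]

lemma measurable_projBall {d : ℕ} (ρ : ℝ) :
    Measurable (projBall ρ : EuclideanSpace ℝ (Fin d) → EuclideanSpace ℝ (Fin d)) := by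
  unfold projBall
  refine Measurable.ite (measurableSet_le measurable_norm measurable_const) measurable_id ?_
  exact (measurable_const.div measurable_norm).smul measurable_id

/-! ### Real power inequalities -/

/-- `∑_{t ≤ n} t^{q-1} ≤ n^q / q`, with the denominator cleared. -/
lemma sum_rpow_sub_one_le {q : ℝ} (hq0 : 0 < q) (hq1 : q ≤ 1) (n : ℕ) :
    q * ∑ t ∈ Finset.Icc 1 n, (t : ℝ) ^ (q - 1) ≤ (n : ℝ) ^ q := by
  induction n with
  | zero => simp [Real.zero_rpow hq0.ne']
  | succ n ih =>
    rw [Finset.sum_Icc_succ_top (by omega), mul_add]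
    have hn : (0 : ℝ) < (n : ℝ) + 1 := by positivity
    -- Bernoulli's inequality for the concave power, at `n / (n + 1) = 1 - 1 / (n + 1)`
    have hb := rpow_one_add_le_one_add_mul_self
      (s := -(1 / ((n : ℝ) + 1))) (p := q) (by
        rw [neg_le_neg_iff, div_le_one hn]; linarith [n.cast_nonneg (α := ℝ)]) hq0.le hq1
    have he : (n : ℝ) = ((n : ℝ) + 1) * (1 + -(1 / ((n : ℝ) + 1))) := by
      field_simp; ring
    have h0 : 0 ≤ 1 + -(1 / ((n : ℝ) + 1)) := by
      have : 1 / ((n : ℝ) + 1) ≤ 1 := by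
        rw [div_le_one hn]; linarith [n.cast_nonneg (α := ℝ)]
      linarith
    have h1 : (n : ℝ) ^ q ≤ ((n : ℝ) + 1) ^ q * (1 + q * -(1 / ((n : ℝ) + 1))) := by
      conv_lhs => rw [he]
      rw [Real.mul_rpow hn.le h0]
      gcongr
    have h2 : ((n : ℝ) + 1) ^ (q - 1) = ((n : ℝ) + 1) ^ q * (1 / ((n : ℝ) + 1)) := by
      rw [Real.rpow_sub_one hn.ne']; ring
    push_cast
    rw [h2]
    nlinarith

/-- Convexity of `x ↦ x^q`, applied to `x + a = l (x / l) + (1 - l) (a / (1 - l))`. -/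
lemma add_rpow_le_weighted {q l x a : ℝ} (hq : 1 ≤ q) (hl0 : 0 < l) (hl1 : l < 1)
    (hx : 0 ≤ x) (ha : 0 ≤ a) :
    (x + a) ^ q ≤ l * (x / l) ^ q + (1 - l) * (a / (1 - l)) ^ q := by
  have h1l : 0 < 1 - l := by linarith
  have h := (convexOn_rpow hq).2 (x := x / l) (y := a / (1 - l))
    (by simp only [Set.mem_Ici]; positivity) (by simp only [Set.mem_Ici]; positivity)
    hl0.le h1l.le (by ring)
  simp only [smul_eq_mul] at h
  rwa [mul_div_cancel₀ _ hl0.ne', mul_div_cancel₀ _ h1l.ne'] at h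

/-- Bernoulli's inequality rescaled: a first moment is controlled by a `(1+p)`-th moment. -/
lemma young_bound {p c x : ℝ} (hp : 0 < p) (hc : 0 < c) (hx : 0 ≤ x) :
    (1 + p) * x ≤ c ^ (-p) * x ^ (1 + p) + p * c := by
  have h := one_add_mul_self_le_rpow_one_add (s := x / c - 1) (p := 1 + p)
    (by have : 0 ≤ x / c := by positivity
        linarith) (by linarith)
  rw [add_sub_cancel, Real.div_rpow hx hc.le, Real.rpow_add hc, Real.rpow_one] at h
  rw [Real.rpow_neg hc.le]
  have h2 := mul_le_mul_of_nonneg_left h hc.le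
  have e1 : c * (1 + (1 + p) * (x / c - 1)) = (1 + p) * x - p * c := by field_simp; ring
  have e2 : c * (x ^ (1 + p) / (c * c ^ p)) = (c ^ p)⁻¹ * x ^ (1 + p) := by
    field_simp
  rw [e1, e2] at h2
  linarith

/-- Minkowski's inequality for adding the constant `a` to a variable with `E|R|^q ≤ u₀`. -/
lemma integral_add_rpow_le {Ω : Type*} [MeasurableSpace Ω] (ℙ : Measure Ω)
    [IsProbabilityMeasure ℙ] {q a u₀ : ℝ} (hq : 1 ≤ q) (ha : 0 < a) (hu₀ : 0 < u₀)
    (R : Ω → ℝ) (hR : Measurable R) (hint : Integrable (fun ω => |R ω| ^ q) ℙ)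
    (hmom : ∫ ω, |R ω| ^ q ∂ℙ ≤ u₀) :
    Integrable (fun ω => (|R ω| + a) ^ q) ℙ ∧
      ∫ ω, (|R ω| + a) ^ q ∂ℙ ≤ (u₀ ^ (1 / q) + a) ^ q := by
  have hq0 : 0 < q := by linarith
  set s := u₀ ^ (1 / q) with hs
  have hs0 : 0 < s := by positivity
  have hsq : s ^ q = u₀ := by
    rw [hs, ← Real.rpow_mul hu₀.le, one_div_mul_cancel hq0.ne', Real.rpow_one]
  -- with the weight `s / (s + a)` the convexity bound integrates to exactly `(s + a)^q`
  set l := s / (s + a) with hl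
  have hl0 : 0 < l := by positivity
  have hl1 : l < 1 := by rw [hl, div_lt_one (by positivity)]; linarith
  have h1l : 1 - l = a / (s + a) := by rw [hl]; field_simp; ring
  have hpt : ∀ ω, (|R ω| + a) ^ q ≤
      l * (1 / l) ^ q * |R ω| ^ q + (1 - l) * (a / (1 - l)) ^ q := by
    intro ω
    have := add_rpow_le_weighted hq hl0 hl1 (abs_nonneg (R ω)) ha.le
    refine this.trans_eq ?_
    rw [show |R ω| / l = (1 / l) * |R ω| by ring,
      Real.mul_rpow (by positivity) (abs_nonneg _)]
    ring
  have hI : Integrable (fun ω => l * (1 / l) ^ q * |R ω| ^ q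
      + (1 - l) * (a / (1 - l)) ^ q) ℙ := (hint.const_mul _).add (integrable_const _)
  have hI2 : Integrable (fun ω => (|R ω| + a) ^ q) ℙ := by
    refine hI.mono' ((hR.abs.add_const a).pow_const q).aestronglyMeasurable
      (Filter.Eventually.of_forall fun ω => ?_)
    rw [Real.norm_of_nonneg (by positivity)]
    exact hpt ω
  refine ⟨hI2, (integral_mono hI2 hI hpt).trans ?_⟩
  rw [integral_add (hint.const_mul _) (integrable_const _), integral_const_mul]
  simp only [integral_const, probReal_univ, one_smul]
  have e1 : a / (1 - l) = s + a := by rw [h1l]; field_simp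
  have e2 : (1 / l) ^ q = (s + a) ^ q / u₀ := by
    rw [hl, one_div_div, Real.div_rpow (by positivity) hs0.le, hsq]
  rw [e1, e2]
  calc l * ((s + a) ^ q / u₀) * ∫ ω, |R ω| ^ q ∂ℙ + (1 - l) * (s + a) ^ q
      ≤ l * ((s + a) ^ q / u₀) * u₀ + (1 - l) * (s + a) ^ q := by gcongr
    _ = (s + a) ^ q := by field_simp; ring

/-- The moment bound `(u₀^{1/(1+p)} + 2ρ)^{1+p}` exceeds `u` by a factor of at most `9/8`.
The factor `9/8` is only needed when the minimum is attained by the second expression; it comes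
from splitting with weights `8/9` and `1/9`. -/
lemma moment_le_mul_u {p u₀ ρ : ℝ} (hp0 : 0 < p) (hp1 : p ≤ 1) (hu₀ : 0 < u₀) (hρ : 0 < ρ) :
    (u₀ ^ (1 / (1 + p)) + 2 * ρ) ^ (1 + p) ≤
      9 / 8 * min ((u₀ ^ (1 / (1 + p)) + 2 * ρ) ^ (1 + p))
        (u₀ + 2 ^ (2 * p + 3) * ρ ^ (1 + p)) := by
  set s := u₀ ^ (1 / (1 + p)) with hs
  have hs0 : 0 < s := by positivity
  have hsq : s ^ (1 + p) = u₀ := by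
    rw [hs, ← Real.rpow_mul hu₀.le, one_div_mul_cancel (by positivity), Real.rpow_one]
  rw [mul_min_of_nonneg _ _ (by norm_num), le_min_iff]
  constructor
  · have : 0 ≤ (s + 2 * ρ) ^ (1 + p) := by positivity
    linarith
  · have h := add_rpow_le_weighted (q := 1 + p) (l := 8 / 9) (x := s) (a := 2 * ρ) (by linarith)
      (by norm_num) (by norm_num) hs0.le (by positivity)
    refine h.trans ?_
    rw [show s / (8 / 9) = (9 / 8) * s by ring, show 2 * ρ / (1 - 8 / 9) = 18 * ρ by ring,
      Real.mul_rpow (by norm_num) hs0.le, Real.mul_rpow (by norm_num) hρ.le, hsq]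
    have a1 : (9 / 8 : ℝ) ^ (1 + p) ≤ (9 / 8) ^ (2 : ℝ) :=
      Real.rpow_le_rpow_of_exponent_le (by norm_num) (by linarith)
    have a2 : (18 : ℝ) ^ (1 + p) ≤ 81 * 2 ^ (2 * p) := by
      rw [show (18 : ℝ) = (9 / 2) * 4 by norm_num, Real.mul_rpow (by norm_num) (by norm_num)]
      have b1 : (9 / 2 : ℝ) ^ (1 + p) ≤ (9 / 2) ^ (2 : ℝ) :=
        Real.rpow_le_rpow_of_exponent_le (by norm_num) (by linarith)
      have b2 : (4 : ℝ) ^ (1 + p) = 4 * 2 ^ (2 * p) := by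
        rw [Real.rpow_add (by norm_num), Real.rpow_one, Real.rpow_mul (by norm_num)]
        norm_num
      rw [b2]
      have b3 : (9 / 2 : ℝ) ^ (2 : ℝ) = 81 / 4 := by norm_num
      rw [b3] at b1
      have : (0 : ℝ) < 2 ^ (2 * p) := by positivity
      nlinarith
    have a3 : (2 : ℝ) ^ (2 * p + 3) = 8 * 2 ^ (2 * p) := by
      rw [Real.rpow_add (by norm_num)]; norm_num; ring
    rw [a3]
    have a4 : (9 / 8 : ℝ) ^ (2 : ℝ) = 81 / 64 := by norm_num
    rw [a4] at a1
    have hr : 0 < ρ ^ (1 + p) := by positivity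
    have c1 := mul_le_mul_of_nonneg_right a1 hu₀.le
    have c2 := mul_le_mul_of_nonneg_right a2 hr.le
    nlinarith

/-- `u^{1/(1+p)} ≥ 2ρ`: the scale of the clipped gradients dominates that of the drift. -/
lemma two_rho_le {p u₀ ρ : ℝ} (hp0 : 0 < p) (hu₀ : 0 < u₀) (hρ : 0 < ρ) :
    2 * ρ ≤ (min ((u₀ ^ (1 / (1 + p)) + 2 * ρ) ^ (1 + p))
        (u₀ + 2 ^ (2 * p + 3) * ρ ^ (1 + p))) ^ (1 / (1 + p)) := by
  have h : (2 * ρ) ^ (1 + p) ≤ min ((u₀ ^ (1 / (1 + p)) + 2 * ρ) ^ (1 + p))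
        (u₀ + 2 ^ (2 * p + 3) * ρ ^ (1 + p)) := by
    refine le_min ?_ ?_
    · gcongr
      have : 0 < u₀ ^ (1 / (1 + p)) := by positivity
      linarith
    · rw [Real.mul_rpow (by norm_num) hρ.le]
      have : (2 : ℝ) ^ (1 + p) ≤ 2 ^ (2 * p + 3) :=
        Real.rpow_le_rpow_of_exponent_le (by norm_num) (by linarith)
      have hr : 0 < ρ ^ (1 + p) := by positivity
      nlinarith
  calc 2 * ρ = ((2 * ρ) ^ (1 + p)) ^ (1 / (1 + p)) := by
        rw [← Real.rpow_mul (by positivity), mul_one_div_cancel (by positivity), Real.rpow_one]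
    _ ≤ _ := by gcongr

/-! ### The mean drift of TD learning -/

/-- The drift `⟨E[g | x], θ - Θ*⟩` of the unclipped TD step at state `x`. By realizability the
Bellman residual of `θ` is `γ P w - w` with `w = ⟨θ - Θ*, Φ ·⟩`, which makes the drift the
quadratic expression below. -/
noncomputable def tdDrift {𝕏 : Type*} [Fintype 𝕏] {d : ℕ} (P : 𝕏 → 𝕏 → ℝ) (γ : ℝ)
    (Φ : 𝕏 → EuclideanSpace ℝ (Fin d)) (Θstar : EuclideanSpace ℝ (Fin d)) (x : 𝕏)
    (θ : EuclideanSpace ℝ (Fin d)) : ℝ :=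
  (γ * ∑ x', P x x' * ⟪θ - Θstar, Φ x'⟫_ℝ - ⟪θ - Θstar, Φ x⟫_ℝ) * ⟪θ - Θstar, Φ x⟫_ℝ

lemma abs_inner_feature_le {𝕏 : Type*} {d : ℕ} {Φ : 𝕏 → EuclideanSpace ℝ (Fin d)}
    (hΦ : ∀ x, ‖Φ x‖ ≤ 1) (v : EuclideanSpace ℝ (Fin d)) (x : 𝕏) :
    |⟪v, Φ x⟫_ℝ| ≤ ‖v‖ :=
  (abs_real_inner_le_norm _ _).trans (mul_le_of_le_one_right (norm_nonneg _) (hΦ x))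

section Drift

variable {𝕏 : Type*} [Fintype 𝕏] {d : ℕ} {P : 𝕏 → 𝕏 → ℝ} {γ ρ : ℝ}
  {Φ : 𝕏 → EuclideanSpace ℝ (Fin d)} {Θstar : EuclideanSpace ℝ (Fin d)}

lemma abs_residual_le (hP0 : ∀ x x', 0 ≤ P x x') (hP1 : ∀ x, ∑ x', P x x' = 1)
    (hγ0 : 0 ≤ γ) (hγ1 : γ < 1) (hΦ : ∀ x, ‖Φ x‖ ≤ 1) (v : EuclideanSpace ℝ (Fin d)) (x : 𝕏) :
    |γ * ∑ x', P x x' * ⟪v, Φ x'⟫_ℝ - ⟪v, Φ x⟫_ℝ| ≤ 2 * ‖v‖ := by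
  have h1 : |∑ x', P x x' * ⟪v, Φ x'⟫_ℝ| ≤ ‖v‖ := by
    calc |∑ x', P x x' * ⟪v, Φ x'⟫_ℝ| ≤ ∑ x', |P x x' * ⟪v, Φ x'⟫_ℝ| :=
          Finset.abs_sum_le_sum_abs _ _
      _ ≤ ∑ x', P x x' * ‖v‖ := by
          refine Finset.sum_le_sum fun x' _ => ?_
          rw [abs_mul, abs_of_nonneg (hP0 x x')]
          exact mul_le_mul_of_nonneg_left (abs_inner_feature_le hΦ v x') (hP0 x x')
      _ = ‖v‖ := by rw [← Finset.sum_mul, hP1, one_mul]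
  calc _ ≤ |γ * ∑ x', P x x' * ⟪v, Φ x'⟫_ℝ| + |⟪v, Φ x⟫_ℝ| := abs_sub _ _
    _ ≤ 1 * ‖v‖ + ‖v‖ := by
        rw [abs_mul, abs_of_nonneg hγ0]
        exact add_le_add (mul_le_mul hγ1.le h1 (abs_nonneg _) zero_le_one)
          (abs_inner_feature_le hΦ v x)
    _ = 2 * ‖v‖ := by ring

lemma norm_sub_star_le (hΘstar : ‖Θstar‖ ≤ ρ) {θ : EuclideanSpace ℝ (Fin d)} (hθ : ‖θ‖ ≤ ρ) :
    ‖θ - Θstar‖ ≤ 2 * ρ := (norm_sub_le _ _).trans (by linarith)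

lemma abs_tdDrift_le (hP0 : ∀ x x', 0 ≤ P x x') (hP1 : ∀ x, ∑ x', P x x' = 1)
    (hγ0 : 0 ≤ γ) (hγ1 : γ < 1) (hΦ : ∀ x, ‖Φ x‖ ≤ 1) (hΘstar : ‖Θstar‖ ≤ ρ)
    {θ : EuclideanSpace ℝ (Fin d)} (hθ : ‖θ‖ ≤ ρ) (x : 𝕏) :
    |tdDrift P γ Φ Θstar x θ| ≤ 8 * ρ ^ 2 := by
  have h := norm_sub_star_le hΘstar hθ
  have h0 := norm_nonneg (θ - Θstar)
  unfold tdDrift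
  rw [abs_mul]
  calc _ ≤ (2 * ‖θ - Θstar‖) * ‖θ - Θstar‖ :=
        mul_le_mul (abs_residual_le hP0 hP1 hγ0 hγ1 hΦ _ x) (abs_inner_feature_le hΦ _ x)
          (abs_nonneg _) (by positivity)
    _ ≤ 8 * ρ ^ 2 := by nlinarith

lemma abs_tdDrift_sub_le (hP0 : ∀ x x', 0 ≤ P x x') (hP1 : ∀ x, ∑ x', P x x' = 1)
    (hγ0 : 0 ≤ γ) (hγ1 : γ < 1) (hΦ : ∀ x, ‖Φ x‖ ≤ 1) (hΘstar : ‖Θstar‖ ≤ ρ)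
    {θ θ' : EuclideanSpace ℝ (Fin d)} (hθ : ‖θ‖ ≤ ρ) (hθ' : ‖θ'‖ ≤ ρ) (x : 𝕏) :
    |tdDrift P γ Φ Θstar x θ - tdDrift P γ Φ Θstar x θ'| ≤ 8 * ρ * ‖θ - θ'‖ := by
  have h := norm_sub_star_le hΘstar hθ
  have h' := norm_sub_star_le hΘstar hθ'
  have hd : ∀ y, ⟪θ - θ', Φ y⟫_ℝ = ⟪θ - Θstar, Φ y⟫_ℝ - ⟪θ' - Θstar, Φ y⟫_ℝ := by
    intro y; rw [← inner_sub_left]; congr 1; abel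
  have e : tdDrift P γ Φ Θstar x θ - tdDrift P γ Φ Θstar x θ' =
      (γ * ∑ x', P x x' * ⟪θ - θ', Φ x'⟫_ℝ - ⟪θ - θ', Φ x⟫_ℝ) * ⟪θ - Θstar, Φ x⟫_ℝ +
      (γ * ∑ x', P x x' * ⟪θ' - Θstar, Φ x'⟫_ℝ - ⟪θ' - Θstar, Φ x⟫_ℝ) * ⟪θ - θ', Φ x⟫_ℝ := by
    unfold tdDrift
    simp only [hd, mul_sub, Finset.sum_sub_distrib]
    ring
  rw [e]
  refine (abs_add_le _ _).trans ?_
  rw [abs_mul, abs_mul]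
  have h0 := norm_nonneg (θ - θ')
  calc _ ≤ (2 * ‖θ - θ'‖) * ‖θ - Θstar‖ + (2 * ‖θ' - Θstar‖) * ‖θ - θ'‖ :=
        add_le_add
          (mul_le_mul (abs_residual_le hP0 hP1 hγ0 hγ1 hΦ _ x) (abs_inner_feature_le hΦ _ x)
            (abs_nonneg _) (by positivity))
          (mul_le_mul (abs_residual_le hP0 hP1 hγ0 hγ1 hΦ _ x) (abs_inner_feature_le hΦ _ x)
            (abs_nonneg _) (by positivity))
    _ ≤ 8 * ρ * ‖θ - θ'‖ := by nlinarith

/-- Under the stationary law the drift is at most `-(1-γ)` times the squared error, because `P`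
does not expand `L²(μ)`. -/
lemma mean_tdDrift_le {μdist : 𝕏 → ℝ} (hP0 : ∀ x x', 0 ≤ P x x')
    (hP1 : ∀ x, ∑ x', P x x' = 1) (hμ0 : ∀ x, 0 ≤ μdist x)
    (hstat : ∀ y, ∑ x, μdist x * P x y = μdist y) (hγ0 : 0 ≤ γ)
    (θ : EuclideanSpace ℝ (Fin d)) :
    (1 - γ) * ∑ x, μdist x * ⟪θ - Θstar, Φ x⟫_ℝ ^ 2 ≤
      -∑ x, μdist x * tdDrift P γ Φ Θstar x θ := by
  set w : 𝕏 → ℝ := fun x => ⟪θ - Θstar, Φ x⟫_ℝ with hw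
  have hcross : ∑ x, μdist x * ((∑ x', P x x' * w x') * w x) ≤ ∑ x, μdist x * w x ^ 2 := by
    have e1 : ∑ x, ∑ x', μdist x * P x x' * w x ^ 2 = ∑ x, μdist x * w x ^ 2 := by
      refine Finset.sum_congr rfl fun x _ => ?_
      rw [← Finset.sum_mul, ← Finset.mul_sum, hP1, mul_one]
    have e2 : ∑ x, ∑ x', μdist x * P x x' * w x' ^ 2 = ∑ x, μdist x * w x ^ 2 := by
      rw [Finset.sum_comm]
      refine Finset.sum_congr rfl fun x _ => ?_
      rw [← Finset.sum_mul, hstat]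
    have e3 : ∑ x, μdist x * ((∑ x', P x x' * w x') * w x) ≤
        ∑ x, ∑ x', (1 / 2 * (μdist x * P x x' * w x ^ 2)
          + 1 / 2 * (μdist x * P x x' * w x' ^ 2)) := by
      refine Finset.sum_le_sum fun x _ => ?_
      rw [Finset.sum_mul, Finset.mul_sum]
      refine Finset.sum_le_sum fun x' _ => ?_
      have := mul_nonneg (mul_nonneg (hμ0 x) (hP0 x x')) (sq_nonneg (w x - w x'))
      nlinarith
    simp only [Finset.sum_add_distrib, ← Finset.mul_sum, e1, e2] at e3
    linarith
  have e : ∑ x, μdist x * tdDrift P γ Φ Θstar x θ =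
      γ * ∑ x, μdist x * ((∑ x', P x x' * w x') * w x) - ∑ x, μdist x * w x ^ 2 := by
    rw [Finset.mul_sum, ← Finset.sum_sub_distrib]
    refine Finset.sum_congr rfl fun x _ => ?_
    unfold tdDrift
    simp only [hw]
    ring
  rw [e]
  nlinarith [mul_le_mul_of_nonneg_left hcross hγ0]

lemma continuous_tdDrift (x : 𝕏) : Continuous (tdDrift P γ Φ Θstar x) := by
  unfold tdDrift; fun_prop

end Drift

/-! ### Histories and measurability of the iterates -/

section History

variable {Ω 𝕏 : Type*} [mΩ : MeasurableSpace Ω] [m𝕏 : MeasurableSpace 𝕏]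
  {X : ℕ → Ω → 𝕏} {R : ℕ → Ω → ℝ}

lemma historySigma_le (hXm : ∀ t, Measurable (X t)) (hRm : ∀ t, Measurable (R t)) (s s' : ℕ) :
    historySigma m𝕏 X R s s' ≤ mΩ := by
  refine sup_le (iSup₂_le fun j _ => (hXm j).comap_le) (iSup₂_le fun j _ => ?_)
  rw [← BorelSpace.measurable_eq (α := ℝ)]
  exact (hRm j).comap_le

lemma historySigma_mono {s s' v v' : ℕ} (h : s ≤ v) (h' : s' ≤ v') :
    historySigma m𝕏 X R s s' ≤ historySigma m𝕏 X R v v' :=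
  sup_le_sup
    (biSup_mono fun j hj => by simp only [Finset.mem_Icc] at hj ⊢; omega)
    (biSup_mono fun j hj => by simp only [Finset.mem_Icc] at hj ⊢; omega)

lemma measurable_state_history {s s' j : ℕ} (h1 : 1 ≤ j) (h2 : j ≤ s) :
    Measurable[historySigma m𝕏 X R s s'] (X j) := by
  rw [measurable_iff_comap_le]
  exact (le_iSup₂ (f := fun j (_ : j ∈ Finset.Icc 1 s) => MeasurableSpace.comap (X j) m𝕏)
    j (Finset.mem_Icc.mpr ⟨h1, h2⟩)).trans le_sup_left

lemma measurable_reward_history {s s' j : ℕ} (h1 : 1 ≤ j) (h2 : j ≤ s') :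
    Measurable[historySigma m𝕏 X R s s'] (R j) := by
  rw [measurable_iff_comap_le, BorelSpace.measurable_eq (α := ℝ)]
  exact (le_iSup₂ (f := fun j (_ : j ∈ Finset.Icc 1 s') => MeasurableSpace.comap (R j) (borel ℝ))
    j (Finset.mem_Icc.mpr ⟨h1, h2⟩)).trans le_sup_right

end History

lemma measurable_tdGrad {Ω 𝕏 : Type*} [MeasurableSpace Ω] [MeasurableSpace 𝕏]
    [DiscreteMeasurableSpace 𝕏] {d : ℕ} (γ : ℝ) (Φ : 𝕏 → EuclideanSpace ℝ (Fin d))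
    {x x' : Ω → 𝕏} {R : Ω → ℝ} {θ : Ω → EuclideanSpace ℝ (Fin d)} (hx : Measurable x)
    (hx' : Measurable x') (hR : Measurable R) (hθ : Measurable θ) :
    Measurable fun ω => tdGrad γ Φ (x ω) (R ω) (x' ω) (θ ω) := by
  have h1 : Measurable fun ω => Φ (x ω) := (Measurable.of_discrete (f := Φ)).comp hx
  have h2 : Measurable fun ω => Φ (x' ω) := (Measurable.of_discrete (f := Φ)).comp hx'
  unfold tdGrad
  exact ((hR.add ((hθ.inner h2).const_mul γ)).sub (hθ.inner h1)).smul h1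

lemma measurable_clip {Ω : Type*} [MeasurableSpace Ω] {d : ℕ} (β : ℝ)
    {g : Ω → EuclideanSpace ℝ (Fin d)} (hg : Measurable g) :
    Measurable fun ω => if ‖g ω‖ ≤ β then g ω else 0 :=
  Measurable.ite (measurableSet_le hg.norm measurable_const) hg measurable_const

/-- The iterate `Θ(t)` is a function of `X_1, …, X_t` and `R_1, …, R_{t-1}`. -/
lemma measurable_iterate {Ω 𝕏 : Type*} [mΩ : MeasurableSpace Ω] [m𝕏 : MeasurableSpace 𝕏]
    [DiscreteMeasurableSpace 𝕏] {d : ℕ} {X : ℕ → Ω → 𝕏} {R : ℕ → Ω → ℝ} {γ ρ η : ℝ}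
    {Φ : 𝕏 → EuclideanSpace ℝ (Fin d)} {b : ℕ → ℝ} {T : ℕ}
    {Θ : ℕ → Ω → EuclideanSpace ℝ (Fin d)} {θ0 : EuclideanSpace ℝ (Fin d)}
    (hΘ1 : ∀ ω, Θ 1 ω = θ0)
    (hrec : ∀ t, 1 ≤ t → t ≤ T → ∀ ω, Θ (t + 1) ω =
      projBall ρ (Θ t ω + η • (if ‖tdGrad γ Φ (X t ω) (R t ω) (X (t + 1) ω) (Θ t ω)‖ ≤ b t
        then tdGrad γ Φ (X t ω) (R t ω) (X (t + 1) ω) (Θ t ω) else 0)))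
    (t : ℕ) (ht1 : 1 ≤ t) (htT : t ≤ T + 1) :
    Measurable[historySigma m𝕏 X R t (t - 1)] (Θ t) := by
  induction t, ht1 using Nat.le_induction with
  | base => rw [funext hΘ1]; exact measurable_const
  | succ t ht ih =>
    have ih' := (ih (by omega)).mono
      (historySigma_mono (by omega : t ≤ t + 1) (by omega : t - 1 ≤ t + 1 - 1)) le_rfl
    have hX := measurable_state_history (X := X) (R := R) (s := t + 1) (s' := t + 1 - 1) ht
      (by omega)
    have hX' := measurable_state_history (X := X) (R := R) (s := t + 1) (s' := t + 1 - 1)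
      (j := t + 1) (by omega) le_rfl
    have hR := measurable_reward_history (X := X) (R := R) (s := t + 1) (s' := t + 1 - 1) ht
      (by omega)
    rw [funext (hrec t ht (by omega))]
    let : MeasurableSpace Ω := historySigma m𝕏 X R (t + 1) (t + 1 - 1)
    exact (measurable_projBall ρ).comp
      (ih'.add ((measurable_clip (b t) (measurable_tdGrad γ Φ hX hX' hR ih')).const_smul η))

/-! ### Conditional expectations along the chain -/

lemma integral_mul_eq_of_condExp {Ω : Type*} {m mΩ : MeasurableSpace Ω} {ℙ : Measure Ω}
    [IsProbabilityMeasure ℙ] (hm : m ≤ mΩ) {Z F G : Ω → ℝ} {C : ℝ} (hZ : Measurable[m] Z)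
    (hZC : ∀ ω, |Z ω| ≤ C) (hF : Integrable F ℙ) (hG : ℙ[F|m] =ᵐ[ℙ] G) :
    ∫ ω, Z ω * F ω ∂ℙ = ∫ ω, Z ω * G ω ∂ℙ := by
  have hZF : Integrable (Z * F) ℙ :=
    hF.bdd_mul (hZ.mono hm le_rfl).aestronglyMeasurable
      (Filter.Eventually.of_forall fun ω => hZC ω)
  have h := condExp_mul_of_stronglyMeasurable_left (μ := ℙ) hZ.stronglyMeasurable hZF hF
  calc ∫ ω, Z ω * F ω ∂ℙ = ∫ ω, (ℙ[Z * F|m]) ω ∂ℙ := (integral_condExp hm).symm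
    _ = ∫ ω, Z ω * G ω ∂ℙ := by
        refine integral_congr_ae ?_
        filter_upwards [h, hG] with ω h1 h2
        rw [h1, Pi.mul_apply, h2]

lemma integrable_comp_state {Ω 𝕏 : Type*} [MeasurableSpace Ω] {ℙ : Measure Ω}
    [IsProbabilityMeasure ℙ] [Fintype 𝕏] [MeasurableSpace 𝕏] [DiscreteMeasurableSpace 𝕏]
    {Y : Ω → 𝕏} (hY : Measurable Y) (f : 𝕏 → ℝ) : Integrable (fun ω => f (Y ω)) ℙ := by
  refine Integrable.of_bound ((Measurable.of_discrete (f := f)).comp hY).aestronglyMeasurable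
    (∑ x, |f x|) (Filter.Eventually.of_forall fun ω => ?_)
  exact Finset.single_le_sum (f := fun x => |f x|) (fun x _ => abs_nonneg _)
    (Finset.mem_univ (Y ω))

section Markov

variable {Ω 𝕏 : Type*} [mΩ : MeasurableSpace Ω] {ℙ : Measure Ω} [IsProbabilityMeasure ℙ]
  [Fintype 𝕏] [DecidableEq 𝕏] [m𝕏 : MeasurableSpace 𝕏] [DiscreteMeasurableSpace 𝕏]
  {P : 𝕏 → 𝕏 → ℝ} {X : ℕ → Ω → 𝕏} {R : ℕ → Ω → ℝ}

/-- The `k`-step Markov property, tested against a bounded function of the history. -/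
lemma integral_mul_state (hXm : ∀ t, Measurable (X t)) (hRm : ∀ t, Measurable (R t))
    (hchain : ∀ t, 1 ≤ t → ∀ f : 𝕏 → ℝ,
      ℙ[fun ω => f (X (t + 1) ω)|historySigma m𝕏 X R t (t - 1)]
        =ᵐ[ℙ] fun ω => ∑ x', P (X t ω) x' * f x')
    {s : ℕ} (hs : 1 ≤ s) {Z : Ω → ℝ} {C : ℝ}
    (hZ : Measurable[historySigma m𝕏 X R s (s - 1)] Z) (hZC : ∀ ω, |Z ω| ≤ C)
    (k : ℕ) (f : 𝕏 → ℝ) :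
    ∫ ω, Z ω * f (X (s + k) ω) ∂ℙ =
      ∫ ω, Z ω * ((Matrix.of P) ^ k).mulVec f (X s ω) ∂ℙ := by
  induction k generalizing f with
  | zero => simp
  | succ k ih =>
    have h := integral_mul_eq_of_condExp (historySigma_le hXm hRm (s + k) (s + k - 1))
      (hZ.mono (historySigma_mono (by omega) (by omega)) le_rfl) hZC
      (integrable_comp_state (hXm (s + k + 1)) f) (hchain (s + k) (by omega) f)
    rw [← add_assoc, h]
    have h2 := ih ((Matrix.of P).mulVec f)
    rw [Matrix.mulVec_mulVec, ← pow_succ] at h2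
    rw [← h2]
    rfl

/-- The `k`-step Markov property for an integrand depending jointly on `X_{s+k}` and on the
history up to time `s`. -/
lemma integral_kernel (hXm : ∀ t, Measurable (X t)) (hRm : ∀ t, Measurable (R t))
    (hchain : ∀ t, 1 ≤ t → ∀ f : 𝕏 → ℝ,
      ℙ[fun ω => f (X (t + 1) ω)|historySigma m𝕏 X R t (t - 1)]
        =ᵐ[ℙ] fun ω => ∑ x', P (X t ω) x' * f x')
    {s : ℕ} (hs : 1 ≤ s) {K : 𝕏 → Ω → ℝ} {C : ℝ}
    (hK : ∀ y, Measurable[historySigma m𝕏 X R s (s - 1)] (K y)) (hKC : ∀ y ω, |K y ω| ≤ C)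
    (k : ℕ) :
    ∫ ω, K (X (s + k) ω) ω ∂ℙ = ∫ ω, ∑ y, ((Matrix.of P) ^ k) (X s ω) y * K y ω ∂ℙ := by
  have hKa : ∀ y, AEStronglyMeasurable (K y) ℙ := fun y =>
    ((hK y).mono (historySigma_le hXm hRm _ _) le_rfl).aestronglyMeasurable
  have hI : ∀ (y : 𝕏) (v : ℕ) (f : 𝕏 → ℝ), Integrable (fun ω => K y ω * f (X v ω)) ℙ :=
    fun y v f => (integrable_comp_state (hXm v) f).bdd_mul (hKa y)
      (Filter.Eventually.of_forall fun ω => hKC y ω)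
  have e1 : ∀ ω, K (X (s + k) ω) ω =
      ∑ y, K y ω * (Pi.single y 1 : 𝕏 → ℝ) (X (s + k) ω) := by
    intro ω
    simp [Pi.single_apply]
  have e2 : ∀ ω, ∑ y, ((Matrix.of P) ^ k) (X s ω) y * K y ω =
      ∑ y, K y ω * ((Matrix.of P) ^ k).mulVec (Pi.single y 1) (X s ω) := by
    intro ω
    refine Finset.sum_congr rfl fun y _ => ?_
    rw [Matrix.mulVec_single_one, Matrix.col_apply, mul_comm]
  simp_rw [e1, e2]
  rw [integral_finsetSum _ fun y _ => hI y _ _, integral_finsetSum _ fun y _ => hI y _ _]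
  exact Finset.sum_congr rfl fun y _ => integral_mul_state hXm hRm hchain hs (hK y) (hKC y) k _

end Markov

lemma stationary_pow {𝕏 : Type*} [Fintype 𝕏] [DecidableEq 𝕏] {P : 𝕏 → 𝕏 → ℝ} {μdist : 𝕏 → ℝ}
    (hstat : ∀ y, ∑ x, μdist x * P x y = μdist y) (k : ℕ) (y : 𝕏) :
    ∑ x, μdist x * ((Matrix.of P) ^ k) x y = μdist y := by
  suffices h : Matrix.vecMul μdist ((Matrix.of P) ^ k) = μdist from congrFun h y
  induction k with
  | zero => simp
  | succ k ih =>
    rw [pow_succ, ← Matrix.vecMul_vecMul, ih]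
    exact funext hstat

/-! ### From stochastic gradients to the stationary drift -/

lemma measurable_feature {Ω 𝕏 : Type*} [MeasurableSpace 𝕏] [DiscreteMeasurableSpace 𝕏] {d : ℕ}
    {m : MeasurableSpace Ω} {Y : Ω → 𝕏} (hY : Measurable[m] Y)
    (Φ : 𝕏 → EuclideanSpace ℝ (Fin d)) : Measurable[m] fun ω => Φ (Y ω) :=
  (Measurable.of_discrete (f := Φ)).comp hY

lemma measurable_tdDrift_comp {Ω 𝕏 : Type*} [Fintype 𝕏] [MeasurableSpace 𝕏]
    [DiscreteMeasurableSpace 𝕏] {P : 𝕏 → 𝕏 → ℝ} {d : ℕ} {γ : ℝ}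
    {Φ : 𝕏 → EuclideanSpace ℝ (Fin d)} {Θstar : EuclideanSpace ℝ (Fin d)} {m : MeasurableSpace Ω}
    {Y : Ω → 𝕏} {θ : Ω → EuclideanSpace ℝ (Fin d)} (hY : Measurable[m] Y) (hθ : Measurable[m] θ) :
    Measurable[m] fun ω => tdDrift P γ Φ Θstar (Y ω) (θ ω) := by
  unfold tdDrift
  have h : ∀ {Y' : Ω → 𝕏}, Measurable[m] Y' →
      Measurable[m] fun ω => ⟪θ ω - Θstar, Φ (Y' ω)⟫_ℝ := fun hY' =>
    (hθ.sub_const Θstar).inner (measurable_feature hY' Φ)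
  have hP : ∀ x', Measurable[m] fun ω => P (Y ω) x' := fun x' =>
    (Measurable.of_discrete (f := fun x => P x x')).comp hY
  exact (((Finset.measurable_sum _ fun x' _ => (hP x').mul (h measurable_const)).const_mul γ).sub
    (h hY)).mul (h hY)

/-- The TD residual is at most `|R| + 2ρ`, hence so is the norm of the gradient. -/
lemma norm_tdGrad_le {𝕏 : Type*} {d : ℕ} {γ ρ : ℝ} {Φ : 𝕏 → EuclideanSpace ℝ (Fin d)}
    (hγ0 : 0 ≤ γ) (hγ1 : γ < 1) (hΦ : ∀ x, ‖Φ x‖ ≤ 1)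
    {θ : EuclideanSpace ℝ (Fin d)} (hθ : ‖θ‖ ≤ ρ) (x x' : 𝕏) (v : ℝ) :
    ‖tdGrad γ Φ x v x' θ‖ ≤ |v| + 2 * ρ := by
  unfold tdGrad
  rw [norm_smul, Real.norm_eq_abs]
  refine (mul_le_of_le_one_right (abs_nonneg _) (hΦ x)).trans ?_
  have h1 := (abs_inner_feature_le hΦ θ x).trans hθ
  have h2 := (abs_inner_feature_le hΦ θ x').trans hθ
  have h3 : |γ * ⟪θ, Φ x'⟫_ℝ| ≤ ρ := by
    rw [abs_mul, abs_of_nonneg hγ0]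
    exact (mul_le_of_le_one_left (abs_nonneg _) hγ1.le).trans h2
  calc _ ≤ |v + γ * ⟪θ, Φ x'⟫_ℝ| + |⟪θ, Φ x⟫_ℝ| := abs_sub _ _
    _ ≤ (|v| + |γ * ⟪θ, Φ x'⟫_ℝ|) + |⟪θ, Φ x⟫_ℝ| := by gcongr; exact abs_add_le _ _
    _ ≤ |v| + 2 * ρ := by linarith

section Noise

variable {Ω 𝕏 : Type*} [mΩ : MeasurableSpace Ω] {ℙ : Measure Ω} [IsProbabilityMeasure ℙ]
  [Fintype 𝕏] [DecidableEq 𝕏] [m𝕏 : MeasurableSpace 𝕏] [DiscreteMeasurableSpace 𝕏]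
  {P : 𝕏 → 𝕏 → ℝ} {X : ℕ → Ω → 𝕏} {R : ℕ → Ω → ℝ} {d : ℕ} {γ ρ : ℝ}
  {Φ : 𝕏 → EuclideanSpace ℝ (Fin d)} {Θstar : EuclideanSpace ℝ (Fin d)}

/-- Averaging over `R_t` and then over `X_{t+1}` turns the unclipped gradient into the drift. -/
lemma integral_inner_tdGrad (hγ0 : 0 ≤ γ) (hγ1 : γ < 1) {r V : 𝕏 → ℝ}
    (hV : ∀ x, V x = r x + γ * ∑ x', P x x' * V x') (hΦ : ∀ x, ‖Φ x‖ ≤ 1)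
    (hΘstar : ‖Θstar‖ ≤ ρ) (hreal : ∀ x, V x = ⟪Θstar, Φ x⟫_ℝ)
    (hXm : ∀ t, Measurable (X t)) (hRm : ∀ t, Measurable (R t))
    (hchain : ∀ t, 1 ≤ t → ∀ f : 𝕏 → ℝ,
      ℙ[fun ω => f (X (t + 1) ω)|historySigma m𝕏 X R t (t - 1)]
        =ᵐ[ℙ] fun ω => ∑ x', P (X t ω) x' * f x')
    {t : ℕ} (ht : 1 ≤ t) (hRint : Integrable (R t) ℙ)
    (hRmean : ℙ[R t|historySigma m𝕏 X R (t + 1) (t - 1)] =ᵐ[ℙ] fun ω => r (X t ω))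
    {θ : Ω → EuclideanSpace ℝ (Fin d)} (hθm : Measurable[historySigma m𝕏 X R t (t - 1)] θ)
    (hθ : ∀ ω, ‖θ ω‖ ≤ ρ) :
    ∫ ω, ⟪tdGrad γ Φ (X t ω) (R t ω) (X (t + 1) ω) (θ ω), θ ω - Θstar⟫_ℝ ∂ℙ =
      ∫ ω, tdDrift P γ Φ Θstar (X t ω) (θ ω) ∂ℙ := by
  set W : Ω → ℝ := fun ω => ⟪θ ω - Θstar, Φ (X t ω)⟫_ℝ with hW
  have hρ0 : 0 ≤ ρ := (norm_nonneg _).trans hΘstar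
  have hle := historySigma_le (X := X) (R := R) hXm hRm t (t - 1)
  have hXt := measurable_state_history (X := X) (R := R) (s := t) (s' := t - 1) ht le_rfl
  have hWm : Measurable[historySigma m𝕏 X R t (t - 1)] W :=
    (hθm.sub_const Θstar).inner (measurable_feature hXt Φ)
  have hWb : ∀ ω, |W ω| ≤ 2 * ρ := fun ω =>
    (abs_inner_feature_le hΦ _ _).trans (norm_sub_star_le hΘstar (hθ ω))
  have hfb : ∀ ω x, |⟪θ ω, Φ x⟫_ℝ| ≤ ρ := fun ω x => (abs_inner_feature_le hΦ _ _).trans (hθ ω)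
  -- the bootstrap part of `⟨g_t, θ - Θ*⟩`, as a function of the next state `y`
  set K : 𝕏 → Ω → ℝ := fun y ω => γ * W ω * ⟪θ ω, Φ y⟫_ℝ with hK
  have hKm : ∀ y, Measurable[historySigma m𝕏 X R t (t - 1)] (K y) := fun y =>
    (hWm.const_mul γ).mul (hθm.inner measurable_const)
  have hWf : ∀ ω y, |W ω * ⟪θ ω, Φ y⟫_ℝ| ≤ 2 * ρ * ρ := fun ω y => by
    rw [abs_mul]; exact mul_le_mul (hWb ω) (hfb ω y) (abs_nonneg _) (by positivity)
  have hKb : ∀ y ω, |K y ω| ≤ 2 * ρ * ρ := fun y ω => by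
    simp only [hK]
    rw [mul_assoc, abs_mul, abs_of_nonneg hγ0]
    exact (mul_le_of_le_one_left (abs_nonneg _) hγ1.le).trans (hWf ω y)
  have hWm' := hWm.mono hle le_rfl
  have hθm' := hθm.mono hle le_rfl
  have i1 : Integrable (fun ω => W ω * R t ω) ℙ := hRint.bdd_mul hWm'.aestronglyMeasurable
    (Filter.Eventually.of_forall hWb)
  have i1' : Integrable (fun ω => W ω * r (X t ω)) ℙ :=
    (integrable_comp_state (hXm t) r).bdd_mul hWm'.aestronglyMeasurable
      (Filter.Eventually.of_forall hWb)
  have i2 : Integrable (fun ω => K (X (t + 1) ω) ω) ℙ := by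
    refine Integrable.of_bound ?_ (2 * ρ * ρ) (Filter.Eventually.of_forall fun ω => hKb _ ω)
    exact ((hWm'.const_mul γ).mul
      (hθm'.inner (measurable_feature (hXm (t + 1)) Φ))).aestronglyMeasurable
  have i2' : Integrable (fun ω => ∑ y, ((Matrix.of P) ^ 1) (X t ω) y * K y ω) ℙ := by
    refine integrable_finsetSum _ fun y _ => ?_
    refine Integrable.mul_bdd (c := 2 * ρ * ρ)
      (integrable_comp_state (hXm t) (fun x => ((Matrix.of P) ^ 1) x y))
      ((hKm y).mono hle le_rfl).aestronglyMeasurable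
      (Filter.Eventually.of_forall fun ω => hKb y ω)
  have i3 : Integrable (fun ω => W ω * ⟪θ ω, Φ (X t ω)⟫_ℝ) ℙ := by
    refine Integrable.of_bound ?_ (2 * ρ * ρ) (Filter.Eventually.of_forall fun ω => hWf ω _)
    exact (hWm'.mul (hθm'.inner (measurable_feature (hXm t) Φ))).aestronglyMeasurable
  have i12 : Integrable (fun ω => W ω * R t ω + K (X (t + 1) ω) ω) ℙ := i1.add i2
  have i12' : Integrable (fun ω => W ω * r (X t ω)
      + ∑ y, ((Matrix.of P) ^ 1) (X t ω) y * K y ω) ℙ := i1'.add i2'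
  have j1 : ∫ ω, W ω * R t ω ∂ℙ = ∫ ω, W ω * r (X t ω) ∂ℙ :=
    integral_mul_eq_of_condExp (historySigma_le hXm hRm (t + 1) (t - 1))
      (hWm.mono (historySigma_mono (by omega) le_rfl) le_rfl) hWb hRint hRmean
  have j2 := integral_kernel hXm hRm hchain ht hKm hKb 1
  calc _ = ∫ ω, (W ω * R t ω + K (X (t + 1) ω) ω - W ω * ⟪θ ω, Φ (X t ω)⟫_ℝ) ∂ℙ := by
        congr 1; funext ω
        simp only [tdGrad, real_inner_smul_left, hK, hW]
        rw [real_inner_comm (θ ω - Θstar)]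
        ring
    _ = ∫ ω, (W ω * r (X t ω) + ∑ y, ((Matrix.of P) ^ 1) (X t ω) y * K y ω
          - W ω * ⟪θ ω, Φ (X t ω)⟫_ℝ) ∂ℙ := by
        rw [integral_sub i12 i3, integral_add i1 i2, j1, j2,
          integral_sub i12' i3, integral_add i1' i2']
    _ = _ := by
        congr 1; funext ω
        have hr : r (X t ω) = ⟪Θstar, Φ (X t ω)⟫_ℝ
            - γ * ∑ x', P (X t ω) x' * ⟪Θstar, Φ x'⟫_ℝ := by
          have := hV (X t ω)
          simp only [hreal] at this
          linarith
        have hs : ∑ y, ((Matrix.of P) ^ 1) (X t ω) y * K y ω =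
            γ * W ω * ∑ y, P (X t ω) y * ⟪θ ω, Φ y⟫_ℝ := by
          rw [Finset.mul_sum]
          refine Finset.sum_congr rfl fun y _ => ?_
          simp only [pow_one, Matrix.of_apply, hK]
          ring
        rw [hr, hs]
        simp only [tdDrift, hW, inner_sub_left, mul_sub, Finset.sum_sub_distrib]
        ring

/-- Replacing `θ` by another parameter `θ'` costs `16ρ E‖θ - θ'‖` in the gap between the drift along
the chain and the stationary drift. -/
lemma drift_gap_le (hP0 : ∀ x x', 0 ≤ P x x') (hP1 : ∀ x, ∑ x', P x x' = 1)
    {μdist : 𝕏 → ℝ} (hμ0 : ∀ x, 0 ≤ μdist x) (hμ1 : ∑ x, μdist x = 1)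
    (hγ0 : 0 ≤ γ) (hγ1 : γ < 1) (hΦ : ∀ x, ‖Φ x‖ ≤ 1) (hΘstar : ‖Θstar‖ ≤ ρ)
    {Y : Ω → 𝕏} (hY : Measurable Y) {θ θ' : Ω → EuclideanSpace ℝ (Fin d)}
    (hθm : Measurable θ) (hθ'm : Measurable θ')
    (hθ : ∀ ω, ‖θ ω‖ ≤ ρ) (hθ' : ∀ ω, ‖θ' ω‖ ≤ ρ) {ε δ : ℝ}
    (hε : ∫ ω, tdDrift P γ Φ Θstar (Y ω) (θ' ω) ∂ℙ ≤
      ∫ ω, ∑ x, μdist x * tdDrift P γ Φ Θstar x (θ' ω) ∂ℙ + ε)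
    (hδ : ∫ ω, ‖θ ω - θ' ω‖ ∂ℙ ≤ δ) :
    ∫ ω, tdDrift P γ Φ Θstar (Y ω) (θ ω) ∂ℙ ≤
      ∫ ω, ∑ x, μdist x * tdDrift P γ Φ Θstar x (θ ω) ∂ℙ + (ε + 16 * ρ * δ) := by
  have hρ0 : 0 ≤ ρ := (norm_nonneg _).trans hΘstar
  have iD : ∀ {Z : Ω → 𝕏} {ϑ : Ω → EuclideanSpace ℝ (Fin d)}, Measurable Z → Measurable ϑ →
      (∀ ω, ‖ϑ ω‖ ≤ ρ) → Integrable (fun ω => tdDrift P γ Φ Θstar (Z ω) (ϑ ω)) ℙ :=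
    fun hZ hϑm hϑ => Integrable.of_bound (measurable_tdDrift_comp hZ hϑm).aestronglyMeasurable
      (8 * ρ ^ 2) (Filter.Eventually.of_forall fun ω =>
        abs_tdDrift_le hP0 hP1 hγ0 hγ1 hΦ hΘstar (hϑ ω) _)
  have iS : ∀ {ϑ : Ω → EuclideanSpace ℝ (Fin d)}, Measurable ϑ → (∀ ω, ‖ϑ ω‖ ≤ ρ) →
      Integrable (fun ω => ∑ x, μdist x * tdDrift P γ Φ Θstar x (ϑ ω)) ℙ :=
    fun hϑm hϑ => integrable_finsetSum _ fun x _ =>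
      (iD (Z := fun _ => x) measurable_const hϑm hϑ).const_mul _
  have iN : Integrable (fun ω => ‖θ ω - θ' ω‖) ℙ := by
    refine Integrable.of_bound (hθm.sub hθ'm).norm.aestronglyMeasurable (2 * ρ)
      (Filter.Eventually.of_forall fun ω => ?_)
    rw [norm_norm]
    exact norm_sub_star_le (hθ' ω) (hθ ω)
  have hpt : ∀ ω, tdDrift P γ Φ Θstar (Y ω) (θ ω) ≤
      (tdDrift P γ Φ Θstar (Y ω) (θ' ω) - ∑ x, μdist x * tdDrift P γ Φ Θstar x (θ' ω)) +
      (∑ x, μdist x * tdDrift P γ Φ Θstar x (θ ω) + 16 * ρ * ‖θ ω - θ' ω‖) := by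
    intro ω
    have h1 : ∀ x, |tdDrift P γ Φ Θstar x (θ ω) - tdDrift P γ Φ Θstar x (θ' ω)| ≤
        8 * ρ * ‖θ ω - θ' ω‖ := fun x =>
      abs_tdDrift_sub_le hP0 hP1 hγ0 hγ1 hΦ hΘstar (hθ ω) (hθ' ω) x
    have h2 : ∑ x, μdist x * tdDrift P γ Φ Θstar x (θ' ω) ≤
        ∑ x, μdist x * tdDrift P γ Φ Θstar x (θ ω) + 8 * ρ * ‖θ ω - θ' ω‖ := by
      calc _ ≤ ∑ x, (μdist x * tdDrift P γ Φ Θstar x (θ ω)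
            + μdist x * (8 * ρ * ‖θ ω - θ' ω‖)) := by
            refine Finset.sum_le_sum fun x _ => ?_
            rw [← mul_add]
            exact mul_le_mul_of_nonneg_left (by linarith [(abs_le.mp (h1 x)).1]) (hμ0 x)
        _ = _ := by rw [Finset.sum_add_distrib, ← Finset.sum_mul, hμ1, one_mul]
    linarith [(abs_le.mp (h1 (Y ω))).2]
  have i1 : Integrable (fun ω => tdDrift P γ Φ Θstar (Y ω) (θ' ω)
      - ∑ x, μdist x * tdDrift P γ Φ Θstar x (θ' ω)) ℙ := (iD hY hθ'm hθ').sub (iS hθ'm hθ')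
  have i2 : Integrable (fun ω => ∑ x, μdist x * tdDrift P γ Φ Θstar x (θ ω)
      + 16 * ρ * ‖θ ω - θ' ω‖) ℙ := (iS hθm hθ).add (iN.const_mul (16 * ρ))
  have hI := integral_mono (iD hY hθm hθ) (i1.add i2) hpt
  simp only [Pi.add_apply] at hI
  rw [integral_add i1 i2, integral_sub (iD hY hθ'm hθ') (iS hθ'm hθ'),
    integral_add (iS hθm hθ) (iN.const_mul (16 * ρ)), integral_const_mul] at hI
  have : 16 * ρ * ∫ ω, ‖θ ω - θ' ω‖ ∂ℙ ≤ 16 * ρ * δ := by gcongr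
  linarith

/-- After `k` steps the chain is within total variation `ε` of stationarity, whatever the
history; so the drift at a parameter frozen `k` steps earlier is nearly the stationary one. -/
lemma frozen_drift_le_of_mixing (hP0 : ∀ x x', 0 ≤ P x x') (hP1 : ∀ x, ∑ x', P x x' = 1)
    {μdist : 𝕏 → ℝ} (hγ0 : 0 ≤ γ) (hγ1 : γ < 1) (hΦ : ∀ x, ‖Φ x‖ ≤ 1) (hΘstar : ‖Θstar‖ ≤ ρ)
    (hXm : ∀ t, Measurable (X t)) (hRm : ∀ t, Measurable (R t))
    (hchain : ∀ t, 1 ≤ t → ∀ f : 𝕏 → ℝ,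
      ℙ[fun ω => f (X (t + 1) ω)|historySigma m𝕏 X R t (t - 1)]
        =ᵐ[ℙ] fun ω => ∑ x', P (X t ω) x' * f x')
    {s k : ℕ} (hs : 1 ≤ s) {θ : Ω → EuclideanSpace ℝ (Fin d)}
    (hθm : Measurable[historySigma m𝕏 X R s (s - 1)] θ) (hθ : ∀ ω, ‖θ ω‖ ≤ ρ) {ε : ℝ}
    (hTV : ∀ x, (1 / 2) * ∑ y, |((Matrix.of P) ^ k) x y - μdist y| ≤ ε) :
    ∫ ω, tdDrift P γ Φ Θstar (X (s + k) ω) (θ ω) ∂ℙ ≤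
      ∫ ω, ∑ x, μdist x * tdDrift P γ Φ Θstar x (θ ω) ∂ℙ + 16 * ρ ^ 2 * ε := by
  have hle := historySigma_le (X := X) (R := R) hXm hRm s (s - 1)
  have hb : ∀ y ω, |tdDrift P γ Φ Θstar y (θ ω)| ≤ 8 * ρ ^ 2 := fun y ω =>
    abs_tdDrift_le hP0 hP1 hγ0 hγ1 hΦ hΘstar (hθ ω) y
  have hKm : ∀ y, Measurable[historySigma m𝕏 X R s (s - 1)]
      fun ω => tdDrift P γ Φ Θstar y (θ ω) := fun y =>
    measurable_tdDrift_comp (Y := fun _ => y) measurable_const hθm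
  have iD : ∀ y, Integrable (fun ω => tdDrift P γ Φ Θstar y (θ ω)) ℙ := fun y =>
    Integrable.of_bound ((hKm y).mono hle le_rfl).aestronglyMeasurable
      (8 * ρ ^ 2) (Filter.Eventually.of_forall fun ω => hb y ω)
  have iS : Integrable (fun ω => ∑ x, μdist x * tdDrift P γ Φ Θstar x (θ ω)) ℙ :=
    integrable_finsetSum _ fun x _ => (iD x).const_mul _
  have iM : Integrable (fun ω => ∑ y, ((Matrix.of P) ^ k) (X s ω) y *
      tdDrift P γ Φ Θstar y (θ ω)) ℙ := by
    refine integrable_finsetSum _ fun y _ => ?_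
    exact Integrable.mul_bdd (c := 8 * ρ ^ 2)
      (integrable_comp_state (hXm s) (fun x => ((Matrix.of P) ^ k) x y))
      ((hKm y).mono hle le_rfl).aestronglyMeasurable
      (Filter.Eventually.of_forall fun ω => hb y ω)
  rw [integral_kernel hXm hRm hchain hs (K := fun y ω => tdDrift P γ Φ Θstar y (θ ω)) hKm hb k]
  have hpt : ∀ ω, ∑ y, ((Matrix.of P) ^ k) (X s ω) y * tdDrift P γ Φ Θstar y (θ ω) ≤
      ∑ x, μdist x * tdDrift P γ Φ Θstar x (θ ω) + 16 * ρ ^ 2 * ε := by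
    intro ω
    have h1 : ∑ y, ((Matrix.of P) ^ k) (X s ω) y * tdDrift P γ Φ Θstar y (θ ω) -
        ∑ x, μdist x * tdDrift P γ Φ Θstar x (θ ω) ≤
        ∑ y, |((Matrix.of P) ^ k) (X s ω) y - μdist y| * (8 * ρ ^ 2) := by
      rw [← Finset.sum_sub_distrib]
      refine Finset.sum_le_sum fun y _ => ?_
      rw [← sub_mul]
      refine (le_abs_self _).trans ?_
      rw [abs_mul]
      exact mul_le_mul_of_nonneg_left (hb y ω) (abs_nonneg _)
    rw [← Finset.sum_mul] at h1
    nlinarith [hTV (X s ω), sq_nonneg ρ]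
  refine (integral_mono iM (iS.add (integrable_const _)) hpt).trans_eq ?_
  simp only [Pi.add_apply]
  rw [integral_add iS (integrable_const _)]
  simp

/-- The chain starts in its stationary law, so every `X_{1+k}` has law `μ`. At a deterministic
parameter the expected drift is therefore exactly the stationary one. -/
lemma frozen_drift_eq_of_const {μdist : 𝕏 → ℝ}
    (hstat : ∀ y, ∑ x, μdist x * P x y = μdist y)
    (hXm : ∀ t, Measurable (X t)) (hRm : ∀ t, Measurable (R t))
    (hX1law : ∀ f : 𝕏 → ℝ, ∫ ω, f (X 1 ω) ∂ℙ = ∑ x, μdist x * f x)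
    (hchain : ∀ t, 1 ≤ t → ∀ f : 𝕏 → ℝ,
      ℙ[fun ω => f (X (t + 1) ω)|historySigma m𝕏 X R t (t - 1)]
        =ᵐ[ℙ] fun ω => ∑ x', P (X t ω) x' * f x')
    (k : ℕ) (f : 𝕏 → ℝ) : ∫ ω, f (X (1 + k) ω) ∂ℙ = ∑ x, μdist x * f x := by
  have h := integral_mul_state (ℙ := ℙ) hXm hRm hchain le_rfl (Z := fun _ => 1) (C := 1)
    measurable_const (by simp) k f
  simp only [one_mul] at h
  rw [h, hX1law]
  simp only [Matrix.mulVec, dotProduct, Finset.mul_sum]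
  rw [Finset.sum_comm]
  refine Finset.sum_congr rfl fun y _ => ?_
  simp only [← mul_assoc]
  rw [← Finset.sum_mul, stationary_pow hstat]

end Noise

/-! ### Clipping, telescoping and the final arithmetic -/

lemma norm_clip_le {d : ℕ} {β : ℝ} (hβ : 0 < β) (g : EuclideanSpace ℝ (Fin d)) :
    ‖(if ‖g‖ ≤ β then g else 0)‖ ≤ β := by
  split_ifs with h
  · exact h
  · simpa using hβ.le

lemma norm_clip_le_norm {d : ℕ} (β : ℝ) (g : EuclideanSpace ℝ (Fin d)) :
    ‖(if ‖g‖ ≤ β then g else 0)‖ ≤ ‖g‖ := by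
  split_ifs with h
  · exact le_rfl
  · simp

/-- The second moment of a clipped gradient is controlled by its `(1+p)`-th moment. -/
lemma norm_clip_sq_le {d : ℕ} {p β y : ℝ} (hp0 : 0 < p) (hp1 : p ≤ 1) (hβ : 0 < β)
    {g : EuclideanSpace ℝ (Fin d)} (hg : ‖g‖ ≤ y) :
    ‖(if ‖g‖ ≤ β then g else 0)‖ ^ 2 ≤ β ^ (1 - p) * y ^ (1 + p) := by
  have h1 := norm_clip_le hβ g
  have h2 := (norm_clip_le_norm β g).trans hg
  set n := ‖(if ‖g‖ ≤ β then g else 0)‖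
  have hn : 0 ≤ n := norm_nonneg _
  calc n ^ 2 = n ^ ((1 - p) + (1 + p)) := by
        rw [show (1 - p) + (1 + p) = ((2 : ℕ) : ℝ) by push_cast; ring, Real.rpow_natCast]
    _ = n ^ (1 - p) * n ^ (1 + p) :=
        Real.rpow_add_of_nonneg hn (by linarith) (by linarith)
    _ ≤ β ^ (1 - p) * y ^ (1 + p) :=
        mul_le_mul (Real.rpow_le_rpow hn h1 (by linarith))
          (Real.rpow_le_rpow hn h2 (by linarith)) (by positivity) (by positivity)

/-- The bias introduced by clipping is controlled by the `(1+p)`-th moment. -/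
lemma inner_clip_sub_le {d : ℕ} {p β y c : ℝ} (hp0 : 0 < p) (hβ : 0 < β)
    {g e : EuclideanSpace ℝ (Fin d)} (hg : ‖g‖ ≤ y) (he : ‖e‖ ≤ c) :
    ⟪(if ‖g‖ ≤ β then g else 0), e⟫_ℝ - ⟪g, e⟫_ℝ ≤ c * β ^ (-p) * y ^ (1 + p) := by
  have hc : 0 ≤ c := (norm_nonneg _).trans he
  have hy : 0 ≤ y := (norm_nonneg _).trans hg
  split_ifs with h
  · rw [sub_self]; positivity
  · have hβy : β ≤ y := (not_le.mp h).le.trans hg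
    have hy0 : 0 < y := hβ.trans_le hβy
    rw [inner_zero_left, zero_sub]
    calc -⟪g, e⟫_ℝ ≤ ‖g‖ * ‖e‖ := (neg_le_abs _).trans (abs_real_inner_le_norm _ _)
      _ ≤ y * c := mul_le_mul hg he (norm_nonneg _) hy
      _ = c * y ^ (-p) * y ^ (1 + p) := by
          rw [mul_assoc, ← Real.rpow_add hy0]; simp [mul_comm]
      _ ≤ c * β ^ (-p) * y ^ (1 + p) := by
          have : y ^ (-p) ≤ β ^ (-p) := Real.rpow_le_rpow_of_nonpos hβ hβy (by linarith)
          gcongr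

lemma sum_Icc_telescope (a : ℕ → ℝ) (n : ℕ) :
    ∑ t ∈ Finset.Icc 1 n, (a t - a (t + 1)) = a 1 - a (n + 1) := by
  induction n with
  | zero => simp
  | succ n ih => rw [Finset.sum_Icc_succ_top (by omega), ih]; ring

/-- Jensen's inequality for the averaged iterate. -/
lemma averaged_error_le {𝕏 : Type*} [Fintype 𝕏] {d : ℕ} {μdist : 𝕏 → ℝ}
    (hμ0 : ∀ x, 0 ≤ μdist x) {V : 𝕏 → ℝ} {Φ : 𝕏 → EuclideanSpace ℝ (Fin d)}
    {Θstar : EuclideanSpace ℝ (Fin d)} (hreal : ∀ x, V x = ⟪Θstar, Φ x⟫_ℝ) {T : ℕ}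
    (hT : 0 < T) (θ : ℕ → EuclideanSpace ℝ (Fin d)) :
    ∑ x, μdist x * (V x - ⟪(T : ℝ)⁻¹ • ∑ t ∈ Finset.Icc 1 T, θ t, Φ x⟫_ℝ) ^ 2 ≤
      (T : ℝ)⁻¹ * ∑ t ∈ Finset.Icc 1 T, ∑ x, μdist x * ⟪θ t - Θstar, Φ x⟫_ℝ ^ 2 := by
  have hT' : (0 : ℝ) < T := by exact_mod_cast hT
  rw [Finset.sum_comm, Finset.mul_sum]
  refine Finset.sum_le_sum fun x _ => ?_
  rw [← Finset.mul_sum, mul_left_comm]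
  refine mul_le_mul_of_nonneg_left ?_ (hμ0 x)
  have e : V x - ⟪(T : ℝ)⁻¹ • ∑ t ∈ Finset.Icc 1 T, θ t, Φ x⟫_ℝ =
      -((T : ℝ)⁻¹ * ∑ t ∈ Finset.Icc 1 T, ⟪θ t - Θstar, Φ x⟫_ℝ) := by
    simp only [inner_sub_left, Finset.sum_sub_distrib, Finset.sum_const, Nat.card_Icc,
      real_inner_smul_left, sum_inner, hreal]
    simp only [Nat.add_sub_cancel, nsmul_eq_mul]
    field_simp
    ring
  have h := sq_sum_le_card_mul_sum_sq (s := Finset.Icc 1 T)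
    (f := fun t => ⟪θ t - Θstar, Φ x⟫_ℝ)
  rw [Nat.card_Icc, Nat.add_sub_cancel] at h
  rw [e, neg_sq, mul_pow]
  calc _ ≤ (T : ℝ)⁻¹ ^ 2 * (T * ∑ t ∈ Finset.Icc 1 T, ⟪θ t - Θstar, Φ x⟫_ℝ ^ 2) := by gcongr
    _ = _ := by field_simp

/-- Collecting constants; `w = u^{1/(1+p)}`, `A = T^{1/(1+p)}`, `B = T^{p/(1+p)}`, and `J` is the
sum of the expected errors of the iterates. -/
lemma final_arith {ρ γ w A B N η L J tt : ℝ} (hρ : 0 < ρ) (hγ1 : γ < 1) (hw : 2 * ρ ≤ w)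
    (hA : 0 < A) (hB : 0 < B) (hAB : A * B = N) (htt : 0 ≤ tt)
    (hη : η = Real.sqrt 2 * ρ / (w * A)) (hL : L ≤ N⁻¹ * J)
    (hJ : 2 * η * ((1 - γ) * J) ≤ 25 / 4 * ρ ^ 2 +
      2 * η * (9 / 2 * ρ * w * A + N * (16 * ρ ^ 2 * η + 16 * ρ * (tt * (η * (9 / 8 * w)))))) :
    L ≤ 7 * ρ * w / ((1 - γ) * B) +
      2 * Real.sqrt 2 * ρ * (1 + 2 * ρ) * (4 * ρ + tt * (1 + 6 * ρ)) / ((1 - γ) * A) := by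
  have hg : 0 < 1 - γ := by linarith
  have hw0 : 0 < w := by linarith
  have hN : 0 < N := by rw [← hAB]; positivity
  have hs0 : 0 < Real.sqrt 2 := by positivity
  have hs2 : Real.sqrt 2 ^ 2 = 2 := Real.sq_sqrt (by norm_num)
  have hs : 5 / 4 ≤ Real.sqrt 2 := Real.le_sqrt_of_sq_le (by norm_num)
  have hη0 : 0 < η := by rw [hη]; positivity
  have hηw : η * (w * A) = Real.sqrt 2 * ρ := by rw [hη]; field_simp
  have h1 : 25 / 4 * ρ ^ 2 ≤ 2 * η * (5 / 2 * ρ * w * A) := by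
    have : 2 * η * (5 / 2 * ρ * w * A) = 5 * ρ * (Real.sqrt 2 * ρ) := by rw [← hηw]; ring
    rw [this]
    nlinarith [mul_le_mul_of_nonneg_right hs (sq_nonneg ρ)]
  have h2 : (1 - γ) * J ≤ 7 * ρ * w * A +
      N * (16 * ρ ^ 2 * η + 16 * ρ * (tt * (η * (9 / 8 * w)))) := by
    refine le_of_mul_le_mul_left ?_ (by positivity : 0 < 2 * η)
    linarith
  have h3 : 16 * ρ ^ 2 * η + 16 * ρ * (tt * (η * (9 / 8 * w))) ≤
      2 * (η * w) * ((1 + 2 * ρ) * (4 * ρ + tt * (1 + 6 * ρ))) := by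
    have a1 : 16 * ρ ^ 2 ≤ 2 * w * ((1 + 2 * ρ) * (4 * ρ)) := by
      nlinarith [mul_le_mul_of_nonneg_right hw hρ.le, mul_pos hw0 (mul_pos hρ hρ)]
    have a2 : 18 * ρ ≤ 2 * ((1 + 2 * ρ) * (1 + 6 * ρ)) := by nlinarith [sq_nonneg (ρ - 1 / 4)]
    have a3 := mul_le_mul_of_nonneg_left a1 hη0.le
    have a4 := mul_le_mul_of_nonneg_left a2 (by positivity : 0 ≤ tt * (η * w))
    linarith
  have h4 : η * w = Real.sqrt 2 * ρ / A := by rw [hη]; field_simp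
  rw [h4] at h3
  have h5 : (1 - γ) * J ≤ 7 * ρ * w * A +
      N * (2 * (Real.sqrt 2 * ρ / A) * ((1 + 2 * ρ) * (4 * ρ + tt * (1 + 6 * ρ)))) :=
    h2.trans (by gcongr)
  refine hL.trans ?_
  calc N⁻¹ * J = (N * (1 - γ))⁻¹ * ((1 - γ) * J) := by field_simp
    _ ≤ (N * (1 - γ))⁻¹ * (7 * ρ * w * A +
      N * (2 * (Real.sqrt 2 * ρ / A) * ((1 + 2 * ρ) * (4 * ρ + tt * (1 + 6 * ρ))))) := by gcongr
    _ = _ := by rw [← hAB]; field_simp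

/-! ### The expected error bound -/

set_option maxHeartbeats 2000000 in
/-- **Theorem 2: expected error of Robust TD learning under Markovian sampling.** Assume
the chain is uniformly ergodic with constants `m > 0`, `ζ ∈ (0,1)`, let
`τ = min{t ≥ 1 : m ζ^t ≤ √2 ρ (uT)^{−1/(1+p)}}` be the mixing time, and run Robust TD
learning along the Markov trajectory (so `X'_t = X_{t+1}`) with clipping radii
`b_t = (u t)^{1/(1+p)}` and constant step size `η = √2 ρ (uT)^{−1/(1+p)}`. Then
`E[∑_x μ(x)(𝒱(x) − ⟨Θ̄(T), Φ(x)⟩)²] ≤ 7ρ u^{1/(1+p)}/((1−γ)T^{p/(1+p)})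
  + 2√2 ρ(1+2ρ)(4ρ+τ(1+6ρ))/((1−γ)T^{1/(1+p)})`. -/
theorem robust_td_expected_error_markovian
    {Ω : Type*} [mΩ : MeasurableSpace Ω] (ℙ : Measure Ω) [IsProbabilityMeasure ℙ]
    {𝕏 : Type*} [Fintype 𝕏] [DecidableEq 𝕏] [m𝕏 : MeasurableSpace 𝕏]
    [DiscreteMeasurableSpace 𝕏] {d : ℕ}
    -- Markov reward process
    (P : 𝕏 → 𝕏 → ℝ) (hP0 : ∀ x x', 0 ≤ P x x') (hP1 : ∀ x, ∑ x', P x x' = 1)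
    (μdist : 𝕏 → ℝ) (hμ0 : ∀ x, 0 ≤ μdist x) (hμ1 : ∑ x, μdist x = 1)
    (hstat : ∀ y, ∑ x, μdist x * P x y = μdist y)
    (γ : ℝ) (hγ0 : 0 ≤ γ) (hγ1 : γ < 1)
    (r : 𝕏 → ℝ) (hr : ∀ x, |r x| ≤ 1)
    (V : 𝕏 → ℝ) (hV : ∀ x, V x = r x + γ * ∑ x', P x x' * V x')
    (Φ : 𝕏 → EuclideanSpace ℝ (Fin d)) (hΦ : ∀ x, ‖Φ x‖ ≤ 1)
    -- realizability
    (ρ : ℝ) (hρ : 0 < ρ)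
    (Θstar : EuclideanSpace ℝ (Fin d)) (hΘstar : ‖Θstar‖ ≤ ρ)
    (hreal : ∀ x, V x = ⟪Θstar, Φ x⟫_ℝ)
    -- uniform ergodicity
    (mc ζ : ℝ) (hmc : 0 < mc) (hζ0 : 0 < ζ) (hζ1 : ζ < 1)
    (hergo : ∀ t : ℕ, 1 ≤ t → ∀ x,
      (1 / 2) * ∑ y, |((Matrix.of P) ^ t) x y - μdist y| ≤ mc * ζ ^ t)
    -- heavy-tailed reward parameters and algorithm parameters
    (p u₀ u : ℝ) (hp0 : 0 < p) (hp1 : p ≤ 1) (hu₀ : 0 < u₀)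
    (hu : u = min ((u₀ ^ (1 / (1 + p)) + 2 * ρ) ^ (1 + p))
        (u₀ + 2 ^ (2 * p + 3) * ρ ^ (1 + p)))
    (T : ℕ) (hT : 1 < T)
    (b : ℕ → ℝ) (hb : ∀ t : ℕ, b t = (u * (t : ℝ)) ^ (1 / (1 + p)))
    (η : ℝ) (hη : η = Real.sqrt 2 * ρ * (u * (T : ℝ)) ^ (-(1 / (1 + p))))
    -- mixing time
    (τ : ℕ) (hτ : τ = sInf {t : ℕ | 1 ≤ t ∧
      mc * ζ ^ t ≤ Real.sqrt 2 * ρ * (u * (T : ℝ)) ^ (-(1 / (1 + p)))})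
    -- Markovian sampling
    (X : ℕ → Ω → 𝕏) (R : ℕ → Ω → ℝ)
    (hXm : ∀ t, Measurable (X t)) (hRm : ∀ t, Measurable (R t))
    (hX1law : ∀ f : 𝕏 → ℝ, ∫ ω, f (X 1 ω) ∂ℙ = ∑ x, μdist x * f x)
    (hchain : ∀ t, 1 ≤ t → ∀ f : 𝕏 → ℝ,
      ℙ[fun ω => f (X (t + 1) ω)|historySigma m𝕏 X R t (t - 1)]
        =ᵐ[ℙ] fun ω => ∑ x', P (X t ω) x' * f x')
    (hRint : ∀ t, 1 ≤ t → Integrable (R t) ℙ)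
    (hRmomint : ∀ t, 1 ≤ t → Integrable (fun ω => |R t ω| ^ (1 + p)) ℙ)
    (hRmean : ∀ t, 1 ≤ t →
      ℙ[R t|historySigma m𝕏 X R (t + 1) (t - 1)] =ᵐ[ℙ] fun ω => r (X t ω))
    (hRmom : ∀ t, 1 ≤ t → ∀ᵐ ω ∂ℙ,
      (ℙ[fun ω' => |R t ω'| ^ (1 + p)|historySigma m𝕏 X R (t + 1) (t - 1)]) ω ≤ u₀)
    -- Robust TD learning iterates along the trajectory (X'_t = X_{t+1})
    (Θ : ℕ → Ω → EuclideanSpace ℝ (Fin d))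
    (hΘ1 : ∃ θ0 : EuclideanSpace ℝ (Fin d), ‖θ0‖ ≤ ρ ∧ ∀ ω, Θ 1 ω = θ0)
    (hrec : ∀ t, 1 ≤ t → t ≤ T → ∀ ω, Θ (t + 1) ω =
      projBall ρ (Θ t ω + η • (if ‖tdGrad γ Φ (X t ω) (R t ω) (X (t + 1) ω) (Θ t ω)‖ ≤ b t
        then tdGrad γ Φ (X t ω) (R t ω) (X (t + 1) ω) (Θ t ω) else 0))) :
    ∫ ω, ∑ x, μdist x *
        (V x - ⟪(T : ℝ)⁻¹ • ∑ t ∈ Finset.Icc 1 T, Θ t ω, Φ x⟫_ℝ) ^ 2 ∂ℙ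
      ≤ 7 * ρ * u ^ (1 / (1 + p)) / ((1 - γ) * (T : ℝ) ^ (p / (1 + p)))
        + 2 * Real.sqrt 2 * ρ * (1 + 2 * ρ) * (4 * ρ + (τ : ℝ) * (1 + 6 * ρ))
          / ((1 - γ) * (T : ℝ) ^ (1 / (1 + p))) := by
  obtain ⟨θ0, hθ0, hΘ1⟩ := hΘ1
  have h1p : 0 < 1 + p := by linarith
  have hT0 : (0 : ℝ) < T := by exact_mod_cast (by omega : 0 < T)
  have hmom := moment_le_mul_u hp0 hp1 hu₀ hρ
  have hw := two_rho_le hp0 hu₀ hρ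
  rw [← hu] at hmom hw
  have hu0 : 0 < u := by rw [hu]; positivity
  set w : ℝ := u ^ (1 / (1 + p)) with hwdef
  have hw0 : 0 < w := by positivity
  have hwu : w ^ (1 + p) = u := by
    rw [hwdef, ← Real.rpow_mul hu0.le, one_div_mul_cancel h1p.ne', Real.rpow_one]
  have hb0 : ∀ t : ℕ, 1 ≤ t → 0 < b t := fun t ht => by
    have : (0 : ℝ) < t := by exact_mod_cast ht
    rw [hb]; positivity
  have hbT := hb0 T (by omega)
  have hηb : η = Real.sqrt 2 * ρ / b T := by
    rw [hη, hb, Real.rpow_neg (by positivity)]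
    exact (div_eq_mul_inv _ _).symm
  have hη0 : 0 < η := by rw [hηb]; positivity
  have hΘb : ∀ t, 1 ≤ t → t ≤ T + 1 → ∀ ω, ‖Θ t ω‖ ≤ ρ := by
    intro t ht htT ω
    obtain rfl | ⟨s, rfl⟩ : t = 1 ∨ ∃ s, t = s + 1 := by
      rcases t with _ | s
      · omega
      · exact Or.inr ⟨s, rfl⟩
    · rw [hΘ1]; exact hθ0
    · rcases s with _ | s
      · rw [hΘ1]; exact hθ0
      · rw [hrec (s + 1) (by omega) (by omega)]
        exact norm_projBall_le hρ _
  have hΘh := fun t ht htT => measurable_iterate (mΩ := mΩ) hΘ1 hrec t ht htT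
  have hΘm : ∀ t, 1 ≤ t → t ≤ T + 1 → Measurable (Θ t) := fun t ht htT =>
    (hΘh t ht htT).mono (historySigma_le hXm hRm _ _) le_rfl
  set g : ℕ → Ω → EuclideanSpace ℝ (Fin d) := fun t ω =>
    tdGrad γ Φ (X t ω) (R t ω) (X (t + 1) ω) (Θ t ω) with hg
  set gc : ℕ → Ω → EuclideanSpace ℝ (Fin d) := fun t ω =>
    if ‖g t ω‖ ≤ b t then g t ω else 0 with hgc
  have hrec' : ∀ t, 1 ≤ t → t ≤ T → ∀ ω, Θ (t + 1) ω = projBall ρ (Θ t ω + η • gc t ω) := hrec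
  have hgm : ∀ t, 1 ≤ t → t ≤ T → Measurable (g t) := fun t ht htT =>
    measurable_tdGrad γ Φ (hXm t) (hXm (t + 1)) (hRm t) (hΘm t ht (by omega))
  have hgcm : ∀ t, 1 ≤ t → t ≤ T → Measurable (gc t) := fun t ht htT =>
    measurable_clip (b t) (hgm t ht htT)
  have hgle : ∀ t, 1 ≤ t → t ≤ T → ∀ ω, ‖g t ω‖ ≤ |R t ω| + 2 * ρ := fun t ht htT ω =>
    norm_tdGrad_le hγ0 hγ1 hΦ (hΘb t ht (by omega) ω) _ _ _
  have hgcb : ∀ t, 1 ≤ t → ∀ ω, ‖gc t ω‖ ≤ b t := fun t ht ω => norm_clip_le (hb0 t ht) _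
  have heb : ∀ t, 1 ≤ t → t ≤ T + 1 → ∀ ω, ‖Θ t ω - Θstar‖ ≤ 2 * ρ := fun t ht htT ω =>
    norm_sub_star_le hΘstar (hΘb t ht htT ω)
  -- the (1+p)-th moment of the majorant `|R_t| + 2ρ` of the gradient norm
  have hY : ∀ t, 1 ≤ t → Integrable (fun ω => (|R t ω| + 2 * ρ) ^ (1 + p)) ℙ ∧
      ∫ ω, (|R t ω| + 2 * ρ) ^ (1 + p) ∂ℙ ≤ 9 / 8 * u := by
    intro t ht
    have hle : ∫ ω, |R t ω| ^ (1 + p) ∂ℙ ≤ u₀ := by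
      rw [← integral_condExp (historySigma_le (X := X) hXm hRm (t + 1) (t - 1))]
      calc _ ≤ ∫ _, u₀ ∂ℙ := integral_mono_ae integrable_condExp (integrable_const _) (hRmom t ht)
        _ = u₀ := by simp
    have h := integral_add_rpow_le ℙ (q := 1 + p) (a := 2 * ρ) (by linarith) (by positivity) hu₀
      (R t) (hRm t) (hRmomint t ht) hle
    exact ⟨h.1, h.2.trans hmom⟩
  have iN : ∀ t, 1 ≤ t → t ≤ T → Integrable (fun ω => ‖gc t ω‖) ℙ := fun t ht htT =>
    Integrable.of_bound (hgcm t ht htT).norm.aestronglyMeasurable (b t)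
      (Filter.Eventually.of_forall fun ω => by rw [norm_norm]; exact hgcb t ht ω)
  have iS : ∀ t, 1 ≤ t → t ≤ T → Integrable (fun ω => ‖gc t ω‖ ^ 2) ℙ := fun t ht htT =>
    Integrable.of_bound ((hgcm t ht htT).norm.pow_const 2).aestronglyMeasurable (b t ^ 2)
      (Filter.Eventually.of_forall fun ω => by
        rw [norm_pow, norm_norm]
        exact pow_le_pow_left₀ (norm_nonneg _) (hgcb t ht ω) 2)
  have iC : ∀ t, 1 ≤ t → t ≤ T → Integrable (fun ω => ⟪gc t ω, Θ t ω - Θstar⟫_ℝ) ℙ :=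
    fun t ht htT => Integrable.of_bound
      ((hgcm t ht htT).inner ((hΘm t ht (by omega)).sub_const Θstar)).aestronglyMeasurable
      (b t * (2 * ρ)) (Filter.Eventually.of_forall fun ω =>
        (abs_real_inner_le_norm _ _).trans (mul_le_mul (hgcb t ht ω) (heb t ht (by omega) ω)
          (norm_nonneg _) (hb0 t ht).le))
  have iG : ∀ t, 1 ≤ t → t ≤ T → Integrable (fun ω => ⟪g t ω, Θ t ω - Θstar⟫_ℝ) ℙ := by
    intro t ht htT
    refine (((hRint t ht).abs.add (integrable_const (2 * ρ))).mul_const (2 * ρ)).mono'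
      ((hgm t ht htT).inner ((hΘm t ht (by omega)).sub_const Θstar)).aestronglyMeasurable
      (Filter.Eventually.of_forall fun ω => ?_)
    exact (abs_real_inner_le_norm _ _).trans (mul_le_mul (hgle t ht htT ω)
      (heb t ht (by omega) ω) (norm_nonneg _)
      (add_nonneg (abs_nonneg _) (by positivity)))
  have hS : ∀ t, 1 ≤ t → t ≤ T → ∫ ω, ‖gc t ω‖ ^ 2 ∂ℙ ≤ b t ^ (1 - p) * (9 / 8 * u) := by
    intro t ht htT
    have hbt := hb0 t ht
    calc _ ≤ ∫ ω, b t ^ (1 - p) * (|R t ω| + 2 * ρ) ^ (1 + p) ∂ℙ :=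
          integral_mono (iS t ht htT) ((hY t ht).1.const_mul _) fun ω =>
            norm_clip_sq_le hp0 hp1 hbt (hgle t ht htT ω)
      _ ≤ _ := by
          rw [integral_const_mul]
          exact mul_le_mul_of_nonneg_left (hY t ht).2 (by positivity)
  have hN : ∀ t, 1 ≤ t → t ≤ T → ∫ ω, ‖gc t ω‖ ∂ℙ ≤ 9 / 8 * w := by
    intro t ht htT
    have hpt : ∀ ω, (1 + p) * ‖gc t ω‖ ≤ w ^ (-p) * (|R t ω| + 2 * ρ) ^ (1 + p) + p * w := by
      intro ω
      have h1 := (norm_clip_le_norm (b t) (g t ω)).trans (hgle t ht htT ω)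
      exact (mul_le_mul_of_nonneg_left h1 h1p.le).trans
        (young_bound hp0 hw0 (by positivity))
    have h := integral_mono ((iN t ht htT).const_mul (1 + p))
      (((hY t ht).1.const_mul (w ^ (-p))).add (integrable_const (p * w))) hpt
    simp only [Pi.add_apply] at h
    rw [integral_const_mul, integral_add ((hY t ht).1.const_mul _) (integrable_const _),
      integral_const_mul] at h
    simp only [integral_const, probReal_univ, one_smul] at h
    have h2 : w ^ (-p) * ∫ ω, (|R t ω| + 2 * ρ) ^ (1 + p) ∂ℙ ≤ w ^ (-p) * (9 / 8 * u) :=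
      mul_le_mul_of_nonneg_left (hY t ht).2 (by positivity)
    have h3 : w ^ (-p) * (9 / 8 * u) = 9 / 8 * w := by
      rw [← hwu, mul_left_comm, ← Real.rpow_add hw0]; simp
    refine le_of_mul_le_mul_left ?_ h1p
    nlinarith
  have hC : ∀ t, 1 ≤ t → t ≤ T → ∫ ω, ⟪gc t ω, Θ t ω - Θstar⟫_ℝ ∂ℙ -
      ∫ ω, ⟪g t ω, Θ t ω - Θstar⟫_ℝ ∂ℙ ≤ 2 * ρ * b t ^ (-p) * (9 / 8 * u) := by
    intro t ht htT
    have hbt := hb0 t ht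
    rw [← integral_sub (iC t ht htT) (iG t ht htT)]
    calc _ ≤ ∫ ω, 2 * ρ * b t ^ (-p) * (|R t ω| + 2 * ρ) ^ (1 + p) ∂ℙ :=
          integral_mono ((iC t ht htT).sub (iG t ht htT)) ((hY t ht).1.const_mul _) fun ω =>
            inner_clip_sub_le hp0 hbt (hgle t ht htT ω) (heb t ht (by omega) ω)
      _ ≤ _ := by
          rw [integral_const_mul]
          exact mul_le_mul_of_nonneg_left (hY t ht).2 (by positivity)
  have iM : ∀ s t, 1 ≤ s → s ≤ T + 1 → 1 ≤ t → t ≤ T + 1 →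
      Integrable (fun ω => ‖Θ t ω - Θ s ω‖) ℙ := fun s t hs hsT ht htT =>
    Integrable.of_bound ((hΘm t ht htT).sub (hΘm s hs hsT)).norm.aestronglyMeasurable (2 * ρ)
      (Filter.Eventually.of_forall fun ω => by
        rw [norm_norm]; exact norm_sub_star_le (hΘb s hs hsT ω) (hΘb t ht htT ω))
  have hmove : ∀ s k : ℕ, 1 ≤ s → s + k ≤ T + 1 →
      ∫ ω, ‖Θ (s + k) ω - Θ s ω‖ ∂ℙ ≤ k * (η * (9 / 8 * w)) := by
    intro s k hs
    induction k with
    | zero => simp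
    | succ k ih =>
      intro hk
      have hpt : ∀ ω, ‖Θ (s + (k + 1)) ω - Θ s ω‖ ≤
          ‖Θ (s + k) ω - Θ s ω‖ + η * ‖gc (s + k) ω‖ := by
        intro ω
        have h1 : ‖Θ (s + (k + 1)) ω - Θ (s + k) ω‖ ≤ η * ‖gc (s + k) ω‖ := by
          rw [← add_assoc, hrec' (s + k) (by omega) (by omega)]
          refine (norm_projBall_sub_le hρ _ _ (hΘb (s + k) (by omega) (by omega) ω)).trans_eq ?_
          rw [add_sub_cancel_left, norm_smul, Real.norm_of_nonneg hη0.le]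
        have h2 := norm_sub_le_norm_sub_add_norm_sub (Θ (s + (k + 1)) ω) (Θ (s + k) ω) (Θ s ω)
        linarith
      have i1 := iM s (s + k) hs (by omega) (by omega) (by omega)
      have i2 := (iN (s + k) (by omega) (by omega)).const_mul η
      have h := integral_mono (iM s (s + (k + 1)) hs (by omega) (by omega) hk) (i1.add i2) hpt
      simp only [Pi.add_apply] at h
      rw [integral_add i1 i2, integral_const_mul] at h
      have h3 := mul_le_mul_of_nonneg_left (hN (s + k) (by omega) (by omega)) hη0.le
      have h4 := ih (by omega)
      push_cast
      linarith
  obtain ⟨hτ1, hτmix⟩ : 1 ≤ τ ∧ mc * ζ ^ τ ≤ η := by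
    have hne : {t : ℕ | 1 ≤ t ∧
        mc * ζ ^ t ≤ Real.sqrt 2 * ρ * (u * (T : ℝ)) ^ (-(1 / (1 + p)))}.Nonempty := by
      obtain ⟨n, hn⟩ := exists_pow_lt_of_lt_one (div_pos hη0 hmc) hζ1
      refine ⟨n + 1, by omega, ?_⟩
      rw [← hη]
      rw [lt_div_iff₀ hmc] at hn
      have : ζ ^ (n + 1) ≤ ζ ^ n := pow_le_pow_of_le_one hζ0.le hζ1.le (by omega)
      nlinarith
    have := Nat.sInf_mem hne
    rw [← hτ, ← hη] at this
    exact this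
  set ν : ℝ := 16 * ρ ^ 2 * η + 16 * ρ * (τ * (η * (9 / 8 * w))) with hν
  have hnoise : ∀ t, 1 ≤ t → t ≤ T → ∫ ω, tdDrift P γ Φ Θstar (X t ω) (Θ t ω) ∂ℙ ≤
      ∫ ω, ∑ x, μdist x * tdDrift P γ Φ Θstar x (Θ t ω) ∂ℙ + ν := by
    intro t ht htT
    rcases le_or_gt t τ with h | h
    · -- before the mixing time, compare with the deterministic initial parameter
      obtain ⟨k, rfl⟩ := Nat.exists_eq_add_of_le ht
      have hε : ∫ ω, tdDrift P γ Φ Θstar (X (1 + k) ω) (Θ 1 ω) ∂ℙ ≤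
          ∫ ω, ∑ x, μdist x * tdDrift P γ Φ Θstar x (Θ 1 ω) ∂ℙ + 0 := by
        simp only [hΘ1]
        rw [frozen_drift_eq_of_const hstat hXm hRm hX1law hchain k
          (fun x => tdDrift P γ Φ Θstar x θ0)]
        simp
      have := drift_gap_le hP0 hP1 hμ0 hμ1 hγ0 hγ1 hΦ hΘstar (hXm (1 + k))
        (hΘm _ ht (by omega)) (hΘm 1 le_rfl (by omega)) (hΘb _ ht (by omega))
        (hΘb 1 le_rfl (by omega)) hε (hmove 1 k le_rfl (by omega))
      refine this.trans ?_
      have hk : (k : ℝ) ≤ τ := by exact_mod_cast (by omega : k ≤ τ)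
      have h5 : 16 * ρ * (k * (η * (9 / 8 * w))) ≤ 16 * ρ * (τ * (η * (9 / 8 * w))) := by gcongr
      have h6 : 0 ≤ 16 * ρ ^ 2 * η := by positivity
      linarith
    · obtain ⟨s, rfl⟩ := Nat.exists_eq_add_of_le' h.le
      have hs : 1 ≤ s := by omega
      have hε := frozen_drift_le_of_mixing hP0 hP1 (μdist := μdist) hγ0 hγ1 hΦ hΘstar hXm hRm
        hchain hs (hΘh s hs (by omega)) (hΘb s hs (by omega)) (k := τ)
        (fun x => (hergo τ hτ1 x).trans hτmix)
      exact drift_gap_le hP0 hP1 hμ0 hμ1 hγ0 hγ1 hΦ hΘstar (hXm (s + τ))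
        (hΘm _ ht (by omega)) (hΘm s hs (by omega)) (hΘb _ ht (by omega))
        (hΘb s hs (by omega)) hε (hmove s τ hs (by omega))
  set a : ℕ → ℝ := fun t => ∫ ω, ‖Θ t ω - Θstar‖ ^ 2 ∂ℙ with ha
  set I : ℕ → ℝ := fun t => ∫ ω, ∑ x, μdist x * ⟪Θ t ω - Θstar, Φ x⟫_ℝ ^ 2 ∂ℙ with hI
  have iA : ∀ t, 1 ≤ t → t ≤ T + 1 → Integrable (fun ω => ‖Θ t ω - Θstar‖ ^ 2) ℙ :=
    fun t ht htT => Integrable.of_bound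
      (((hΘm t ht htT).sub_const Θstar).norm.pow_const 2).aestronglyMeasurable ((2 * ρ) ^ 2)
      (Filter.Eventually.of_forall fun ω => by
        rw [norm_pow, norm_norm]
        exact pow_le_pow_left₀ (norm_nonneg _) (heb t ht htT ω) 2)
  have iE : ∀ t, 1 ≤ t → t ≤ T + 1 →
      Integrable (fun ω => ∑ x, μdist x * ⟪Θ t ω - Θstar, Φ x⟫_ℝ ^ 2) ℙ := fun t ht htT =>
    integrable_finsetSum _ fun x _ => Integrable.const_mul (Integrable.of_bound
      ((((hΘm t ht htT).sub_const Θstar).inner measurable_const).pow_const 2).aestronglyMeasurable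
      ((2 * ρ) ^ 2) (Filter.Eventually.of_forall fun ω => by
        rw [norm_pow]
        exact pow_le_pow_left₀ (norm_nonneg _)
          ((abs_inner_feature_le hΦ _ x).trans (heb t ht htT ω)) 2)) _
  have iD : ∀ t, 1 ≤ t → t ≤ T + 1 →
      Integrable (fun ω => ∑ x, μdist x * tdDrift P γ Φ Θstar x (Θ t ω)) ℙ := fun t ht htT =>
    integrable_finsetSum _ fun x _ => Integrable.const_mul (Integrable.of_bound
      ((continuous_tdDrift x).measurable.comp (hΘm t ht htT)).aestronglyMeasurable
      (8 * ρ ^ 2) (Filter.Eventually.of_forall fun ω =>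
        abs_tdDrift_le hP0 hP1 hγ0 hγ1 hΦ hΘstar (hΘb t ht htT ω) x)) _
  have hdesc : ∀ t, 1 ≤ t → t ≤ T → a (t + 1) ≤ a t +
      2 * η * ∫ ω, ⟪gc t ω, Θ t ω - Θstar⟫_ℝ ∂ℙ + η ^ 2 * ∫ ω, ‖gc t ω‖ ^ 2 ∂ℙ := by
    intro t ht htT
    have hpt : ∀ ω, ‖Θ (t + 1) ω - Θstar‖ ^ 2 ≤ ‖Θ t ω - Θstar‖ ^ 2 +
        2 * η * ⟪gc t ω, Θ t ω - Θstar⟫_ℝ + η ^ 2 * ‖gc t ω‖ ^ 2 := by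
      intro ω
      have h1 := norm_projBall_sub_le hρ (Θ t ω + η • gc t ω) Θstar hΘstar
      rw [← hrec' t ht htT] at h1
      refine (pow_le_pow_left₀ (norm_nonneg _) h1 2).trans_eq ?_
      rw [add_sub_right_comm, norm_add_sq_real, norm_smul, real_inner_smul_right,
        real_inner_comm, mul_pow, Real.norm_eq_abs, sq_abs]
      ring
    have j1 := iA t ht (by omega)
    have j2 := (iC t ht htT).const_mul (2 * η)
    have j3 := (iS t ht htT).const_mul (η ^ 2)
    have j12 : Integrable (fun ω => ‖Θ t ω - Θstar‖ ^ 2 +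
        2 * η * ⟪gc t ω, Θ t ω - Θstar⟫_ℝ) ℙ := j1.add j2
    have h := integral_mono (iA (t + 1) (by omega) (by omega)) (j12.add j3) hpt
    simp only [Pi.add_apply] at h
    rwa [integral_add j12 j3, integral_add j1 j2, integral_const_mul, integral_const_mul] at h
  have hvar : ∀ t, 1 ≤ t → t ≤ T → η ^ 2 * ∫ ω, ‖gc t ω‖ ^ 2 ∂ℙ ≤ 9 / 4 * ρ ^ 2 / T := by
    intro t ht htT
    have htT' : (t : ℝ) ≤ T := by exact_mod_cast htT
    have hbb : b t ≤ b T := by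
      rw [hb, hb]; gcongr
    have h1 : b t ^ (1 - p) ≤ b T ^ (1 - p) :=
      Real.rpow_le_rpow (hb0 t ht).le hbb (by linarith)
    have h2 : b T ^ (1 + p) = u * T := by
      rw [hb, ← Real.rpow_mul (by positivity), one_div_mul_cancel h1p.ne', Real.rpow_one]
    have h3 : b T ^ 2 = b T ^ (1 - p) * (u * T) := by
      rw [← h2, ← Real.rpow_add hbT, ← Real.rpow_natCast]; congr 1; push_cast; ring
    calc η ^ 2 * ∫ ω, ‖gc t ω‖ ^ 2 ∂ℙ ≤ η ^ 2 * (b T ^ (1 - p) * (9 / 8 * u)) := by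
          refine mul_le_mul_of_nonneg_left ((hS t ht htT).trans ?_) (sq_nonneg _)
          gcongr
      _ = 9 / 4 * ρ ^ 2 / T := by
          have : 0 < b T ^ (1 - p) := by positivity
          rw [hηb, div_pow, mul_pow, Real.sq_sqrt (by norm_num), h3]
          field_simp
          norm_num
  have hbias : ∀ t : ℕ, 1 ≤ t → b t ^ (-p) * u = w * (t : ℝ) ^ (1 / (1 + p) - 1) := by
    intro t ht
    have ht' : (0 : ℝ) < t := by exact_mod_cast ht
    have e1 : (1 / (1 + p)) * -p = 1 / (1 + p) - 1 := by field_simp; ring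
    rw [hb, ← Real.rpow_mul (by positivity), e1, Real.mul_rpow hu0.le ht'.le,
      Real.rpow_sub_one hu0.ne', ← hwdef]
    field_simp
  have hstep : ∀ t ∈ Finset.Icc 1 T, 2 * η * ((1 - γ) * I t) ≤ (a t - a (t + 1)) +
      (9 / 4 * ρ ^ 2 / T + 2 * η * ν) +
      2 * η * (9 / 4 * ρ * w) * (t : ℝ) ^ (1 / (1 + p) - 1) := by
    intro t hmem
    obtain ⟨ht, htT⟩ := Finset.mem_Icc.mp hmem
    have h1 : (1 - γ) * I t ≤ -∫ ω, ∑ x, μdist x * tdDrift P γ Φ Θstar x (Θ t ω) ∂ℙ := by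
      simp only [hI]
      rw [← integral_const_mul, ← integral_neg]
      exact integral_mono ((iE t ht (by omega)).const_mul _) (iD t ht (by omega)).neg
        fun ω => mean_tdDrift_le hP0 hP1 hμ0 hstat hγ0 (Θ t ω)
    have h2 := hnoise t ht htT
    rw [← integral_inner_tdGrad hγ0 hγ1 hV hΦ hΘstar hreal hXm hRm hchain ht (hRint t ht)
      (hRmean t ht) (hΘh t ht (by omega)) (hΘb t ht (by omega))] at h2
    have h3 := hC t ht htT
    have h4 : 2 * ρ * b t ^ (-p) * (9 / 8 * u) =
        9 / 4 * ρ * w * (t : ℝ) ^ (1 / (1 + p) - 1) := by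
      linear_combination (9 / 4 * ρ) * hbias t ht
    rw [h4] at h3
    have h5 : (1 - γ) * I t ≤ -∫ ω, ⟪gc t ω, Θ t ω - Θstar⟫_ℝ ∂ℙ +
        9 / 4 * ρ * w * (t : ℝ) ^ (1 / (1 + p) - 1) + ν := by
      simp only [hg] at h3
      linarith
    have h6 := mul_le_mul_of_nonneg_left h5 (by positivity : 0 ≤ 2 * η)
    have h7 := hdesc t ht htT
    have h8 := hvar t ht htT
    linarith
  have hsum := Finset.sum_le_sum hstep
  rw [Finset.sum_add_distrib, Finset.sum_add_distrib, sum_Icc_telescope, Finset.sum_const,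
    Nat.card_Icc, Nat.add_sub_cancel, nsmul_eq_mul, ← Finset.mul_sum, ← Finset.mul_sum,
    ← Finset.mul_sum] at hsum
  have ha1 : a 1 - a (T + 1) ≤ 4 * ρ ^ 2 := by
    have h1 : a 1 ≤ 4 * ρ ^ 2 := by
      calc a 1 ≤ ∫ _, (2 * ρ) ^ 2 ∂ℙ :=
            integral_mono (iA 1 le_rfl (by omega)) (integrable_const _)
              fun ω => pow_le_pow_left₀ (norm_nonneg _) (heb 1 le_rfl (by omega) ω) 2
        _ = 4 * ρ ^ 2 := by simp; ring
    have h2 : 0 ≤ a (T + 1) := integral_nonneg fun ω => by positivity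
    linarith
  have hpow := sum_rpow_sub_one_le (q := 1 / (1 + p)) (by positivity)
    (by rw [div_le_one h1p]; linarith) T
  set A : ℝ := (T : ℝ) ^ (1 / (1 + p)) with hA
  have hA0 : 0 < A := by positivity
  have hpow2 : ∑ t ∈ Finset.Icc 1 T, (t : ℝ) ^ (1 / (1 + p) - 1) ≤ 2 * A := by
    rw [one_div_mul_eq_div, div_le_iff₀ h1p] at hpow
    nlinarith
  have hJ : 2 * η * ((1 - γ) * ∑ t ∈ Finset.Icc 1 T, I t) ≤ 25 / 4 * ρ ^ 2 +
      2 * η * (9 / 2 * ρ * w * A + T * ν) := by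
    have h1 := mul_le_mul_of_nonneg_left hpow2 (by positivity : 0 ≤ 2 * η * (9 / 4 * ρ * w))
    have h2 : (T : ℝ) * (9 / 4 * ρ ^ 2 / T + 2 * η * ν) = 9 / 4 * ρ ^ 2 + 2 * η * (T * ν) := by
      field_simp
    rw [h2] at hsum
    linarith
  refine final_arith hρ hγ1 hw hA0 (by positivity) ?_ (Nat.cast_nonneg τ) ?_ ?_ hJ
  · rw [hA, ← Real.rpow_add hT0, ← add_div, div_self h1p.ne', Real.rpow_one]
  · rw [hηb, hb, Real.mul_rpow hu0.le hT0.le]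
  · have hsumint : ∑ t ∈ Finset.Icc 1 T, I t =
        ∫ ω, ∑ t ∈ Finset.Icc 1 T, ∑ x, μdist x * ⟪Θ t ω - Θstar, Φ x⟫_ℝ ^ 2 ∂ℙ := by
      rw [integral_finsetSum]
      intro t hmem
      obtain ⟨ht, htT⟩ := Finset.mem_Icc.mp hmem
      exact iE t ht (by omega)
    rw [hsumint, ← integral_const_mul]
    refine integral_mono_of_nonneg (Filter.Eventually.of_forall fun ω => ?_) ?_
      (Filter.Eventually.of_forall fun ω => ?_)
    · exact Finset.sum_nonneg fun x _ => mul_nonneg (hμ0 x) (sq_nonneg _)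
    · refine (integrable_finsetSum _ fun t hmem => ?_).const_mul _
      obtain ⟨ht, htT⟩ := Finset.mem_Icc.mp hmem
      exact iE t ht (by omega)
    · exact averaged_error_le hμ0 hreal (by omega) fun t => Θ t ω
end

section
/- (Smoothness of log-linear softmax policies.) Let S and A be nonempty finite sets, d ∈ ℕ, and Φ : S × A → ℝ^d with ‖Φ(s,a)‖₂ ≤ 1 for all (s,a). For W ∈ ℝ^d define π_W(a|s) = exp(⟨W, Φ(s,a)⟩) / Σ_{a' ∈ A} exp(⟨W, Φ(s,a')⟩), and define G_W(s,a) = Φ(s,a) − Σ_{a' ∈ A} π_W(a'|s) Φ(s,a') (which equals the gradient in W of log π_W(a|s)). Then for all W, W' ∈ ℝ^d and all (s,a) ∈ S × A: |log π_{W'}(a|s) − log π_W(a|s) − ⟨G_W(s,a), W' − W⟩| ≤ (1/2)‖W' − W‖₂². -/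
/-!
With `x a' = ⟪W' - W, Φ s a'⟫` and `p = π_W(·|s)`, the normalising constants combine to
`log π_{W'}(a|s) - log π_W(a|s) - ⟪G_W(s,a), W' - W⟫ = -(log ∑ p e^x - ∑ p x)`.
The bracket is the logarithm of the moment generating function, at `1`, of the centred variable
`x - 𝔼_p x`. It is nonnegative by Jensen's inequality, and since `|x| ≤ ‖W' - W‖` by
Cauchy-Schwarz, Hoeffding's lemma on an interval of length `2 ‖W' - W‖` bounds it by
`(2 ‖W' - W‖)² / 8 = ‖W' - W‖² / 2`.
-/

open scoped BigOperators InnerProductSpace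

/-- Hoeffding's lemma for a weighted finite sum, without centring. -/
lemma finite_hoeffding {A : Type*} [Fintype A] (p x : A → ℝ) (hp : ∀ a, 0 ≤ p a)
    (hsum : ∑ a, p a = 1) (D : ℝ) (hx : ∀ a, |x a| ≤ D) :
    ∑ a, p a * Real.exp (x a) ≤ Real.exp (∑ a, p a * x a + D ^ 2 / 2) := by
  letI : MeasurableSpace A := ⊤
  haveI : MeasurableSingletonClass A := ⟨fun _ => trivial⟩
  have hs : ∑ a, ENNReal.ofReal (p a) = 1 := by
    rw [← ENNReal.ofReal_sum_of_nonneg (fun a _ => hp a), hsum, ENNReal.ofReal_one]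
  let q : PMF A := PMF.ofFintype (fun a => ENNReal.ofReal (p a)) hs
  have hint : ∀ f : A → ℝ, ∫ a, f a ∂q.toMeasure = ∑ a, p a * f a := by
    intro f
    rw [PMF.integral_eq_sum]
    refine Finset.sum_congr rfl fun a _ => ?_
    simp [q, PMF.ofFintype_apply, ENNReal.toReal_ofReal (hp a)]
  have hsub := ProbabilityTheory.hasSubgaussianMGF_of_mem_Icc (μ := q.toMeasure) (X := x)
    (a := -D) (b := D) (measurable_from_top.aemeasurable)
    (Filter.Eventually.of_forall fun a => abs_le.mp (hx a))
  have h := hsub.mgf_le 1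
  simp only [ProbabilityTheory.mgf, hint, one_mul] at h
  have hc : (((‖D - -D‖₊ / 2) ^ 2 : NNReal) : ℝ) * 1 ^ 2 / 2 = D ^ 2 / 2 := by
    have : D - -D = 2 * D := by ring
    simp [this, mul_div_assoc]
  rw [hc] at h
  rw [Real.exp_add]
  calc ∑ a, p a * Real.exp (x a)
      = Real.exp (∑ a, p a * x a) * ∑ a, p a * Real.exp (x a - ∑ a, p a * x a) := by
        rw [Finset.mul_sum]
        refine Finset.sum_congr rfl fun a _ => ?_
        rw [Real.exp_sub]
        field_simp
    _ ≤ _ := by gcongr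

theorem softmax_log_smoothness
    {S A : Type*} [Fintype S] [Fintype A] [Nonempty S] [Nonempty A] {d : ℕ}
    (Φ : S → A → EuclideanSpace ℝ (Fin d)) (hΦ : ∀ s a, ‖Φ s a‖ ≤ 1)
    (π : EuclideanSpace ℝ (Fin d) → S → A → ℝ)
    (hπ : ∀ W s a, π W s a =
      Real.exp ⟪W, Φ s a⟫_ℝ / ∑ a', Real.exp ⟪W, Φ s a'⟫_ℝ)
    (G : EuclideanSpace ℝ (Fin d) → S → A → EuclideanSpace ℝ (Fin d))
    (hG : ∀ W s a, G W s a = Φ s a - ∑ a', π W s a' • Φ s a')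
    (W W' : EuclideanSpace ℝ (Fin d)) (s : S) (a : A) :
    |Real.log (π W' s a) - Real.log (π W s a) - ⟪G W s a, W' - W⟫_ℝ|
      ≤ (1 / 2) * ‖W' - W‖ ^ 2 := by
  have hZ : ∀ V, 0 < ∑ a', Real.exp ⟪V, Φ s a'⟫_ℝ := fun V =>
    Finset.sum_pos (fun _ _ => Real.exp_pos _) Finset.univ_nonempty
  have hlog : ∀ V, Real.log (π V s a) =
      ⟪V, Φ s a⟫_ℝ - Real.log (∑ a', Real.exp ⟪V, Φ s a'⟫_ℝ) := fun V => by
    rw [hπ, Real.log_div (Real.exp_pos _).ne' (hZ V).ne', Real.log_exp]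
  have hp : ∀ a', 0 ≤ π W s a' := fun a' => by
    rw [hπ]; exact div_nonneg (Real.exp_pos _).le (hZ W).le
  have hsum : ∑ a', π W s a' = 1 := by
    simp only [hπ, ← Finset.sum_div]
    exact div_self (hZ W).ne'
  have hx : ∀ a', |⟪W' - W, Φ s a'⟫_ℝ| ≤ ‖W' - W‖ := fun a' =>
    (abs_real_inner_le_norm _ _).trans
      (mul_le_of_le_one_right (norm_nonneg _) (hΦ s a'))
  have hratio : ∑ a', π W s a' * Real.exp ⟪W' - W, Φ s a'⟫_ℝ =
      (∑ a', Real.exp ⟪W', Φ s a'⟫_ℝ) / ∑ a', Real.exp ⟪W, Φ s a'⟫_ℝ := by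
    rw [Finset.sum_div]
    refine Finset.sum_congr rfl fun a' _ => ?_
    rw [hπ, inner_sub_left, Real.exp_sub]
    have := (hZ W).ne'
    field_simp
  have hinner : ⟪G W s a, W' - W⟫_ℝ =
      ⟪W', Φ s a⟫_ℝ - ⟪W, Φ s a⟫_ℝ - ∑ a', π W s a' * ⟪W' - W, Φ s a'⟫_ℝ := by
    rw [hG, real_inner_comm, inner_sub_right, inner_sum, inner_sub_left]
    simp only [real_inner_smul_right]
  have hupper := finite_hoeffding _ _ hp hsum _ hx
  have hlower : Real.exp (∑ a', π W s a' * ⟪W' - W, Φ s a'⟫_ℝ) ≤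
      ∑ a', π W s a' * Real.exp ⟪W' - W, Φ s a'⟫_ℝ := by
    simpa only [smul_eq_mul] using
      convexOn_exp.map_sum_le (t := Finset.univ) (fun a' _ => hp a') hsum
        (p := fun a' => ⟪W' - W, Φ s a'⟫_ℝ) (fun _ _ => Set.mem_univ _)
  have hpos := div_pos (hZ W') (hZ W)
  rw [hratio] at hupper hlower
  rw [← Real.log_le_iff_le_exp hpos, Real.log_div (hZ W').ne' (hZ W).ne'] at hupper
  rw [← Real.le_log_iff_exp_le hpos, Real.log_div (hZ W').ne' (hZ W).ne'] at hlower
  rw [hlog, hlog, hinner, abs_le]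
  constructor <;> linarith [sq_nonneg ‖W' - W‖]
end

section
/- (Performance difference lemma for finite discounted MDPs.) For any two stationary randomized policies π and π' and any initial distribution λ on S: 𝒱^π(λ) − 𝒱^{π'}(λ) = (1/(1−γ)) · Σ_{s ∈ S} d_λ^π(s) Σ_{a ∈ A} π(a|s) 𝒜^{π'}(s,a), where 𝒱^π(λ) = Σ_s λ(s) 𝒱^π(s) and 𝒜^{π'}(s,a) = 𝒬^{π'}(s,a) − 𝒱^{π'}(s) is the advantage function. -/
/-!
Write `M` for the transition matrix of `π` and `e = ∑ₖ γᵏ λᵀ Mᵏ` for the unnormalized visitation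
vector, so that `d = (1 - γ) e`. Since `M` is row-stochastic, each `λᵀ Mᵏ` is a probability vector
and the series converges; splitting off its first term gives the flow equation `e = λ + γ e M`
(`visitation_flow`). By the Bellman equation of `V`, the `π`-averaged advantage of `V'` is
`D - γ M D` with `D = V - V'` (`averaged_advantage`). Pairing the two,
`e ⬝ (D - γ M D) = (e - γ e M) ⬝ D = λ ⬝ D`.
-/

open scoped BigOperators

/-- The state transition matrix induced by a stationary randomized policy `π`:
`P^π(s,s') = ∑ a, π s a * P s a s'`. -/
noncomputable def policyMatrix {S A : Type*} [Fintype S] [Fintype A]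
    (P : S → A → S → ℝ) (π : S → A → ℝ) : Matrix S S ℝ :=
  Matrix.of fun s s' => ∑ a, π s a * P s a s'

/-- The discounted state-visitation distribution
`d_λ^π(s) = (1−γ) ∑_{k≥1} γ^(k−1) (λᵀ (P^π)^(k−1))(s)`. -/
noncomputable def discountedVisitation {S A : Type*} [Fintype S] [Fintype A] [DecidableEq S]
    (P : S → A → S → ℝ) (γ : ℝ) (π : S → A → ℝ) (lam : S → ℝ) (s : S) : ℝ :=
  (1 - γ) * ∑' k : ℕ, γ ^ k * Matrix.vecMul lam (policyMatrix P π ^ k) s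

open Matrix in
/-- The rows `λᵀ Mᵏ` stay probability vectors when `M` is row-stochastic. -/
lemma vecMul_pow_stochastic {S : Type*} [Fintype S] [DecidableEq S] (M : Matrix S S ℝ)
    (h0 : ∀ s s', 0 ≤ M s s') (h1 : ∀ s, ∑ s', M s s' = 1)
    (lam : S → ℝ) (hlam0 : ∀ s, 0 ≤ lam s) (hlam1 : ∑ s, lam s = 1) (k : ℕ) :
    (∀ s, 0 ≤ (lam ᵥ* M ^ k) s) ∧ ∑ s, (lam ᵥ* M ^ k) s = 1 := by
  induction k with
  | zero => simpa using ⟨hlam0, hlam1⟩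
  | succ k ih =>
    obtain ⟨ih0, ih1⟩ := ih
    rw [pow_succ, ← vecMul_vecMul]
    generalize lam ᵥ* M ^ k = u at ih0 ih1
    refine ⟨fun s => Finset.sum_nonneg fun i _ => mul_nonneg (ih0 i) (h0 i s), ?_⟩
    simp only [vecMul, dotProduct]
    rw [Finset.sum_comm]
    simp_rw [← Finset.mul_sum, h1, mul_one]
    exact ih1

open Matrix in
/-- Flow equation `e = λ + γ e M` for `e = ∑ₖ γᵏ λᵀ Mᵏ`. -/
lemma visitation_flow {S : Type*} [Fintype S] [DecidableEq S] (M : Matrix S S ℝ)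
    (h0 : ∀ s s', 0 ≤ M s s') (h1 : ∀ s, ∑ s', M s s' = 1)
    (lam : S → ℝ) (hlam0 : ∀ s, 0 ≤ lam s) (hlam1 : ∑ s, lam s = 1)
    (γ : ℝ) (hγ0 : 0 < γ) (hγ1 : γ < 1) (s' : S) :
    ∑' k : ℕ, γ ^ k * (lam ᵥ* M ^ k) s'
      = lam s' + γ * ∑ s, (∑' k : ℕ, γ ^ k * (lam ᵥ* M ^ k) s) * M s s' := by
  have hsum : ∀ s, Summable fun k : ℕ => γ ^ k * (lam ᵥ* M ^ k) s := by
    intro s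
    refine Summable.of_nonneg_of_le (fun k => ?_) (fun k => ?_)
      (summable_geometric_of_lt_one hγ0.le hγ1)
    · exact mul_nonneg (pow_nonneg hγ0.le k)
        ((vecMul_pow_stochastic M h0 h1 lam hlam0 hlam1 k).1 s)
    · obtain ⟨hk0, hk1⟩ := vecMul_pow_stochastic M h0 h1 lam hlam0 hlam1 k
      have hle : (lam ᵥ* M ^ k) s ≤ 1 :=
        hk1 ▸ Finset.single_le_sum (fun i _ => hk0 i) (Finset.mem_univ s)
      exact mul_le_of_le_one_right (pow_nonneg hγ0.le k) hle
  rw [(hsum s').tsum_eq_zero_add]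
  congr 1
  · simp
  · simp_rw [← tsum_mul_right]
    rw [← Summable.tsum_finsetSum fun s _ => (hsum s).mul_right (M s s'), ← tsum_mul_left]
    refine tsum_congr fun k => ?_
    rw [pow_succ M, ← vecMul_vecMul, vecMul, dotProduct, Finset.mul_sum, Finset.mul_sum]
    refine Finset.sum_congr rfl fun s _ => ?_
    ring

/-- The `π`-averaged advantage of `V'` is `(I - γ M)(V - V')`, where `V` solves the Bellman
equation of `π`. -/
lemma averaged_advantage {S A : Type*} [Fintype S] [Fintype A]
    (γ : ℝ) (r : S → A → ℝ) (P : S → A → S → ℝ) (π : S → A → ℝ) (hπ1 : ∀ s, ∑ a, π s a = 1)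
    (V V' : S → ℝ)
    (hV : ∀ s, V s = ∑ a, π s a * (r s a + γ * ∑ s', P s a s' * V s')) (s : S) :
    ∑ a, π s a * ((r s a + γ * ∑ s', P s a s' * V' s') - V' s)
      = (V s - V' s) - γ * ∑ s', policyMatrix P π s s' * (V s' - V' s') := by
  have hM : ∑ s', policyMatrix P π s s' * (V s' - V' s')
      = ∑ a, π s a * ∑ s', P s a s' * (V s' - V' s') := by
    simp only [policyMatrix, Matrix.of_apply, Finset.sum_mul, Finset.mul_sum]
    rw [Finset.sum_comm]
    simp only [mul_assoc]
  have hV's : V' s = ∑ a, π s a * V' s := by rw [← Finset.sum_mul, hπ1, one_mul]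
  rw [hM, hV s]
  conv_rhs => rw [hV's]
  rw [Finset.mul_sum, ← Finset.sum_sub_distrib, ← Finset.sum_sub_distrib]
  refine Finset.sum_congr rfl fun a _ => ?_
  simp only [mul_sub, Finset.sum_sub_distrib]
  ring

/-- **Performance difference lemma for finite discounted MDPs.** For any two stationary
randomized policies `π` and `π'` with value functions `V`, `V'` (the unique solutions of the
respective Bellman equations) and any initial distribution `λ`:
`𝒱^π(λ) − 𝒱^{π'}(λ) = (1/(1−γ)) ∑_s d_λ^π(s) ∑_a π(a|s) 𝒜^{π'}(s,a)`,
where `𝒜^{π'}(s,a) = 𝒬^{π'}(s,a) − 𝒱^{π'}(s)` and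
`𝒬^{π'}(s,a) = r(s,a) + γ ∑_{s'} P(s,a,s') 𝒱^{π'}(s')`. -/
theorem performance_difference_lemma
    {S A : Type*} [Fintype S] [Fintype A] [DecidableEq S] [Nonempty S] [Nonempty A]
    (γ : ℝ) (hγ0 : 0 < γ) (hγ1 : γ < 1)
    (r : S → A → ℝ) (hr : ∀ s a, |r s a| ≤ 1)
    (P : S → A → S → ℝ) (hP0 : ∀ s a s', 0 ≤ P s a s') (hP1 : ∀ s a, ∑ s', P s a s' = 1)
    (π π' : S → A → ℝ)
    (hπ0 : ∀ s a, 0 ≤ π s a) (hπ1 : ∀ s, ∑ a, π s a = 1)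
    (hπ'0 : ∀ s a, 0 ≤ π' s a) (hπ'1 : ∀ s, ∑ a, π' s a = 1)
    (V V' : S → ℝ)
    (hV : ∀ s, V s = ∑ a, π s a * (r s a + γ * ∑ s', P s a s' * V s'))
    (hV' : ∀ s, V' s = ∑ a, π' s a * (r s a + γ * ∑ s', P s a s' * V' s'))
    (lam : S → ℝ) (hlam0 : ∀ s, 0 ≤ lam s) (hlam1 : ∑ s, lam s = 1) :
    (∑ s, lam s * V s) - (∑ s, lam s * V' s)
      = (1 / (1 - γ)) * ∑ s, discountedVisitation P γ π lam s *
          ∑ a, π s a * ((r s a + γ * ∑ s', P s a s' * V' s') - V' s) := by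
  have h0 : ∀ s s', 0 ≤ policyMatrix P π s s' := fun s s' =>
    Finset.sum_nonneg fun a _ => mul_nonneg (hπ0 s a) (hP0 s a s')
  have h1 : ∀ s, ∑ s', policyMatrix P π s s' = 1 := by
    intro s
    simp only [policyMatrix, Matrix.of_apply]
    rw [Finset.sum_comm]
    simp_rw [← Finset.mul_sum, hP1, mul_one]
    exact hπ1 s
  have hflow := visitation_flow (policyMatrix P π) h0 h1 lam hlam0 hlam1 γ hγ0 hγ1
  simp_rw [averaged_advantage γ r P π hπ1 V V' hV, discountedVisitation]
  set e : S → ℝ := fun s => ∑' k : ℕ, γ ^ k * Matrix.vecMul lam (policyMatrix P π ^ k) s with he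
  change ∀ s', e s' = lam s' + γ * ∑ s, e s * policyMatrix P π s s' at hflow
  change _ = 1 / (1 - γ) * ∑ s, (1 - γ) * e s * _
  have hγ : (1 - γ) ≠ 0 := by linarith
  simp_rw [mul_assoc (1 - γ)]
  rw [← Finset.mul_sum, ← mul_assoc, one_div_mul_cancel hγ, one_mul, ← Finset.sum_sub_distrib]
  -- associativity `(e M) ⬝ D = e ⬝ (M D)`
  have hswap : ∑ s', (∑ s, e s * policyMatrix P π s s') * (V s' - V' s')
      = ∑ s, e s * ∑ s', policyMatrix P π s s' * (V s' - V' s') := by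
    simp only [Finset.sum_mul, Finset.mul_sum]
    rw [Finset.sum_comm]
    simp only [mul_assoc]
  calc ∑ s, (lam s * V s - lam s * V' s)
      = ∑ s, (e s * (V s - V' s)
          - γ * ((∑ t, e t * policyMatrix P π t s) * (V s - V' s))) := by
        refine Finset.sum_congr rfl fun s _ => ?_
        linear_combination (-(V s - V' s)) * hflow s
    _ = ∑ s, e s * ((V s - V' s) - γ * ∑ s', policyMatrix P π s s' * (V s' - V' s')) := by
        rw [Finset.sum_sub_distrib, ← Finset.mul_sum, hswap, Finset.mul_sum,
          ← Finset.sum_sub_distrib]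
        refine Finset.sum_congr rfl fun s _ => ?_
        ring
end
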